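/- arXiv:2007.12111 — 3 statements merged into one kernel-verified Lean document; each statement's English description precedes it below -/
import Mathlib

section
/- Let ε > 0 and let p : ℕ → [0,1] be a function satisfying n·p(n) − log n − log log n → ∞ as n → ∞. Then with high probability the random graph G ~ G(n, p(n)) admits a partition of its vertex set V(G) = V* ∪ V' with |V*| ≤ εn such that for every path P of G all of whose vertices lie in V' and which has at most 2n/3 vertices, there exists a Hamilton cycle of G containing every edge of P. -/
open scoped Classical in
/-- The probability, under the binomial random graph `G(n,p)`, that a graph
property `P` holds. Each of the `n.choose 2` possible edges is present
independently with probability `p`. -/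
noncomputable def gnpProb (n : ℕ) (p : ℝ) (P : SimpleGraph (Fin n) → Prop) : ℝ :=
  ∑ G : SimpleGraph (Fin n),
    (if P G then p ^ G.edgeSet.ncard * (1 - p) ^ (n.choose 2 - G.edgeSet.ncard) else 0)

section Prob
open scoped Classical
open Finset

/-- all pairs -/
def prs (n : ℕ) : Finset (Sym2 (Fin n)) := univ.filter (fun e => ¬ e.IsDiag)

lemma card_prs (n : ℕ) : (prs n).card = n.choose 2 := by
  have h := Sym2.card_subtype_not_diag (α := Fin n)
  rw [Fintype.card_fin, Fintype.card_subtype] at h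
  rw [← h]; unfold prs; congr

lemma card_prs_le (n : ℕ) : ((prs n).card : ℝ) ≤ (n:ℝ)^2/2 := by
  rw [card_prs, Nat.cast_choose_two]
  nlinarith [(Nat.cast_nonneg n : (0:ℝ) ≤ n)]

/-- weight of a graph -/
noncomputable def wt {n : ℕ} (p : ℝ) (G : SimpleGraph (Fin n)) : ℝ :=
  ∏ e ∈ prs n, if e ∈ G.edgeSet then p else 1 - p

lemma ncard_edge {n : ℕ} (G : SimpleGraph (Fin n)) :
    ((prs n).filter (fun e => e ∈ G.edgeSet)).card = G.edgeSet.ncard := by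
  rw [← Set.ncard_coe_finset]
  congr 1
  ext e
  simp only [prs, coe_filter, mem_filter, mem_univ, true_and, Set.mem_ofPred_eq, and_iff_right_iff_imp]
  exact fun h => G.not_isDiag_of_mem_edgeSet h

lemma prod_edge {n : ℕ} (G : SimpleGraph (Fin n)) (a b : ℝ) :
    (∏ e ∈ prs n, if e ∈ G.edgeSet then a else b) =
      a ^ G.edgeSet.ncard * b ^ (n.choose 2 - G.edgeSet.ncard) := by
  rw [prod_ite, prod_const, prod_const, ncard_edge, ← card_prs]
  congr 2
  have := card_filter_add_card_filter_not (s := prs n) (fun e => e ∈ G.edgeSet)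
  rw [ncard_edge] at this
  omega

lemma gnp_eq {n : ℕ} (p : ℝ) (P : SimpleGraph (Fin n) → Prop) :
    gnpProb n p P = ∑ G : SimpleGraph (Fin n), if P G then wt p G else 0 := by
  unfold gnpProb wt
  simp_rw [prod_edge]

/-- the product formula -/
lemma sum_prod {n : ℕ} (f g : Sym2 (Fin n) → ℝ) :
    ∑ G : SimpleGraph (Fin n), ∏ e ∈ prs n, (if e ∈ G.edgeSet then f e else g e) =
      ∏ e ∈ prs n, (f e + g e) := by
  rw [prod_add]
  refine sum_bij' (fun G _ => (prs n).filter (fun e => e ∈ G.edgeSet))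
    (fun S _ => SimpleGraph.fromEdgeSet (S : Set (Sym2 (Fin n)))) ?_ ?_ ?_ ?_ ?_
  · intro G _; simp
  · intro S _; simp
  · intro G _
    ext a b
    simp only [coe_filter, SimpleGraph.fromEdgeSet_adj, Set.mem_ofPred_eq, SimpleGraph.mem_edgeSet, prs,
      mem_filter, mem_univ, true_and, Sym2.mk_isDiag_iff]
    constructor
    · exact fun h => h.1.2
    · exact fun h => ⟨⟨h.ne, h⟩, h.ne⟩
  · intro S hS
    rw [mem_powerset] at hS
    ext e
    simp only [SimpleGraph.edgeSet_fromEdgeSet, mem_filter]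
    constructor
    · rintro ⟨_, h⟩; simpa using h.1
    · intro h
      refine ⟨hS h, by simpa using h, ?_⟩
      have := hS h
      simpa [prs] using this
  · intro G _
    rw [prod_ite]
    congr 1
    apply prod_congr _ (fun _ _ => rfl)
    ext e; simp; tauto

variable {n : ℕ} {p : ℝ}

lemma wt_nonneg (h0 : 0 ≤ p) (h1 : p ≤ 1) (G : SimpleGraph (Fin n)) : 0 ≤ wt p G := by
  apply prod_nonneg; intro e _; split_ifs <;> linarith

lemma gnp_nonneg (h0 : 0 ≤ p) (h1 : p ≤ 1) (P : SimpleGraph (Fin n) → Prop) : 0 ≤ gnpProb n p P := by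
  rw [gnp_eq]
  apply sum_nonneg; intro G _; split_ifs
  · exact wt_nonneg h0 h1 G
  · rfl

lemma gnp_mono (h0 : 0 ≤ p) (h1 : p ≤ 1) {P Q : SimpleGraph (Fin n) → Prop} (h : ∀ G, P G → Q G) :
    gnpProb n p P ≤ gnpProb n p Q := by
  rw [gnp_eq, gnp_eq]
  apply sum_le_sum; intro G _
  have := wt_nonneg h0 h1 G
  by_cases hP : P G
  · simp [hP, h G hP]
  · rw [if_neg hP]; split_ifs <;> simp [this]

lemma sum_wt (p : ℝ) : ∑ G : SimpleGraph (Fin n), wt p G = 1 := by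
  unfold wt
  rw [sum_prod (fun _ => p) (fun _ => 1 - p)]
  simp

lemma gnp_compl (P : SimpleGraph (Fin n) → Prop) :
    gnpProb n p P + gnpProb n p (fun G => ¬ P G) = 1 := by
  rw [gnp_eq, gnp_eq, ← sum_add_distrib, ← sum_wt (n := n) p]
  apply sum_congr rfl; intro G _
  by_cases h : P G <;> simp [h]

lemma gnp_le_one (h0 : 0 ≤ p) (h1 : p ≤ 1) (P : SimpleGraph (Fin n) → Prop) : gnpProb n p P ≤ 1 := by
  have := gnp_compl (p := p) P
  have := gnp_nonneg h0 h1 (fun G => ¬ P G)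
  linarith

lemma gnp_or (h0 : 0 ≤ p) (h1 : p ≤ 1) (P Q : SimpleGraph (Fin n) → Prop) :
    gnpProb n p (fun G => P G ∨ Q G) ≤ gnpProb n p P + gnpProb n p Q := by
  simp only [gnp_eq]
  rw [← sum_add_distrib]
  apply sum_le_sum; intro G _
  have := wt_nonneg h0 h1 G
  by_cases hP : P G <;> by_cases hQ : Q G <;> simp [hP, hQ, this]

lemma gnp_exists (h0 : 0 ≤ p) (h1 : p ≤ 1) {ι : Type*} (s : Finset ι) (P : ι → SimpleGraph (Fin n) → Prop) :
    gnpProb n p (fun G => ∃ i ∈ s, P i G) ≤ ∑ i ∈ s, gnpProb n p (P i) := by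
  simp only [gnp_eq]
  rw [sum_comm]
  apply sum_le_sum; intro G _
  have hw := wt_nonneg h0 h1 G
  have hnn : ∀ i ∈ s, 0 ≤ (if P i G then wt p G else 0) := by
    intro i _; split_ifs <;> simp [hw]
  split_ifs with h
  · obtain ⟨i, hi, hP⟩ := h
    have := single_le_sum hnn hi
    simpa [hP] using this
  · exact sum_nonneg hnn

lemma gnp_markov (h0 : 0 ≤ p) (h1 : p ≤ 1) {ι : Type*} (s : Finset ι) (P : ι → SimpleGraph (Fin n) → Prop)
    (b : ℝ) :
    b * gnpProb n p (fun G => b ≤ ((s.filter (fun i => P i G)).card : ℝ)) ≤ ∑ i ∈ s, gnpProb n p (P i) := by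
  simp only [gnp_eq]
  rw [sum_comm, mul_sum]
  apply sum_le_sum; intro G _
  have hw := wt_nonneg h0 h1 G
  rw [← sum_filter, sum_const, nsmul_eq_mul]
  split_ifs with h
  · exact mul_le_mul_of_nonneg_right h hw
  · rw [mul_zero]; positivity

/-- number of edges of `G` inside `F`. -/
noncomputable def ein (F : Finset (Sym2 (Fin n))) (G : SimpleGraph (Fin n)) : ℕ :=
  (F.filter (fun e => e ∈ G.edgeSet)).card

lemma ite_prod_eq {α : Type*} [DecidableEq α] (U F : Finset α) (hF : F ⊆ U) (c : α → Prop)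
    [DecidablePred c] [∀ e, Decidable (e ∈ F ∧ c e)] (t : ℝ) :
    ∏ e ∈ U, (if e ∈ F ∧ c e then t else 1) = t ^ (F.filter c).card := by
  rw [prod_ite, prod_const, prod_const, one_pow, mul_one]
  congr 2
  ext e; simp only [mem_filter]
  constructor
  · rintro ⟨_, h⟩; exact h
  · intro h; exact ⟨hF h.1, h⟩

/-- lower tail -/
lemma gnp_lower (h0 : 0 ≤ p) (h1 : p ≤ 1) (A F : Finset (Sym2 (Fin n))) (hA : A ⊆ prs n) (hF : F ⊆ prs n)
    (hAF : Disjoint A F) (d : ℕ) (t : ℝ) (ht0 : 0 ≤ t) (ht1 : t ≤ 1) :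
    t ^ d * gnpProb n p (fun G => (∀ e ∈ A, e ∈ G.edgeSet) ∧ ein F G ≤ d) ≤
      p ^ A.card * (1 - p + t * p) ^ F.card := by
  have key := sum_prod (n := n) (fun e => p * (if e ∈ F then t else 1))
    (fun e => if e ∈ A then 0 else 1 - p)
  have rhs : ∏ e ∈ prs n, (p * (if e ∈ F then t else 1) + (if e ∈ A then 0 else 1 - p)) =
      p ^ A.card * (1 - p + t * p) ^ F.card := by
    have : ∀ e ∈ prs n, (p * (if e ∈ F then t else 1) + (if e ∈ A then 0 else 1 - p)) =
       (if e ∈ A ∧ True then p else 1) * (if e ∈ F ∧ True then (1 - p + t * p) else 1) := by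
      intro e _
      have : ¬ (e ∈ A ∧ e ∈ F) := fun h => (disjoint_left.mp hAF h.1 h.2)
      by_cases ha : e ∈ A <;> by_cases hf : e ∈ F <;> simp_all
      ring
    rw [prod_congr rfl this, prod_mul_distrib, ite_prod_eq _ _ hA (fun _ => True), ite_prod_eq _ _ hF (fun _ => True)]
    simp
  rw [rhs] at key
  rw [← key, gnp_eq, mul_sum]
  apply sum_le_sum; intro G _
  split_ifs with h
  · obtain ⟨hA', hd⟩ := h
    have : ∀ e ∈ prs n, (if e ∈ G.edgeSet then p * (if e ∈ F then t else 1) else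
        (if e ∈ A then 0 else 1 - p)) =
        (if e ∈ G.edgeSet then p else 1 - p) * (if e ∈ F ∧ e ∈ G.edgeSet then t else 1) := by
      intro e _
      have := hA' e
      by_cases ha : e ∈ A <;> by_cases hf : e ∈ F <;> by_cases hg : e ∈ G.edgeSet <;> simp_all
    rw [prod_congr rfl this, prod_mul_distrib, ite_prod_eq _ _ hF (fun e => e ∈ G.edgeSet), mul_comm]
    apply mul_le_mul_of_nonneg_left _ (wt_nonneg h0 h1 G)
    exact pow_le_pow_of_le_one ht0 ht1 hd
  · rw [mul_zero]
    apply prod_nonneg; intro e _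
    have : 0 ≤ 1 - p := by linarith
    split_ifs <;> positivity

/-- upper tail -/
lemma gnp_upper (h0 : 0 ≤ p) (h1 : p ≤ 1) (F : Finset (Sym2 (Fin n))) (hF : F ⊆ prs n)
    (d : ℕ) (t : ℝ) (ht1 : 1 ≤ t) :
    t ^ d * gnpProb n p (fun G => d ≤ ein F G) ≤ (1 - p + t * p) ^ F.card := by
  have key := sum_prod (n := n) (fun e => p * (if e ∈ F then t else 1)) (fun e => 1 - p)
  have rhs : ∏ e ∈ prs n, (p * (if e ∈ F then t else 1) + (1 - p)) = (1 - p + t * p) ^ F.card := by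
    have : ∀ e ∈ prs n, (p * (if e ∈ F then t else 1) + (1 - p)) =
       (if e ∈ F ∧ True then (1 - p + t * p) else 1) := by
      intro e _
      by_cases hf : e ∈ F <;> simp_all
      ring
    rw [prod_congr rfl this, ite_prod_eq _ _ hF (fun _ => True)]
    simp
  rw [rhs] at key
  rw [← key, gnp_eq, mul_sum]
  apply sum_le_sum; intro G _
  split_ifs with hd
  · have : ∀ e ∈ prs n, (if e ∈ G.edgeSet then p * (if e ∈ F then t else 1) else (1 - p)) =
        (if e ∈ G.edgeSet then p else 1 - p) * (if e ∈ F ∧ e ∈ G.edgeSet then t else 1) := by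
      intro e _
      by_cases hf : e ∈ F <;> by_cases hg : e ∈ G.edgeSet <;> simp_all
    rw [prod_congr rfl this, prod_mul_distrib, ite_prod_eq _ _ hF (fun e => e ∈ G.edgeSet), mul_comm]
    apply mul_le_mul_of_nonneg_left _ (wt_nonneg h0 h1 G)
    exact pow_le_pow_right₀ ht1 hd
  · rw [mul_zero]
    apply prod_nonneg; intro e _
    have : 0 ≤ 1 - p := by linarith
    have : 0 ≤ t := by linarith
    split_ifs <;> positivity

/-- sub-coupling -/
lemma gnp_sub (h0 : 0 ≤ p) (h1 : p ≤ 1) (q : ℝ) (hq0 : 0 ≤ q) (hq : q ≤ p) (P : SimpleGraph (Fin n) → Prop) :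
    gnpProb n q P ≤ gnpProb n p (fun G => ∃ H ≤ G, P H) := by
  obtain ⟨δ, hδ0, hδ1, rfl⟩ : ∃ δ : ℝ, 0 ≤ δ ∧ δ ≤ 1 ∧ q = δ * p := by
    rcases h0.eq_or_lt with h | h
    · exact ⟨0, le_rfl, zero_le_one, by subst h; linarith⟩
    · exact ⟨q / p, by positivity, by rw [div_le_one h]; exact hq, by field_simp⟩
  let K : SimpleGraph (Fin n) → SimpleGraph (Fin n) → ℝ := fun G H =>
    ∏ e ∈ prs n, if e ∈ H.edgeSet then (if e ∈ G.edgeSet then δ else 0) else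
      (if e ∈ G.edgeSet then 1 - δ else 1)
  have hδ' : 0 ≤ 1 - δ := by linarith
  have hK0 : ∀ G H, 0 ≤ K G H := by
    intro G H; apply prod_nonneg; intro e _; split_ifs <;> linarith
  have hKle : ∀ G H, K G H ≠ 0 → H ≤ G := by
    intro G H hne
    rw [← SimpleGraph.edgeSet_subset_edgeSet]
    intro e he
    by_contra hc
    apply hne
    apply prod_eq_zero (i := e)
    · simp [prs, H.not_isDiag_of_mem_edgeSet he]
    · simp [he, hc]
  have hK1 : ∀ G, ∑ H, K G H = 1 := by
    intro G
    have := sum_prod (n := n) (fun e => if e ∈ G.edgeSet then δ else 0)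
      (fun e => if e ∈ G.edgeSet then 1 - δ else 1)
    refine this.trans ?_
    apply prod_eq_one; intro e _; split_ifs <;> ring
  have hKw : ∀ H, ∑ G, wt p G * K G H = wt (δ * p) H := by
    intro H
    have := sum_prod (n := n) (fun e => p * if e ∈ H.edgeSet then δ else 1 - δ)
      (fun e => (1 - p) * if e ∈ H.edgeSet then 0 else 1)
    have h2 : wt (δ * p) H = ∏ e ∈ prs n, ((p * if e ∈ H.edgeSet then δ else 1 - δ) + 
        ((1 - p) * if e ∈ H.edgeSet then 0 else 1)) := by
      apply prod_congr rfl; intro e _; split_ifs <;> ring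
    rw [h2, ← this]
    apply sum_congr rfl; intro G _
    simp only [wt, K]
    rw [← prod_mul_distrib]
    apply prod_congr rfl; intro e _; split_ifs <;> ring
  simp only [gnp_eq]
  calc ∑ H, (if P H then wt (δ * p) H else 0) = ∑ H, ∑ G, (if P H then wt p G * K G H else 0) := by
        apply sum_congr rfl; intro H _; split_ifs
        · exact (hKw H).symm
        · simp
    _ = ∑ G, ∑ H, (if P H then wt p G * K G H else 0) := sum_comm
    _ ≤ _ := by
        apply sum_le_sum; intro G _
        have hw := wt_nonneg h0 h1 G
        split_ifs with h
        · calc _ ≤ ∑ H, wt p G * K G H := by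
                apply sum_le_sum; intro H _; split_ifs
                · rfl
                · exact mul_nonneg hw (hK0 _ _)
            _ = wt p G := by rw [← mul_sum, hK1, mul_one]
        · apply sum_nonpos; intro H _
          split_ifs with hP
          · by_cases hz : K G H = 0
            · simp [hz]
            · exact absurd ⟨H, hKle G H hz, hP⟩ h
          · rfl

lemma sum_pow_edges (a : ℝ) : ∑ G : SimpleGraph (Fin n), a ^ G.edgeSet.ncard = (a + 1) ^ (prs n).card := by
  have := sum_prod (n := n) (fun _ => a) (fun _ => 1)
  simp_rw [prod_edge] at this
  simpa using this

/-- complete bipartite pairs -/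
def bip (A B : Finset (Fin n)) : Finset (Sym2 (Fin n)) := (A ×ˢ B).image (fun x => s(x.1, x.2))

lemma bip_inj {A B : Finset (Fin n)} (h : Disjoint A B) :
    Set.InjOn (fun x : Fin n × Fin n => s(x.1, x.2)) (A ×ˢ B : Finset _) := by
  rintro ⟨a, b⟩ hab ⟨c, d⟩ hcd heq
  simp only [coe_product, Set.mem_prod, mem_coe] at hab hcd
  simp only [Sym2.eq_iff] at heq
  rcases heq with ⟨rfl, rfl⟩ | ⟨rfl, rfl⟩
  · rfl
  · exact absurd hcd.2 (disjoint_left.mp h hab.1)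

lemma card_bip {A B : Finset (Fin n)} (h : Disjoint A B) : (bip A B).card = A.card * B.card := by
  unfold bip
  rw [card_image_of_injOn (bip_inj h), card_product]

lemma bip_sub {A B : Finset (Fin n)} (h : Disjoint A B) : bip A B ⊆ prs n := by
  intro e he
  simp only [bip, mem_image, mem_product, Prod.exists] at he
  obtain ⟨a, b, ⟨ha, hb⟩, rfl⟩ := he
  simp only [prs, mem_filter, mem_univ, true_and, Sym2.mk_isDiag_iff]
  rintro rfl
  exact disjoint_left.mp h ha hb

lemma ein_bip_le {A B : Finset (Fin n)} (G : SimpleGraph (Fin n)) :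
    ein (bip A B) G ≤ ∑ a ∈ A, (B.filter (fun b => G.Adj a b)).card := by
  unfold ein
  calc _ ≤ (A.biUnion (fun a => (B.filter (fun b => G.Adj a b)).image (fun b => s(a,b)))).card := by
        apply card_le_card
        intro e he
        simp only [bip, mem_filter, mem_image, mem_product, Prod.exists] at he
        obtain ⟨⟨a, b, ⟨ha, hb⟩, rfl⟩, h⟩ := he
        simp only [mem_biUnion, mem_image, mem_filter]
        exact ⟨a, ha, b, ⟨hb, h⟩, rfl⟩
    _ ≤ _ := card_biUnion_le.trans (sum_le_sum fun a _ => card_image_le)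

end Prob


section Posa
open scoped Classical
open Finset

variable {V : Type*}

/-- `y` is right after `x` in `l` -/
def Nx (l : List V) (x y : V) : Prop := ∃ a b, l = a ++ x :: y :: b

/-- consecutive -/
def Cn (l : List V) (x y : V) : Prop := Nx l x y ∨ Nx l y x

lemma Cn.symm' {l : List V} {x y : V} (h : Cn l x y) : Cn l y x := Or.symm h

lemma nx_nil (x y : V) : ¬ Nx [] x y := by
  rintro ⟨a, b, h⟩; simp at h

lemma nx_cons (c : V) (l : List V) (x y : V) :
    Nx (c :: l) x y ↔ (c = x ∧ l.head? = some y) ∨ Nx l x y := by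
  constructor
  · rintro ⟨a, b, h⟩
    cases a with
    | nil => simp at h; left; simp [h]
    | cons d a => simp at h; right; exact ⟨a, b, h.2⟩
  · rintro (⟨rfl, h⟩ | ⟨a, b, rfl⟩)
    · cases l with
      | nil => simp at h
      | cons d l => simp at h; subst h; exact ⟨[], l, rfl⟩
    · exact ⟨c :: a, b, rfl⟩

lemma nx_append (s t : List V) (x y : V) :
    Nx (s ++ t) x y ↔ Nx s x y ∨ Nx t x y ∨ (s.getLast? = some x ∧ t.head? = some y) := by
  induction s with
  | nil => simp [nx_nil]
  | cons c s ih =>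
    rw [List.cons_append, nx_cons, nx_cons, ih]
    cases s with
    | nil => simp [nx_nil]; tauto
    | cons d s => simp; tauto

lemma nx_reverse (l : List V) (x y : V) : Nx l.reverse x y ↔ Nx l y x := by
  have key : ∀ (l : List V) (x y : V), Nx l x y → Nx l.reverse y x := by
    rintro l x y ⟨a, b, rfl⟩
    exact ⟨b.reverse, a.reverse, by simp⟩
  constructor
  · intro h; simpa using key _ _ _ h
  · exact key _ _ _

lemma cn_reverse (l : List V) (x y : V) : Cn l.reverse x y ↔ Cn l x y := by
  unfold Cn; rw [nx_reverse, nx_reverse]; tauto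

lemma chain_nx {R : V → V → Prop} {l : List V} : l.IsChain R ↔ ∀ x y, Nx l x y → R x y := by
  rw [List.isChain_iff_forall_rel_of_append_cons_cons]
  constructor
  · rintro h x y ⟨a, b, e⟩; exact h e
  · intro h x y a b e; exact h x y ⟨a, b, e⟩

lemma Nx.mem_left {l : List V} {x y : V} (h : Nx l x y) : x ∈ l := by
  obtain ⟨a, b, rfl⟩ := h; simp

lemma Nx.mem_right {l : List V} {x y : V} (h : Nx l x y) : y ∈ l := by
  obtain ⟨a, b, rfl⟩ := h; simp

lemma nx_head {l : List V} (hl : l.Nodup) {x y : V} (h : Nx l x y) : l.head? ≠ some y := by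
  cases l with
  | nil => simp
  | cons c l =>
    rw [nx_cons] at h
    intro he; simp at he; subst he
    rw [List.nodup_cons] at hl
    rcases h with ⟨_, h⟩ | h
    · exact hl.1 (List.mem_of_mem_head? h)
    · exact hl.1 h.mem_right

lemma nx_last {l : List V} (hl : l.Nodup) {x y : V} (h : Nx l x y) : l.getLast? ≠ some x := by
  have := nx_head (l := l.reverse) (by simpa using hl) ((nx_reverse l y x).2 h)
  simpa using this

lemma nx_unique {l : List V} (hl : l.Nodup) {x y z : V} (h : Nx l x y) (h' : Nx l x z) : y = z := by
  induction l with
  | nil => exact absurd h (nx_nil _ _)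
  | cons c l ih =>
    rw [List.nodup_cons] at hl
    rw [nx_cons] at h h'
    rcases h with ⟨rfl, h⟩ | h
    · rcases h' with ⟨_, h'⟩ | h'
      · rw [h] at h'; simpa using h'
      · exact absurd h'.mem_left hl.1
    · rcases h' with ⟨rfl, h'⟩ | h'
      · exact absurd h.mem_left hl.1
      · exact ih hl.2 h h'

lemma nx_unique' {l : List V} (hl : l.Nodup) {x y z : V} (h : Nx l y x) (h' : Nx l z x) : y = z :=
  nx_unique (l := l.reverse) (by simpa using hl) ((nx_reverse l x y).2 h) ((nx_reverse l x z).2 h')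

/-- forced-edge path -/
def Pth (H : SimpleGraph V) (X : Finset V) (u v : V) (l : List V) : Prop :=
  l.Nodup ∧ (∀ x ∈ l, x ∈ X) ∧ l.IsChain H.Adj ∧ Cn l u v

/-- rotation -/
def Rot (H : SimpleGraph V) (u v : V) (l l' : List V) : Prop :=
  ∃ s b z y, l = s ++ b ∧ s.getLast? = some z ∧ b.getLast? = some y ∧ H.Adj y z ∧ z ≠ u ∧ z ≠ v ∧
    l' = s ++ b.reverse

variable {H : SimpleGraph V} {X : Finset V} {u v : V}

lemma Pth.reverse {l : List V} (h : Pth H X u v l) : Pth H X u v l.reverse := by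
  obtain ⟨h1, h2, h3, h4⟩ := h
  refine ⟨by simpa using h1, by simpa using h2, ?_, (cn_reverse _ _ _).2 h4⟩
  rw [chain_nx] at h3 ⊢
  intro x y hxy
  exact (h3 _ _ ((nx_reverse _ _ _).1 hxy)).symm

lemma Rot.pth {l l' : List V} (hr : Rot H u v l l') (h : Pth H X u v l) : Pth H X u v l' := by
  obtain ⟨s, b, z, y, rfl, hz, hy, ha, hu, hv, rfl⟩ := hr
  obtain ⟨h1, h2, h3, h4⟩ := h
  have hp : (s ++ b.reverse).Perm (s ++ b) := (List.reverse_perm b).append_left s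
  refine ⟨hp.nodup_iff.2 h1, fun x hx => h2 x (hp.mem_iff.1 hx), ?_, ?_⟩
  · rw [chain_nx] at h3 ⊢
    intro x w hxw
    rw [nx_append] at hxw
    rcases hxw with h | h | ⟨h, h'⟩
    · exact h3 _ _ ((nx_append _ _ _ _).2 (Or.inl h))
    · rw [nx_reverse] at h
      exact (h3 _ _ ((nx_append _ _ _ _).2 (Or.inr (Or.inl h)))).symm
    · rw [hz] at h; rw [List.head?_reverse, hy] at h'
      simp at h h'; subst h h'; exact ha.symm
  · unfold Cn at h4 ⊢
    simp only [nx_append, nx_reverse] at h4 ⊢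
    rw [hz] at h4 ⊢
    have h5 : ¬ (some z = some u) := by simpa using hu
    have h6 : ¬ (some z = some v) := by simpa using hv
    tauto

lemma Rot.cn {l l' : List V} (hr : Rot H u v l l') : ∃ z y w, l.getLast? = some y ∧ Nx l z w ∧
    l'.getLast? = some w ∧
    ∀ p q, Cn l' p q → Cn l p q ∨ (p = z ∧ q = y) ∨ (p = y ∧ q = z) := by
  obtain ⟨s, b, z, y, rfl, hz, hy, ha, hu, hv, rfl⟩ := hr
  have hb : b ≠ [] := by rintro rfl; simp at hy
  obtain ⟨w, b', rfl⟩ := List.exists_cons_of_ne_nil hb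
  refine ⟨z, y, w, ?_, ?_, ?_, ?_⟩
  · rw [List.getLast?_append, hy]; rfl
  · rw [nx_append]; right; right; exact ⟨hz, rfl⟩
  · simp
  · intro p q
    unfold Cn
    simp only [nx_append, nx_reverse, hz, List.head?_reverse, hy, Option.some.injEq]
    tauto

lemma Rot.perm {l l' : List V} (hr : Rot H u v l l') : l'.Perm l := by
  obtain ⟨s, b, z, y, rfl, hz, hy, ha, hu, hv, rfl⟩ := hr
  exact (List.reverse_perm b).append_left s

lemma Rot.head {l l' : List V} (hr : Rot H u v l l') : l'.head? = l.head? := by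
  obtain ⟨s, b, z, y, rfl, hz, hy, ha, hu, hv, rfl⟩ := hr
  cases s with
  | nil => simp at hz
  | cons c s => simp

variable [Fintype V]

lemma posa (l0 : List V) (hl0 : Pth H X u v l0)
    (hmax : ∀ l, Pth H X u v l → l.length ≤ l0.length) (k : ℝ)
    (hexp : ∀ S : Finset V, S ⊆ X → (S.card : ℝ) ≤ k →
      2 * S.card ≤ (X.filter (fun z => z ∉ S ∧ z ≠ u ∧ z ≠ v ∧ ∃ y ∈ S, H.Adj y z)).card) :
    ∃ R : Finset V, k < R.card ∧ ∀ y ∈ R, ∃ l, Pth H X u v l ∧ l.length = l0.length ∧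
      l.head? = l0.head? ∧ l.getLast? = some y := by
  let Rc := Relation.ReflTransGen (Rot H u v) l0
  have hpth : ∀ l, Rc l → Pth H X u v l ∧ l.Perm l0 ∧ l.head? = l0.head? := by
    intro l hl
    induction hl with
    | refl => exact ⟨hl0, List.Perm.refl _, rfl⟩
    | tail _ hr ih => exact ⟨hr.pth ih.1, hr.perm.trans ih.2.1, hr.head.trans ih.2.2⟩
  let R : Finset V := univ.filter (fun y => ∃ l, Rc l ∧ l.getLast? = some y)
  have hR : ∀ y, y ∈ R ↔ ∃ l, Rc l ∧ l.getLast? = some y := by intro y; simp [R]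
  refine ⟨R, ?_, ?_⟩
  swap
  · intro y hy
    obtain ⟨l, hl, hy⟩ := (hR y).1 hy
    obtain ⟨h1, h2, h3⟩ := hpth l hl
    exact ⟨l, h1, h2.length_eq, h3, hy⟩
  by_contra hk
  push Not at hk
  have hRX : R ⊆ X := by
    intro y hy
    obtain ⟨l, hl, hy⟩ := (hR y).1 hy
    exact (hpth l hl).1.2.1 y (List.mem_of_getLast? hy)
  have hE := hexp R hRX hk
  -- invariant
  have hinv : ∀ l, Rc l → ∀ z, z ∉ R → (∀ r ∈ R, ¬ Cn l0 z r) → ∀ w, Cn l z w → Cn l0 z w := by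
    intro l hl
    induction hl with
    | refl => intro z _ _ w h; exact h
    | @tail l l' hl hr ih =>
      intro z hz hzr w hw
      obtain ⟨a, y, b, hy, hab, hb, hc⟩ := hr.cn
      have hyR : y ∈ R := (hR y).2 ⟨l, hl, hy⟩
      have hbR : b ∈ R := (hR b).2 ⟨l', hl.tail hr, hb⟩
      rcases hc z w hw with h | ⟨rfl, rfl⟩ | ⟨rfl, rfl⟩
      · exact ih z hz hzr w h
      · exact absurd (ih z hz hzr b (Or.inl hab)) (hzr b hbR)
      · exact absurd hyR hz
  have hne : l0 ≠ [] := by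
    rintro rfl
    rcases hl0.2.2.2 with h | h <;> exact nx_nil _ _ h
  obtain ⟨y0, hy0⟩ : ∃ y0, l0.getLast? = some y0 := ⟨_, List.getLast?_eq_some_getLast hne⟩
  have hy0R : y0 ∈ R := (hR y0).2 ⟨l0, Relation.ReflTransGen.refl, hy0⟩
  have hsub : X.filter (fun z => z ∉ R ∧ z ≠ u ∧ z ≠ v ∧ ∃ y ∈ R, H.Adj y z) ⊆
      univ.filter (fun z => ∃ r ∈ R.erase y0, Nx l0 r z) ∪ univ.filter (fun z => ∃ r ∈ R, Nx l0 z r) := by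
    intro z hz
    simp only [mem_filter] at hz
    obtain ⟨hzX, hzR, hzu, hzv, y, hyR, hyz⟩ := hz
    obtain ⟨l, hl, hy⟩ := (hR y).1 hyR
    obtain ⟨hP, hperm, hhead⟩ := hpth l hl
    obtain ⟨h1, h2, h3, h4⟩ := hP
    have hzl : z ∈ l := by
      by_contra hzl
      have : Pth H X u v (l ++ [z]) := by
        refine ⟨?_, ?_, ?_, ?_⟩
        · rw [List.nodup_append]; refine ⟨h1, by simp, ?_⟩
          intro a ha b hb; simp at hb; subst hb; rintro rfl; exact hzl ha
        · intro x hx; simp at hx; rcases hx with hx | rfl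
          · exact h2 x hx
          · exact hzX
        · rw [chain_nx] at h3 ⊢
          intro x w hxw
          rw [nx_append] at hxw
          rcases hxw with h | h | ⟨h, h'⟩
          · exact h3 _ _ h
          · rw [nx_cons] at h; simp [nx_nil] at h
          · rw [hy] at h; simp at h h'; subst h h'; exact hyz
        · unfold Cn at h4 ⊢; simp only [nx_append]; tauto
      have := hmax _ this
      rw [List.length_append, hperm.length_eq] at this
      simp at this
    obtain ⟨a, b, rfl⟩ := List.append_of_mem hzl
    have hb : b ≠ [] := by
      rintro rfl
      simp at hy; subst hy; exact H.loopless.irrefl _ hyz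
    obtain ⟨w, b', rfl⟩ := List.exists_cons_of_ne_nil hb
    have hrot : Rot H u v (a ++ z :: w :: b') ((a ++ [z]) ++ (w :: b').reverse) := by
      refine ⟨a ++ [z], w :: b', z, y, by simp, by simp, ?_, hyz, hzu, hzv, rfl⟩
      rw [List.getLast?_append] at hy
      simpa using hy
    have hwR : w ∈ R := (hR w).2 ⟨_, hl.tail hrot, by rw [List.getLast?_append]; simp⟩
    have : ∃ r ∈ R, Cn l0 z r := by
      by_contra hcon
      push Not at hcon
      exact hcon w hwR (hinv _ hl z hzR hcon w (Or.inl ⟨a, b', rfl⟩))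
    obtain ⟨r, hr, hc | hc⟩ := this
    · rw [mem_union]; right; simp; exact ⟨r, hr, hc⟩
    · rw [mem_union]; left; simp only [mem_filter, mem_univ, true_and, mem_erase]
      refine ⟨r, ⟨?_, hr⟩, hc⟩
      rintro rfl
      exact nx_last hl0.1 hc hy0
  have c1 : (univ.filter (fun z => ∃ r ∈ R.erase y0, Nx l0 r z)).card ≤ (R.erase y0).card := by
    apply card_le_card_of_forall_subsingleton (fun z r => Nx l0 r z)
    · intro z hz; simpa using hz
    · intro r hr z hz z' hz'
      exact nx_unique hl0.1 hz.2 hz'.2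
  have c2 : (univ.filter (fun z => ∃ r ∈ R, Nx l0 z r)).card ≤ R.card := by
    apply card_le_card_of_forall_subsingleton (fun z r => Nx l0 z r)
    · intro z hz; simpa using hz
    · intro r hr z hz z' hz'
      exact nx_unique' hl0.1 hz.2 hz'.2
  have c3 := card_le_card hsub
  have c4 := card_union_le (univ.filter (fun z => ∃ r ∈ R.erase y0, Nx l0 r z))
    (univ.filter (fun z => ∃ r ∈ R, Nx l0 z r))
  rw [card_erase_of_mem hy0R] at c1
  have : 0 < R.card := card_pos.2 ⟨_, hy0R⟩
  omega

end Posa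


set_option linter.unusedSectionVars false
section Boost
open scoped Classical
open Finset

variable {V : Type*} [Fintype V] {X : Finset V} {u v : V}

/-- add the forced edge -/
def Hm (Γ : SimpleGraph V) (u v : V) : SimpleGraph V := Γ ⊔ SimpleGraph.edge u v

lemma hm_adj {Γ : SimpleGraph V} {x y : V} (h : (Hm Γ u v).Adj x y) :
    Γ.Adj x y ∨ (x = u ∧ y = v) ∨ (x = v ∧ y = u) := by
  simp only [Hm, SimpleGraph.sup_adj, SimpleGraph.edge_adj] at h
  tauto

/-- Hamilton path from `v` to `u` on `X` -/
def HamP (Γ : SimpleGraph V) (X : Finset V) (u v : V) : Prop :=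
  ∃ l : List V, l.Nodup ∧ (∀ x, x ∈ l ↔ x ∈ X) ∧ l.IsChain Γ.Adj ∧ l.head? = some v ∧ l.getLast? = some u

lemma HamP.mono {Γ Γ' : SimpleGraph V} (h : Γ ≤ Γ') (hh : HamP Γ X u v) : HamP Γ' X u v := by
  obtain ⟨l, h1, h2, h3, h4⟩ := hh
  exact ⟨l, h1, h2, h3.imp (fun _ _ hab => h hab), h4⟩

lemma close_cover {Γ : SimpleGraph V} (hX : 3 ≤ X.card) {l : List V} {y z : V}
    (h1 : l.Nodup) (h2 : ∀ x, x ∈ l ↔ x ∈ X) (h3 : l.IsChain (Hm Γ u v).Adj) (h4 : Nx l u v)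
    (hy : l.head? = some y) (hz : l.getLast? = some z) (hadj : (Hm Γ u v).Adj z y) : HamP Γ X u v := by
  obtain ⟨a, b, rfl⟩ := h4
  have hp : ((v :: b) ++ (a ++ [u])).Perm (a ++ u :: v :: b) := by
    have e : a ++ u :: v :: b = (a ++ [u]) ++ (v :: b) := by simp
    rw [e]; exact List.perm_append_comm
  have hnd : ((v :: b) ++ (a ++ [u])).Nodup := hp.nodup_iff.2 h1
  have hz' : (v :: b).getLast? = some z := by
    rw [List.getLast?_append] at hz; simpa using hz
  have hy' : (a ++ [u]).head? = some y := by
    cases a <;> simpa using hy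
  rw [List.nodup_append] at hnd
  obtain ⟨n1, n2, n3⟩ := hnd
  have hub : u ∉ v :: b := fun h => n3 u h u (by simp) rfl
  have hva : v ∉ a ++ [u] := fun h => n3 v (by simp) v h rfl
  refine ⟨(v :: b) ++ (a ++ [u]), hp.nodup_iff.2 h1, fun x => (hp.mem_iff).trans (h2 x), ?_, by simp, by
    rw [List.getLast?_append]; simp⟩
  rw [chain_nx] at h3 ⊢
  have e : a ++ u :: v :: b = (a ++ [u]) ++ (v :: b) := by simp
  rw [e] at h3
  intro x w hxw
  rw [nx_append] at hxw
  rcases hxw with h | h | ⟨h, h'⟩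
  · rcases hm_adj (h3 x w ((nx_append _ _ _ _).2 (by tauto))) with h' | ⟨rfl, rfl⟩ | ⟨rfl, rfl⟩
    · exact h'
    · exact absurd h.mem_left hub
    · exact absurd h.mem_right hub
  · rcases hm_adj (h3 x w ((nx_append _ _ _ _).2 (by tauto))) with h' | ⟨rfl, rfl⟩ | ⟨rfl, rfl⟩
    · exact h'
    · exact absurd h.mem_right hva
    · exact absurd h.mem_left hva
  · rw [hz'] at h; rw [hy'] at h'
    simp at h h'; subst h h'
    rcases hm_adj hadj with h' | ⟨rfl, rfl⟩ | ⟨rfl, rfl⟩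
    · exact h'
    · exact absurd (List.mem_of_getLast? hz') hub
    · exfalso
      have hb : b = [] := by
        by_contra hb
        obtain ⟨c, b', rfl⟩ := List.exists_cons_of_ne_nil hb
        have : z ∈ c :: b' := List.mem_of_getLast? (by simpa using hz')
        rw [List.nodup_cons] at n1
        exact n1.1 this
      have ha : a = [] := by
        by_contra ha
        obtain ⟨c, a', rfl⟩ := List.exists_cons_of_ne_nil ha
        simp at hy'; subst hy'
        simp at n2
      subst ha hb
      have : X ⊆ {y, z} := by
        intro x hx
        have := (h2 x).2 hx
        simpa using this
      have := (card_le_card this).trans card_le_two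
      omega

lemma close_rot {H : SimpleGraph V} {a b : List V} {c y z : V} (h1 : (a ++ c :: b).Nodup)
    (h2 : ∀ x ∈ a ++ c :: b, x ∈ X) (h3 : (a ++ c :: b).IsChain H.Adj)
    (hy : (a ++ c :: b).head? = some y) (hz : (a ++ c :: b).getLast? = some z) (hadj : H.Adj z y)
    (hc : Cn ((c :: b) ++ a) u v) : Pth H X u v ((c :: b) ++ a) := by
  have hp : ((c :: b) ++ a).Perm (a ++ c :: b) := List.perm_append_comm
  refine ⟨hp.nodup_iff.2 h1, fun x hx => h2 x (hp.mem_iff.1 hx), ?_, hc⟩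
  rw [chain_nx] at h3 ⊢
  intro x w hxw
  rw [nx_append] at hxw
  rcases hxw with h | h | ⟨h, h'⟩
  · exact h3 _ _ ((nx_append _ _ _ _).2 (by tauto))
  · exact h3 _ _ ((nx_append _ _ _ _).2 (by tauto))
  · have : z = x := by
      rw [List.getLast?_append] at hz
      rw [h] at hz; simpa using hz.symm
    have : y = w := by
      cases a with
      | nil => simp at h'
      | cons d a => simp at h' hy; rw [← h', ← hy]
    subst_vars; exact hadj

lemma pth_cons {H : SimpleGraph V} {l : List V} {c w : V} (hl : Pth H X u v l) (hc : l.head? = some c)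
    (hw : w ∉ l) (hwX : w ∈ X) (hadj : H.Adj w c) : Pth H X u v (w :: l) := by
  obtain ⟨h1, h2, h3, h4⟩ := hl
  refine ⟨List.nodup_cons.2 ⟨hw, h1⟩, ?_, ?_, ?_⟩
  · intro x hx; rw [List.mem_cons] at hx; rcases hx with rfl | hx
    · exact hwX
    · exact h2 x hx
  · rw [List.isChain_cons]; refine ⟨?_, h3⟩
    intro y hy; rw [hc] at hy; simp at hy; subst hy; exact hadj
  · unfold Cn at h4 ⊢; simp only [nx_cons]; tauto

lemma nx_swap {a b : List V} {c p q : V} (h : Nx (a ++ c :: b) p q) :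
    Nx ((c :: b) ++ a) p q ∨ Nx ((c :: a.reverse) ++ b.reverse) q p := by
  rw [nx_append] at h
  rcases h with h | h | ⟨h, h'⟩
  · left; rw [nx_append]; exact Or.inr (Or.inl h)
  · left; rw [nx_append]; exact Or.inl h
  · right; rw [nx_append]; left; rw [nx_cons]; left
    rw [List.head?_reverse]
    simp at h'
    exact ⟨h', h⟩

lemma closing {Γ : SimpleGraph V} (hX : 3 ≤ X.card)
    (conn : ∀ Y ⊆ X, Y.Nonempty → Y ≠ X → ∃ c ∈ Y, ∃ w ∈ X, w ∉ Y ∧ Γ.Adj w c)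
    {l : List V} {y z : V} (hl : Pth (Hm Γ u v) X u v l)
    (hy : l.head? = some y) (hz : l.getLast? = some z) (hadj : (Hm Γ u v).Adj z y) :
    HamP Γ X u v ∨ ∃ l', Pth (Hm Γ u v) X u v l' ∧ l.length + 1 = l'.length := by
  have hl' := hl
  obtain ⟨h1, h2, h3, h4⟩ := hl
  by_cases hcov : l.toFinset = X
  · left
    have hmem : ∀ x, x ∈ l ↔ x ∈ X := by intro x; rw [← hcov]; simp
    rcases h4 with h4 | h4
    · exact close_cover hX h1 hmem h3 h4 hy hz hadj
    · obtain ⟨r1, r2, r3, r4⟩ := hl'.reverse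
      exact close_cover hX r1 (by simpa using hmem) r3 ((nx_reverse _ _ _).2 h4)
        (by rw [List.head?_reverse]; exact hz) (by rw [List.getLast?_reverse]; exact hy) hadj.symm
  · right
    have hne : l.toFinset.Nonempty := ⟨y, by simpa using List.mem_of_mem_head? hy⟩
    obtain ⟨c, hc, w, hwX, hwl, hwc⟩ := conn l.toFinset (by intro x hx; exact h2 x (by simpa using hx)) hne hcov
    have hc' : c ∈ l := by simpa using hc
    have hw : w ∉ l := by simpa using hwl
    have hwc' : (Hm Γ u v).Adj w c := by unfold Hm; rw [SimpleGraph.sup_adj]; exact Or.inl hwc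
    obtain ⟨a, b, rfl⟩ := List.append_of_mem hc'
    by_cases hcn : Cn ((c :: b) ++ a) u v
    · refine ⟨w :: ((c :: b) ++ a), pth_cons (close_rot h1 h2 h3 hy hz hadj hcn) (by simp) ?_ hwX hwc', ?_⟩
      · intro h; apply hw; simp at h ⊢; tauto
      · simp; omega
    · obtain ⟨r1, r2, r3, r4⟩ := hl'.reverse
      have e : (a ++ c :: b).reverse = b.reverse ++ c :: a.reverse := by simp
      rw [e] at r1 r2 r3
      have hcn2 : Cn ((c :: a.reverse) ++ b.reverse) u v := by
        rcases h4 with h4 | h4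
        · rcases nx_swap h4 with h | h
          · exact absurd (Or.inl h) hcn
          · exact Or.inr h
        · rcases nx_swap h4 with h | h
          · exact absurd (Or.inr h) hcn
          · exact Or.inl h
      refine ⟨w :: ((c :: a.reverse) ++ b.reverse), pth_cons (close_rot r1 r2 r3
        (by rw [← e, List.head?_reverse]; exact hz) (by rw [← e, List.getLast?_reverse]; exact hy)
        hadj.symm hcn2) (by simp) ?_ hwX hwc', ?_⟩
      · intro h; apply hw; simp at h ⊢; tauto
      · simp; omega

/-- end pairs of longest forced paths -/
def IsB (Γ : SimpleGraph V) (X : Finset V) (u v : V) (y z : V) : Prop :=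
  ∃ l, Pth (Hm Γ u v) X u v l ∧ (∀ l', Pth (Hm Γ u v) X u v l' → l'.length ≤ l.length) ∧
    l.head? = some y ∧ l.getLast? = some z

/-- boosters -/
noncomputable def Bst (Γ : SimpleGraph V) (X : Finset V) (u v : V) : Finset (Sym2 V) :=
  (univ.filter (fun x : V × V => IsB Γ X u v x.1 x.2)).image (fun x => s(x.1, x.2))

lemma exists_longest {H : SimpleGraph V} {l0 : List V} (h0 : Pth H X u v l0) :
    ∃ l, Pth H X u v l ∧ l0.length ≤ l.length ∧ ∀ l', Pth H X u v l' → l'.length ≤ l.length := by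
  let P : ℕ → Prop := fun m => ∃ l, Pth H X u v l ∧ l.length = m
  have hb : ∀ m, P m → m ≤ Fintype.card V := by
    rintro m ⟨l, hl, rfl⟩
    exact hl.1.length_le_card
  have hP : P l0.length := ⟨l0, h0, rfl⟩
  obtain ⟨l, hl, hlen⟩ := Nat.findGreatest_spec (hb _ hP) hP
  refine ⟨l, hl, ?_, ?_⟩
  · rw [hlen]; exact Nat.le_findGreatest (hb _ hP) hP
  · intro l' hl'
    rw [hlen]; exact Nat.le_findGreatest (hb _ ⟨l', hl', rfl⟩) ⟨l', hl', rfl⟩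

lemma pair_pth {Γ : SimpleGraph V} (huv : u ≠ v) (hu : u ∈ X) (hv : v ∈ X) : Pth (Hm Γ u v) X u v [u, v] := by
  refine ⟨by simp [huv], by simp [hu, hv], ?_, Or.inl ⟨[], [], rfl⟩⟩
  simp [Hm, huv, SimpleGraph.edge_adj]

/-- the expansion hypotheses -/
structure Expd (Γ : SimpleGraph V) (X : Finset V) (u v : V) (k : ℝ) : Prop where
  exp : ∀ S : Finset V, S ⊆ X → (S.card : ℝ) ≤ k →
      2 * S.card ≤ (X.filter (fun z => z ∉ S ∧ z ≠ u ∧ z ≠ v ∧ ∃ y ∈ S, Γ.Adj y z)).card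
  conn : ∀ Y ⊆ X, Y.Nonempty → Y ≠ X → ∃ c ∈ Y, ∃ w ∈ X, w ∉ Y ∧ Γ.Adj w c
  three : 3 ≤ X.card
  hu : u ∈ X
  hv : v ∈ X
  ne : u ≠ v

lemma Expd.mono {Γ Γ' : SimpleGraph V} {k : ℝ} (h : Expd Γ X u v k) (hle : Γ ≤ Γ') : Expd Γ' X u v k := by
  refine ⟨?_, ?_, h.three, h.hu, h.hv, h.ne⟩
  · intro S hS hk
    refine (h.exp S hS hk).trans (card_le_card ?_)
    intro z; simp only [mem_filter]
    rintro ⟨a, b, c, d, y, e, f⟩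
    exact ⟨a, b, c, d, y, e, hle f⟩
  · intro Y hY h1 h2
    obtain ⟨c, hc, w, hw, hw', hadj⟩ := h.conn Y hY h1 h2
    exact ⟨c, hc, w, hw, hw', hle hadj⟩

lemma bst_card {Γ : SimpleGraph V} {k : ℝ} (hk : 0 ≤ k) (h : Expd Γ X u v k) :
    k ^ 2 / 2 ≤ ((Bst Γ X u v).card : ℝ) := by
  have hexp : ∀ S : Finset V, S ⊆ X → (S.card : ℝ) ≤ k →
      2 * S.card ≤ (X.filter (fun z => z ∉ S ∧ z ≠ u ∧ z ≠ v ∧ ∃ y ∈ S, (Hm Γ u v).Adj y z)).card := by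
    intro S hS hk
    refine (h.exp S hS hk).trans (card_le_card ?_)
    intro z; simp only [mem_filter]
    rintro ⟨a, b, c, d, y, e, f⟩
    exact ⟨a, b, c, d, y, e, by unfold Hm; rw [SimpleGraph.sup_adj]; exact Or.inl f⟩
  obtain ⟨l0, hl0, -, hmax⟩ := exists_longest (pair_pth (Γ := Γ) h.ne h.hu h.hv)
  obtain ⟨R, hR, hR'⟩ := posa l0 hl0 hmax k hexp
  have h2 : ∀ y ∈ R, k ≤ ((univ.filter (fun z => IsB Γ X u v y z)).card : ℝ) := by
    intro y hy
    obtain ⟨l, hl, hlen, hhead, hlast⟩ := hR' y hy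
    have hm' : ∀ l', Pth (Hm Γ u v) X u v l' → l'.length ≤ l.reverse.length := by
      intro l' hl'; rw [List.length_reverse, hlen]; exact hmax l' hl'
    obtain ⟨R2, hR2, hR2'⟩ := posa l.reverse hl.reverse hm' k hexp
    refine hR2.le.trans ?_
    norm_cast
    apply card_le_card
    intro z hz
    obtain ⟨l2, hl2, hlen2, hhead2, hlast2⟩ := hR2' z hz
    simp only [mem_filter, mem_univ, true_and]
    refine ⟨l2, hl2, ?_, ?_, hlast2⟩
    · intro l' hl'; rw [hlen2]; exact hm' l' hl'
    · rw [hhead2, List.head?_reverse, hlast]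
  have h3 : k ^ 2 ≤ ((univ.filter (fun x : V × V => IsB Γ X u v x.1 x.2)).card : ℝ) := by
    have : (univ.filter (fun x : V × V => IsB Γ X u v x.1 x.2)).card =
        ∑ y : V, (univ.filter (fun z => IsB Γ X u v y z)).card := by
      simp only [card_filter]
      rw [Fintype.sum_prod_type]
    rw [this]
    push_cast
    calc k ^ 2 = k * k := by ring
      _ ≤ R.card * k := by gcongr
      _ = ∑ y ∈ R, k := by simp
      _ ≤ ∑ y ∈ R, ((univ.filter (fun z => IsB Γ X u v y z)).card : ℝ) := sum_le_sum h2
      _ ≤ _ := sum_le_sum_of_subset_of_nonneg (subset_univ _) (fun _ _ _ => by positivity)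
  have h4 : (univ.filter (fun x : V × V => IsB Γ X u v x.1 x.2)).card ≤ 2 * (Bst Γ X u v).card := by
    unfold Bst
    apply card_le_mul_card_image
    intro e _
    induction e with
    | h a b =>
    refine (card_le_card (t := {(a, b), (b, a)}) ?_).trans card_le_two
    rintro ⟨c, d⟩ hcd
    simp only [mem_filter, Sym2.eq_iff] at hcd
    simp only [mem_insert, mem_singleton, Prod.mk.injEq]
    exact hcd.2
  have h5 : ((univ.filter (fun x : V × V => IsB Γ X u v x.1 x.2)).card : ℝ) ≤ 2 * ((Bst Γ X u v).card : ℝ) := by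
    exact_mod_cast h4
  linarith

lemma isB_ne {Γ : SimpleGraph V} {y z : V} (h : IsB Γ X u v y z) : y ≠ z := by
  obtain ⟨l, hl, _, hy, hz⟩ := h
  rintro rfl
  cases l with
  | nil => simp at hy
  | cons c l =>
    simp at hy; subst hy
    cases l with
    | nil =>
      rcases hl.2.2.2 with h | h <;> rw [nx_cons] at h <;> simp [nx_nil] at h
    | cons d l =>
      have : c ∈ d :: l := List.mem_of_getLast? (by simpa using hz)
      exact (List.nodup_cons.1 hl.1).1 this

lemma bst_disj {Γ : SimpleGraph V} {k : ℝ} (h : Expd Γ X u v k) (hham : ¬ HamP Γ X u v) :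
    ∀ e ∈ Bst Γ X u v, e ∉ Γ.edgeSet := by
  intro e he hΓ
  simp only [Bst, mem_image, mem_filter, mem_univ, true_and, Prod.exists] at he
  obtain ⟨y, z, ⟨l, hl, hmax, hy, hz⟩, rfl⟩ := he
  have hadj : (Hm Γ u v).Adj z y := by
    unfold Hm; rw [SimpleGraph.sup_adj]; exact Or.inl (SimpleGraph.mem_edgeSet _ |>.1 hΓ).symm
  rcases closing h.three h.conn hl hy hz hadj with h' | ⟨l', hl', hlen⟩
  · exact hham h'
  · have := hmax l' hl'; omega

lemma iterate {Γ0 G : SimpleGraph V} {k : ℝ} (h : Expd Γ0 X u v k) (h0 : Γ0 ≤ G) (m : ℕ)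
    (hm : Γ0.edgeSet.ncard ≤ m)
    (hb : ∀ Γ, Γ0 ≤ Γ → Γ ≤ G → Γ.edgeSet.ncard ≤ m + (Fintype.card V + 1) → ¬ HamP Γ X u v →
      ∃ e ∈ Bst Γ X u v, e ∈ G.edgeSet) : HamP G X u v := by
  have key : ∀ i ≤ Fintype.card V + 1, ∃ Γ, Γ0 ≤ Γ ∧ Γ ≤ G ∧ Γ.edgeSet.ncard ≤ m + i ∧
      (HamP Γ X u v ∨ ∃ l, Pth (Hm Γ u v) X u v l ∧ i ≤ l.length) := by
    intro i
    induction i with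
    | zero => intro _; exact ⟨Γ0, le_rfl, h0, hm, Or.inr ⟨_, pair_pth h.ne h.hu h.hv, by simp⟩⟩
    | succ i ih =>
      intro hi
      obtain ⟨Γ, hΓ0, hΓG, hΓm, hΓ⟩ := ih (by omega)
      by_cases hham : HamP Γ X u v
      · exact ⟨Γ, hΓ0, hΓG, by omega, Or.inl hham⟩
      obtain ⟨l0, hl0, hl0i⟩ := hΓ.resolve_left hham
      obtain ⟨l1, hl1, hl01, hmax1⟩ := exists_longest hl0
      obtain ⟨e, he, heG⟩ := hb Γ hΓ0 hΓG (by omega) hham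
      simp only [Bst, mem_image, mem_filter, mem_univ, true_and, Prod.exists] at he
      obtain ⟨y, z, hB, rfl⟩ := he
      have hyz := isB_ne hB
      obtain ⟨l, hl, hmax, hy, hz⟩ := hB
      let Γ' := Γ ⊔ SimpleGraph.edge y z
      have hle : Γ ≤ Γ' := le_sup_left
      have hle' : Hm Γ u v ≤ Hm Γ' u v := sup_le_sup_right hle _
      have hadj : (Hm Γ' u v).Adj z y := by
        simp only [Hm, Γ', SimpleGraph.sup_adj, SimpleGraph.edge_adj]
        left; right; exact ⟨by tauto, hyz.symm⟩
      have hl' : Pth (Hm Γ' u v) X u v l :=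
        ⟨hl.1, hl.2.1, hl.2.2.1.imp (fun _ _ hab => hle' hab), hl.2.2.2⟩
      refine ⟨Γ', hΓ0.trans hle, sup_le hΓG ?_, ?_, ?_⟩
      · intro a b hab
        rw [SimpleGraph.edge_adj] at hab
        rcases hab.1 with ⟨rfl, rfl⟩ | ⟨rfl, rfl⟩
        · exact heG
        · exact heG.symm
      · have : Γ'.edgeSet ⊆ insert s(y, z) Γ.edgeSet := by
          intro e
          induction e with
          | h a b =>
          simp only [Γ', SimpleGraph.mem_edgeSet, SimpleGraph.sup_adj, SimpleGraph.edge_adj,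
            Set.mem_insert_iff, Sym2.eq_iff]
          tauto
        have h1 := Set.ncard_le_ncard this (Set.toFinite _)
        have h2 := Set.ncard_insert_le s(y, z) Γ.edgeSet
        omega
      · rcases closing (Γ := Γ') h.three (h.mono (hΓ0.trans hle)).conn hl' hy hz hadj with h' | ⟨l', hl', hlen⟩
        · exact Or.inl h'
        · have := hmax l0 hl0
          exact Or.inr ⟨l', hl', by omega⟩
  obtain ⟨Γ, _, hG, _, hh | ⟨l, hl, hlen⟩⟩ := key _ le_rfl
  · exact hh.mono hG
  · have := hl.1.length_le_card
    omega

end Boost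


section WalkPart
open scoped Classical
open Finset

variable {V : Type*} [Fintype V]

lemma walk_core {G : SimpleGraph V} {Vs : Finset V} (h3 : 3 ≤ Fintype.card V)
    (h : ∀ X, Vs ⊆ X → ∀ u ∈ X, ∀ v ∈ X, u ∉ Vs → v ∉ Vs → u ≠ v → HamP G X u v)
    {u v : V} (huv : u ≠ v) (P : G.Walk u v) (hP : P.IsPath) (hs : ∀ x ∈ P.support, x ∉ Vs) :
    ∃ (x : V) (C : G.Walk x x), C.IsHamiltonianCycle ∧ ∀ e ∈ P.edges, e ∈ C.edges := by
  cases P with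
  | nil => exact absurd rfl huv
  | @cons _ w _ hadj P' =>
    rw [SimpleGraph.Walk.cons_isPath_iff] at hP
    obtain ⟨hP1, hP2⟩ := hP
    let X : Finset V := univ.filter (fun x => x ∉ (SimpleGraph.Walk.cons hadj P').support ∨ x = u ∨ x = v)
    have hX : ∀ x, x ∈ X ↔ (x ∉ (SimpleGraph.Walk.cons hadj P').support ∨ x = u ∨ x = v) := by simp [X]
    obtain ⟨l, hl1, hl2, hl3, hl4, hl5⟩ := h X (fun x hx => (hX x).2 (Or.inl (fun hh => hs x hh hx)))
      u ((hX u).2 (by simp)) v ((hX v).2 (by simp)) (hs u (by simp)) (hs v (by simp)) huv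
    obtain ⟨Q, hQ⟩ : ∃ Q : G.Walk v u, Q.support = l := by
      have hne : l ≠ [] := by rintro rfl; simp at hl4
      have e1 : l.head hne = v := by
        rw [List.head?_eq_some_head hne] at hl4; simpa using hl4
      have e2 : l.getLast hne = u := by
        rw [List.getLast?_eq_some_getLast hne] at hl5; simpa using hl5
      refine ⟨(SimpleGraph.Walk.ofSupport l hne hl3).copy e1 e2, ?_⟩
      simp
    have hQs : Q.support = v :: Q.support.tail := Q.support_eq_cons
    rw [← hQ] at hl1 hl2
    have hQn := hl1
    rw [hQs, List.nodup_cons] at hQn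
    have hsup : (P'.append Q).support = P'.support ++ Q.support.tail := SimpleGraph.Walk.support_append _ _
    have hpath : (P'.append Q).IsPath := by
      rw [SimpleGraph.Walk.isPath_def, hsup, List.nodup_append]
      refine ⟨hP1.support_nodup, hQn.2, ?_⟩
      rintro a ha b hb rfl
      have hb' : a ∈ Q.support := List.mem_of_mem_tail hb
      rw [hl2, hX] at hb'
      rcases hb' with h' | rfl | rfl
      · apply h'; simp [ha]
      · exact hP2 ha
      · exact hQn.1 hb
    have hmem : ∀ x, x ∈ (P'.append Q).support := by
      intro x
      rw [hsup, List.mem_append]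
      by_cases hx : x ∈ P'.support
      · exact Or.inl hx
      · right
        have hxv : x ≠ v := by rintro rfl; exact hx (by simp)
        have : x ∈ Q.support := by
          rw [hl2, hX]
          by_cases hxu : x = u
          · simp [hxu]
          · left; simp [hx, hxu]
        rw [hQs, List.mem_cons] at this
        tauto
    have hham : (P'.append Q).IsHamiltonian := fun x => List.count_eq_one_of_mem hpath.support_nodup (hmem x)
    have hlen := hham.length_eq
    refine ⟨u, SimpleGraph.Walk.cons hadj (P'.append Q), ?_, ?_⟩
    · rw [SimpleGraph.Walk.isHamiltonianCycle_iff_isCycle_and_length_eq, SimpleGraph.Walk.cons_isCycle_iff]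
      refine ⟨⟨hpath, fun he => ?_⟩, ?_⟩
      · rw [Sym2.eq_swap] at he
        have := hpath.length_eq_one_of_mem_edges he
        omega
      · rw [SimpleGraph.Walk.length_cons]; omega
    · intro e he
      simp only [SimpleGraph.Walk.edges_cons, SimpleGraph.Walk.edges_append, List.mem_cons, List.mem_append] at he ⊢
      tauto

lemma walk_part {G : SimpleGraph V} {Vs : Finset V} (h3 : 3 ≤ Fintype.card V)
    (h : ∀ X, Vs ⊆ X → ∀ u ∈ X, ∀ v ∈ X, u ∉ Vs → v ∉ Vs → u ≠ v → HamP G X u v)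
    (hed : ∃ a b, a ∉ Vs ∧ b ∉ Vs ∧ G.Adj a b)
    (u v : V) (P : G.Walk u v) (hP : P.IsPath) (hs : ∀ x ∈ P.support, x ∉ Vs) :
    ∃ (x : V) (C : G.Walk x x), C.IsHamiltonianCycle ∧ ∀ e ∈ P.edges, e ∈ C.edges := by
  by_cases huv : u = v
  · subst huv
    have : P = SimpleGraph.Walk.nil := by simpa using hP
    subst this
    obtain ⟨a, b, ha, hb, hab⟩ := hed
    obtain ⟨x, C, hC, _⟩ := walk_core h3 h hab.ne (SimpleGraph.Walk.cons hab SimpleGraph.Walk.nil)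
      (by simp [hab.ne]) (by simp [ha, hb])
    exact ⟨x, C, hC, by simp⟩
  · exact walk_core h3 h huv P hP hs

end WalkPart

set_option linter.unusedSectionVars false
section Assemble
open scoped Classical
open Finset

variable {V : Type*} [Fintype V]

/-- expansion into `Vs` and joinedness at scale `k` -/
structure Good (Γ : SimpleGraph V) (Vs : Finset V) (k : ℝ) : Prop where
  g1 : ∀ S : Finset V, (S.card : ℝ) ≤ k → 2 * S.card ≤ (Vs.filter (fun z => z ∉ S ∧ ∃ y ∈ S, Γ.Adj y z)).card
  g2 : ∀ A B : Finset V, Disjoint A B → k < A.card → k < B.card → ∃ a ∈ A, ∃ b ∈ B, Γ.Adj a b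

lemma Good.expd {Γ : SimpleGraph V} {Vs X : Finset V} {k : ℝ} (hk : 1 ≤ k) (h : Good Γ Vs k) (hX : Vs ⊆ X)
    {u v : V} (hu : u ∈ X) (hv : v ∈ X) (hu' : u ∉ Vs) (hv' : v ∉ Vs) (huv : u ≠ v) :
    Expd Γ X u v k := by
  have aux : ∀ Y : Finset V, Y.Nonempty → (Y.card : ℝ) ≤ k → ∃ c ∈ Y, ∃ w ∈ Vs, w ∉ Y ∧ Γ.Adj w c := by
    intro Y hY hYk
    have h1 := h.g1 Y hYk
    have h2 : 0 < Y.card := hY.card_pos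
    obtain ⟨z, hz⟩ : (Vs.filter (fun z => z ∉ Y ∧ ∃ y ∈ Y, Γ.Adj y z)).Nonempty := by
      rw [← card_pos]; omega
    rw [mem_filter] at hz
    obtain ⟨hz1, hz2, y, hy, hyz⟩ := hz
    exact ⟨y, hy, z, hz1, hz2, hyz.symm⟩
  refine ⟨?_, ?_, ?_, hu, hv, huv⟩
  · intro S _ hS
    refine (h.g1 S hS).trans (card_le_card ?_)
    intro z hz
    rw [mem_filter] at hz ⊢
    refine ⟨hX hz.1, hz.2.1, ?_, ?_, hz.2.2⟩
    · rintro rfl; exact hu' hz.1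
    · rintro rfl; exact hv' hz.1
  · intro Y hYX hY hne
    by_cases hYk : (Y.card : ℝ) ≤ k
    · obtain ⟨c, hc, w, hw, h1, h2⟩ := aux Y hY hYk
      exact ⟨c, hc, w, hX hw, h1, h2⟩
    have hne2 : (X \ Y).Nonempty := by
      rw [sdiff_nonempty]; intro hh; exact hne (Subset.antisymm hYX hh)
    by_cases hZk : ((X \ Y).card : ℝ) ≤ k
    · obtain ⟨c, hc, w, hw, h1, h2⟩ := aux _ hne2 hZk
      rw [mem_sdiff] at hc h1
      refine ⟨w, ?_, c, hc.1, hc.2, h2.symm⟩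
      by_contra hh; exact h1 ⟨hX hw, hh⟩
    · obtain ⟨a, ha, b, hb, hab⟩ := h.g2 Y (X \ Y) disjoint_sdiff (not_le.1 hYk) (not_le.1 hZk)
      rw [mem_sdiff] at hb
      exact ⟨a, ha, b, hb.1, hb.2, hab.symm⟩
  · have h1 := h.g1 {u} (by simpa using hk)
    have h2 : insert u (Vs.filter (fun z => z ∉ ({u} : Finset V) ∧ ∃ y ∈ ({u} : Finset V), Γ.Adj y z)) ⊆ X := by
      intro z hz; rw [mem_insert] at hz
      rcases hz with rfl | hz
      · exact hu
      · exact hX (mem_filter.1 hz).1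
    have h3 := card_le_card h2
    rw [card_insert_of_notMem (by simp)] at h3
    simp only [card_singleton] at h1
    omega

lemma assemble {G Γ : SimpleGraph V} {Vs : Finset V} {k : ℝ} (hk : 1 ≤ k) (hG : Γ ≤ G) (h : Good Γ Vs k)
    (M : ℕ) (hM : Γ.edgeSet.ncard + (Fintype.card V + 1) ≤ M)
    (hb : ∀ (Γ' : SimpleGraph V) (X : Finset V) (u v : V), Γ' ≤ G → Γ'.edgeSet.ncard ≤ M →
      k ^ 2 / 2 ≤ ((Bst Γ' X u v).card : ℝ) → (∀ e ∈ Bst Γ' X u v, e ∉ Γ'.edgeSet) →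
      ∃ e ∈ Bst Γ' X u v, e ∈ G.edgeSet)
    (hV : 2 * k + 2 ≤ ((univ \ Vs).card : ℝ)) :
    (∀ X, Vs ⊆ X → ∀ u ∈ X, ∀ v ∈ X, u ∉ Vs → v ∉ Vs → u ≠ v → HamP G X u v) ∧
    ∃ a b, a ∉ Vs ∧ b ∉ Vs ∧ G.Adj a b := by
  constructor
  · intro X hX u hu v hv hu' hv' huv
    have he := h.expd hk hX hu hv hu' hv' huv
    refine iterate he hG _ le_rfl ?_
    intro Γ' h1 h2 h3 h4
    have he' := he.mono h1
    exact hb Γ' X u v h2 (h3.trans hM) (bst_card (by linarith) he') (bst_disj he' h4)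
  · have hk0 : (0:ℝ) ≤ k := by linarith
    have f1 := Nat.floor_le hk0
    have f2 := Nat.lt_floor_add_one k
    have : 2 * (⌊k⌋₊ + 1) ≤ (univ \ Vs).card := by
      have : ((2 * (⌊k⌋₊ + 1) : ℕ) : ℝ) ≤ ((univ \ Vs).card : ℝ) := by push_cast; linarith
      exact_mod_cast this
    obtain ⟨A, hA, hAc⟩ := exists_subset_card_eq (s := univ \ Vs) (n := ⌊k⌋₊ + 1) (by omega)
    have hB : k < (((univ \ Vs) \ A).card : ℝ) := by
      have h1 : ⌊k⌋₊ + 1 ≤ ((univ \ Vs) \ A).card := by rw [card_sdiff_of_subset hA]; omega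
      have h2 : ((⌊k⌋₊ + 1 : ℕ) : ℝ) ≤ (((univ \ Vs) \ A).card : ℝ) := by exact_mod_cast h1
      push_cast at h2; linarith
    obtain ⟨a, ha, b, hb', hab⟩ := h.g2 A ((univ \ Vs) \ A) disjoint_sdiff (by rw [hAc]; push_cast; exact f2) hB
    have ha' := hA ha
    rw [mem_sdiff] at ha' hb'
    have hb2 := hb'.1
    rw [mem_sdiff] at hb2
    exact ⟨a, b, ha'.2, hb2.2, hG hab⟩

/-- neighbourhood -/
noncomputable def Nb (G : SimpleGraph V) (v : V) : Finset V := univ.filter (G.Adj v)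

lemma mem_Nb {G : SimpleGraph V} {v w : V} : w ∈ Nb G v ↔ G.Adj v w := by simp [Nb]

/-- pairs inside a set -/
noncomputable def prT (T : Finset V) : Finset (Sym2 V) := T.offDiag.image (fun x => s(x.1, x.2))

lemma mem_prT {T : Finset V} {a b : V} : s(a, b) ∈ prT T ↔ a ∈ T ∧ b ∈ T ∧ a ≠ b := by
  simp only [prT, mem_image, mem_offDiag, Prod.exists, Sym2.eq_iff]
  constructor
  · rintro ⟨c, d, h, (⟨rfl, rfl⟩ | ⟨rfl, rfl⟩)⟩
    · exact h
    · exact ⟨h.2.1, h.1, h.2.2.symm⟩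
  · intro h; exact ⟨a, b, h, Or.inl ⟨rfl, rfl⟩⟩

lemma local_exp {G : SimpleGraph V} (V0 B : Finset V) (s : ℝ)
    (hB : ∀ v, (V0.filter (G.Adj v)).card < 30 → v ∈ B)
    (hdeg : ∀ v, 2 ≤ (Nb G v).card)
    (h2a : ∀ v w, (Nb G v).card < 30 → (Nb G w).card < 30 → v ≠ w → ¬ G.Adj v w ∧ Disjoint (Nb G v) (Nb G w))
    (h2b : ∀ v w1 w2, ¬ (Nb G v).card < 30 → G.Adj v w1 → G.Adj v w2 →
      ((Nb G w1).card < 30 ∨ ∃ z, (Nb G z).card < 30 ∧ G.Adj z w1) →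
      ((Nb G w2).card < 30 ∨ ∃ z, (Nb G z).card < 30 ∧ G.Adj z w2) → w1 = w2)
    (h4 : ∀ T : Finset V, T.Nonempty → (T.card : ℝ) ≤ 5 * s →
      ((prT T).filter (· ∈ G.edgeSet)).card < 3 * T.card) :
    ∃ (Vs : Finset V) (Γ : SimpleGraph V), V0 ⊆ Vs ∧ Vs.card ≤ V0.card + B.card * 30 ∧ Γ ≤ G ∧
      Γ.edgeSet.ncard ≤ Fintype.card V * 30 ∧
      ∀ S : Finset V, (S.card : ℝ) ≤ s → 2 * S.card ≤ (Vs.filter (fun z => z ∉ S ∧ ∃ y ∈ S, Γ.Adj y z)).card := by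
  have hA : ∀ v, ∃ A : Finset V, A ⊆ Nb G v ∧ A.card ≤ 30 ∧ (¬ (Nb G v).card < 30 → A.card = 30) ∧
      ((Nb G v).card < 30 → A = Nb G v) ∧ (v ∉ B → A ⊆ V0) := by
    intro v
    by_cases hv : v ∈ B
    · by_cases hs : (Nb G v).card < 30
      · exact ⟨Nb G v, Subset.rfl, hs.le, fun h => absurd hs h, fun _ => rfl, fun h => absurd hv h⟩
      · obtain ⟨A, hA, hc⟩ := exists_subset_card_eq (not_lt.1 hs)
        exact ⟨A, hA, hc.le, fun _ => hc, fun h => absurd h hs, fun h => absurd hv h⟩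
    · have h1 : 30 ≤ (V0.filter (G.Adj v)).card := by
        by_contra hh; exact hv (hB v (by omega))
      obtain ⟨A, hA, hc⟩ := exists_subset_card_eq h1
      have hs : V0.filter (G.Adj v) ⊆ Nb G v := by
        intro w hw; rw [mem_filter] at hw; exact mem_Nb.2 hw.2
      refine ⟨A, hA.trans hs, hc.le, fun _ => hc, fun h => ?_, fun _ => hA.trans (filter_subset _ _)⟩
      have := card_le_card hs; omega
  choose A hA1 hA2 hA3 hA4 hA5 using hA
  let Vs := V0 ∪ B.biUnion A
  have hAV : ∀ v, A v ⊆ Vs := by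
    intro v
    by_cases hv : v ∈ B
    · exact (subset_biUnion_of_mem A hv).trans subset_union_right
    · exact (hA5 v hv).trans subset_union_left
  let Γ : SimpleGraph V := ⟨fun x y => y ∈ A x ∨ x ∈ A y, ⟨fun x y h => Or.symm h⟩, ⟨fun x h => by
    have : x ∈ A x := by tauto
    exact G.irrefl (mem_Nb.1 (hA1 x this))⟩⟩
  have hadj : ∀ x y, y ∈ A x → Γ.Adj x y := fun x y h => Or.inl h
  refine ⟨Vs, Γ, subset_union_left, ?_, ?_, ?_, ?_⟩
  · exact (card_union_le _ _).trans (Nat.add_le_add_left (card_biUnion_le_card_mul _ _ _ (fun v _ => hA2 v)) _)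
  · rintro x y (h | h)
    · exact mem_Nb.1 (hA1 x h)
    · exact (mem_Nb.1 (hA1 y h)).symm
  · have : Γ.edgeSet ⊆ ↑((univ : Finset V).biUnion (fun v => (A v).image (fun a => s(v, a)))) := by
      intro e
      induction e with
      | h a b =>
      rw [SimpleGraph.mem_edgeSet]
      intro h
      simp only [coe_biUnion, Set.mem_iUnion, mem_coe, mem_image, mem_univ]
      rcases h with h | h
      · exact ⟨a, trivial, b, h, rfl⟩
      · exact ⟨b, trivial, a, h, Sym2.eq_swap⟩
    have h1 := Set.ncard_le_ncard this (Set.toFinite _)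
    rw [Set.ncard_coe_finset] at h1
    exact h1.trans (card_biUnion_le_card_mul _ _ _ (fun v _ => card_image_le.trans (hA2 v)))
  · intro S hS
    let S1 := S.filter (fun v => (Nb G v).card < 30)
    let S2 := S.filter (fun v => ¬ (Nb G v).card < 30)
    have hS12 : S1.card + S2.card = S.card := card_filter_add_card_filter_not _
    let N1 := S1.biUnion A
    let N2 := S2.biUnion A
    have hN1 : 2 * S1.card ≤ N1.card := by
      have : N1.card = ∑ v ∈ S1, (A v).card := by
        apply card_biUnion
        intro v hv w hw hvw
        rw [mem_coe, mem_filter] at hv hw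
        rw [Function.onFun, hA4 v hv.2, hA4 w hw.2]
        exact (h2a v w hv.2 hw.2 hvw).2
      rw [this, mul_comm, ← smul_eq_mul]
      apply card_nsmul_le_sum
      intro v hv
      rw [hA4 v (mem_filter.1 hv).2]; exact hdeg v
    have hN1S1 : Disjoint N1 S1 := by
      rw [disjoint_left]
      intro w hw hw1
      obtain ⟨v, hv, hvw⟩ := mem_biUnion.1 hw
      have hadj := mem_Nb.1 (hA1 v hvw)
      exact (h2a v w (mem_filter.1 hv).2 (mem_filter.1 hw1).2 hadj.ne).1 hadj
    have hc : (N2 ∩ (S1 ∪ N1)).card ≤ S2.card := by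
      have e : N2 ∩ (S1 ∪ N1) = S2.biUnion (fun v => A v ∩ (S1 ∪ N1)) := by
        rw [biUnion_inter]
      rw [e, ← mul_one S2.card]
      apply card_biUnion_le_card_mul
      intro v hv
      rw [card_le_one]
      have key : ∀ w ∈ S1 ∪ N1, (Nb G w).card < 30 ∨ ∃ z, (Nb G z).card < 30 ∧ G.Adj z w := by
        intro w hw
        rcases mem_union.1 hw with hw | hw
        · exact Or.inl (mem_filter.1 hw).2
        · obtain ⟨z, hz, hzw⟩ := mem_biUnion.1 hw
          exact Or.inr ⟨z, (mem_filter.1 hz).2, mem_Nb.1 (hA1 z hzw)⟩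
      intro a ha b hb
      rw [mem_inter] at ha hb
      exact h2b v a b (mem_filter.1 hv).2 (mem_Nb.1 (hA1 v ha.1)) (mem_Nb.1 (hA1 v hb.1)) (key a ha.2) (key b hb.2)
    have hN2 : 4 * S2.card ≤ (N2 \ S2).card := by
      by_contra hlt
      push Not at hlt
      have hne : S2.Nonempty := by rw [← card_pos]; omega
      let T := S2 ∪ N2
      have hTc : T.card = S2.card + (N2 \ S2).card := by
        have := card_sdiff_add_card N2 S2
        have e : T = N2 ∪ S2 := union_comm _ _
        rw [e]; omega
      have hT5 : (T.card : ℝ) ≤ 5 * s := by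
        have h1 : (T.card : ℝ) ≤ 5 * (S2.card : ℝ) := by
          have : T.card ≤ 5 * S2.card := by omega
          exact_mod_cast this
        have h2 : (S2.card : ℝ) ≤ S.card := by
          have : S2.card ≤ S.card := by omega
          exact_mod_cast this
        linarith
      have h5 := h4 T (hne.mono subset_union_left) hT5
      have h6 : S2.card * 30 ≤ 2 * ((prT T).filter (· ∈ G.edgeSet)).card := by
        have e1 : (S2.sigma A).card = S2.card * 30 := by
          rw [card_sigma, sum_const_nat]
          intro v hv; exact hA3 v (mem_filter.1 hv).2
        have e2 : (S2.sigma A).card ≤ 2 * ((S2.sigma A).image (fun x => s(x.1, x.2))).card := by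
          apply card_le_mul_card_image
          intro e he
          induction e with
          | h a b =>
          refine (card_le_card (t := {⟨a, b⟩, ⟨b, a⟩}) ?_).trans card_le_two
          rintro ⟨c, d⟩ hx
          rw [mem_filter] at hx
          have := hx.2
          simp only [Sym2.eq_iff] at this
          rcases this with ⟨rfl, rfl⟩ | ⟨rfl, rfl⟩ <;> simp
        have e3 : (S2.sigma A).image (fun x => s(x.1, x.2)) ⊆ (prT T).filter (· ∈ G.edgeSet) := by
          intro e he
          rw [mem_image] at he
          obtain ⟨⟨c, d⟩, hx, rfl⟩ := he
          rw [mem_sigma] at hx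
          have hg : G.Adj c d := mem_Nb.1 (hA1 c hx.2)
          rw [mem_filter, mem_prT]
          exact ⟨⟨mem_union_left _ hx.1, mem_union_right _ (mem_biUnion.2 ⟨c, hx.1, hx.2⟩), hg.ne⟩, hg⟩
        have := card_le_card e3
        omega
      omega
    have hsub : (N1 \ S2) ∪ ((N2 \ S2) \ (S1 ∪ N1)) ⊆ Vs.filter (fun z => z ∉ S ∧ ∃ y ∈ S, Γ.Adj y z) := by
      have hSS : ∀ z ∈ S, z ∈ S1 ∨ z ∈ S2 := by
        intro z hz
        by_cases h : (Nb G z).card < 30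
        · exact Or.inl (mem_filter.2 ⟨hz, h⟩)
        · exact Or.inr (mem_filter.2 ⟨hz, h⟩)
      intro z hz
      rw [mem_filter]
      rcases mem_union.1 hz with hz | hz
      · rw [mem_sdiff] at hz
        obtain ⟨y, hy, hyz⟩ := mem_biUnion.1 hz.1
        refine ⟨hAV y hyz, fun hzS => ?_, y, (mem_filter.1 hy).1, hadj _ _ hyz⟩
        rcases hSS z hzS with h | h
        · exact disjoint_left.1 hN1S1 hz.1 h
        · exact hz.2 h
      · rw [mem_sdiff, mem_sdiff, mem_union] at hz
        obtain ⟨y, hy, hyz⟩ := mem_biUnion.1 hz.1.1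
        refine ⟨hAV y hyz, fun hzS => ?_, y, (mem_filter.1 hy).1, hadj _ _ hyz⟩
        rcases hSS z hzS with h | h
        · exact hz.2 (Or.inl h)
        · exact hz.1.2 h
    have h7 := card_le_card hsub
    rw [card_union_of_disjoint] at h7
    swap
    · rw [disjoint_left]; intro z hz hz'
      rw [mem_sdiff] at hz hz'
      exact hz'.2 (mem_union_right _ hz.1)
    have h8 : N1.card ≤ (N1 \ S2).card + S2.card := by
      have := le_card_sdiff S2 N1; omega
    have h9 : (N2 \ S2).card ≤ ((N2 \ S2) \ (S1 ∪ N1)).card + S2.card := by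
      have h10 := card_sdiff_add_card_inter (N2 \ S2) (S1 ∪ N1)
      have h11 : ((N2 \ S2) ∩ (S1 ∪ N1)).card ≤ (N2 ∩ (S1 ∪ N1)).card :=
        card_le_card (inter_subset_inter_right sdiff_subset)
      omega
    have h12 : 2 * S.card ≤ (N1 \ S2).card + ((N2 \ S2) \ (S1 ∪ N1)).card := by omega
    exact (h12.trans h7).trans (le_of_eq (by congr))

end Assemble

set_option linter.unusedSectionVars false
section Sparse
open scoped Classical
open Finset

variable {V : Type*} [Fintype V]

/-- no dense small configuration around low degree vertices -/
def E2p (G : SimpleGraph V) : Prop := ∀ T J : Finset V, ∀ A : Finset (Sym2 V), T.card ≤ 5 → J ⊆ T → J.Nonempty →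
  J.card ≤ 2 → A ⊆ prT T → T.card + 1 ≤ A.card + J.card →
  ¬ ((∀ e ∈ A, e ∈ G.edgeSet) ∧ ∀ j ∈ J, (Nb G j).card < 30)

lemma E2p.adj {G : SimpleGraph V} (h : E2p G) {v w : V} (hv : (Nb G v).card < 30) (hw : (Nb G w).card < 30)
    (hvw : v ≠ w) : ¬ G.Adj v w := by
  intro ha
  refine h {v, w} {v, w} {s(v, w)} (card_le_two.trans (by norm_num)) Subset.rfl (by simp) card_le_two ?_ ?_
    ⟨by simpa using ha, by simp [hv, hw]⟩
  · simp [mem_prT, hvw]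
  · rw [card_pair hvw]; simp

lemma E2p.common {G : SimpleGraph V} (h : E2p G) {v w z : V} (hv : (Nb G v).card < 30) (hw : (Nb G w).card < 30)
    (hvw : v ≠ w) (h1 : G.Adj v z) (h2 : G.Adj w z) : False := by
  have n1 := h1.ne
  have n2 := h2.ne
  refine h {v, w, z} {v, w} {s(v, z), s(w, z)} (card_le_three.trans (by norm_num)) (by intro x; simp; tauto) (by simp) card_le_two ?_ ?_
    ⟨by simp [h1, h2], by simp [hv, hw]⟩
  · simp [insert_subset_iff, mem_prT, n1, n2]
  · rw [card_pair hvw, card_pair (by simp; tauto)]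
    exact Nat.add_le_add_right card_le_three 1

lemma E2p.tri {G : SimpleGraph V} (h : E2p G) {v w z : V} (hv : (Nb G v).card < 30)
    (h1 : G.Adj v z) (h2 : G.Adj w z) (h3 : G.Adj v w) : False := by
  have n1 := h1.ne
  have n2 := h2.ne
  have n3 := h3.ne
  refine h {v, w, z} {v} {s(v, z), s(w, z), s(v, w)} (card_le_three.trans (by norm_num)) (by simp) (by simp) (by simp) ?_ ?_
    ⟨by simp [h1, h2, h3], by simp [hv]⟩
  · simp [insert_subset_iff, mem_prT, n1, n2, n3]
  · rw [card_eq_three.2 ⟨s(v, z), s(w, z), s(v, w), by simp; tauto, by simp; tauto, by simp; tauto, rfl⟩, card_singleton]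
    exact Nat.add_le_add_right card_le_three 1

/-- path of length three -/
lemma E2p.p3 {G : SimpleGraph V} (h : E2p G) {a b c d : V} (ha : (Nb G a).card < 30) (hd : (Nb G d).card < 30)
    (h1 : G.Adj a b) (h2 : G.Adj b c) (h3 : G.Adj c d) (hac : a ≠ c) (hbd : b ≠ d) (had : a ≠ d) : False := by
  have n1 := h1.ne
  have n2 := h2.ne
  have n3 := h3.ne
  refine h {a, b, c, d} {a, d} {s(a, b), s(b, c), s(c, d)} (card_le_four.trans (by norm_num)) (by intro x; simp; tauto) (by simp) card_le_two ?_ ?_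
    ⟨by simp [h1, h2, h3], by simp [ha, hd]⟩
  · simp [insert_subset_iff, mem_prT, n1, n2, n3]
  · rw [card_eq_three.2 ⟨_, _, _, by simp; tauto, by simp; tauto, by simp; tauto, rfl⟩, card_pair had]
    exact Nat.add_le_add_right card_le_four 1

lemma card_four_eq {α : Type*} [DecidableEq α] {a b c d : α} (h1 : a ≠ b) (h2 : a ≠ c) (h3 : a ≠ d) (h4 : b ≠ c) (h5 : b ≠ d)
    (h6 : c ≠ d) : ({a, b, c, d} : Finset α).card = 4 := by
  rw [card_insert_of_notMem (by simp [h1, h2, h3]), card_eq_three.2 ⟨b, c, d, h4, h5, h6, rfl⟩]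

/-- four cycle -/
lemma E2p.c4 {G : SimpleGraph V} (h : E2p G) {a b c d : V} (ha : (Nb G a).card < 30)
    (h1 : G.Adj a b) (h2 : G.Adj b c) (h3 : G.Adj c d) (h4 : G.Adj a d) (hac : a ≠ c) (hbd : b ≠ d) : False := by
  have n1 := h1.ne
  have n2 := h2.ne
  have n3 := h3.ne
  have n4 := h4.ne
  refine h {a, b, c, d} {a} {s(a, b), s(b, c), s(c, d), s(a, d)} (card_le_four.trans (by norm_num)) (by simp) (by simp) (by simp) ?_ ?_
    ⟨by simp [h1, h2, h3, h4], by simp [ha]⟩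
  · simp [insert_subset_iff, mem_prT, n1, n2, n3, n4]
  · rw [card_four_eq (a := s(a, b)), card_singleton]
    · exact Nat.add_le_add_right card_le_four 1
    all_goals simp; tauto

/-- path of length four -/
lemma E2p.p4 {G : SimpleGraph V} (h : E2p G) {a b c d e : V} (ha : (Nb G a).card < 30) (he : (Nb G e).card < 30)
    (h1 : G.Adj a b) (h2 : G.Adj b c) (h3 : G.Adj c d) (h4 : G.Adj d e) (hae : a ≠ e) (hac : a ≠ c) (had : a ≠ d)
    (hbd : b ≠ d) (hbe : b ≠ e) (hce : c ≠ e) : False := by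
  have n1 := h1.ne
  have n2 := h2.ne
  have n3 := h3.ne
  have n4 := h4.ne
  refine h {a, b, c, d, e} {a, e} {s(a, b), s(b, c), s(c, d), s(d, e)} card_le_five (by intro x; simp; tauto) (by simp) card_le_two ?_ ?_
    ⟨by simp [h1, h2, h3, h4], by simp [ha, he]⟩
  · simp [insert_subset_iff, mem_prT, n1, n2, n3, n4]
  · rw [card_four_eq, card_pair hae]
    · exact Nat.add_le_add_right card_le_five 1
    all_goals simp; tauto

lemma E2p.h2b {G : SimpleGraph V} (h : E2p G) (v w1 w2 : V) (hv : ¬ (Nb G v).card < 30) (h1 : G.Adj v w1)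
    (h2 : G.Adj v w2)
    (hw1 : (Nb G w1).card < 30 ∨ ∃ z, (Nb G z).card < 30 ∧ G.Adj z w1)
    (hw2 : (Nb G w2).card < 30 ∨ ∃ z, (Nb G z).card < 30 ∧ G.Adj z w2) : w1 = w2 := by
  by_contra hne
  have key : ∀ w1 w2, w1 ≠ w2 → G.Adj v w1 → G.Adj v w2 → (Nb G w1).card < 30 →
      ((Nb G w2).card < 30 ∨ ∃ z, (Nb G z).card < 30 ∧ G.Adj z w2) → False := by
    intro w1 w2 hne h1 h2 hw1 hw2
    rcases hw2 with hw2 | ⟨z, hz, hzw⟩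
    · exact h.common hw1 hw2 hne h1.symm h2.symm
    · by_cases hz1 : z = w1
      · subst hz1
        exact h.tri hz hzw h2 h1.symm
      · have : z ≠ v := by rintro rfl; exact hv hz
        exact h.p3 hw1 hz h1.symm h2 hzw.symm hne this.symm (Ne.symm hz1)
  by_cases s1 : (Nb G w1).card < 30
  · exact key w1 w2 hne h1 h2 s1 hw2
  by_cases s2 : (Nb G w2).card < 30
  · exact key w2 w1 (Ne.symm hne) h2 h1 s2 hw1
  obtain ⟨z1, hz1, hzw1⟩ := hw1.resolve_left s1
  obtain ⟨z2, hz2, hzw2⟩ := hw2.resolve_left s2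
  have hz1v : z1 ≠ v := by rintro rfl; exact hv hz1
  have hz2v : z2 ≠ v := by rintro rfl; exact hv hz2
  have hz1w : z1 ≠ w2 := by rintro rfl; exact s2 hz1
  have hz2w : z2 ≠ w1 := by rintro rfl; exact s1 hz2
  by_cases hzz : z1 = z2
  · subst hzz
    exact h.c4 hz1 hzw1 h1.symm h2 hzw2 hz1v hne
  · exact h.p4 hz1 hz2 hzw1 h1.symm h2 hzw2.symm hzz hz1v hz1w hne (Ne.symm hz2w) (Ne.symm hz2v)

/-- the deterministic theorem -/
lemma determin {G : SimpleGraph V} (V0 : Finset V) (s k : ℝ) (m2 M : ℕ) (hk : 1 ≤ k)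
    (hdeg : ∀ v, 2 ≤ (Nb G v).card) (hE2 : E2p G)
    (h4 : ∀ T : Finset V, T.Nonempty → (T.card : ℝ) ≤ 5 * s →
      ((prT T).filter (· ∈ G.edgeSet)).card < 3 * T.card)
    (h5 : ∃ Γ ≤ G, Γ.edgeSet.ncard ≤ m2 ∧
      (∀ S : Finset V, s < S.card → (S.card : ℝ) ≤ k →
        2 * S.card ≤ (V0.filter (fun z => z ∉ S ∧ ∃ y ∈ S, Γ.Adj y z)).card) ∧
      ∀ A B : Finset V, Disjoint A B → k < A.card → k < B.card → ∃ a ∈ A, ∃ b ∈ B, Γ.Adj a b)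
    (h6 : ∀ (Γ' : SimpleGraph V) (X : Finset V) (u v : V), Γ' ≤ G → Γ'.edgeSet.ncard ≤ M →
      k ^ 2 / 2 ≤ ((Bst Γ' X u v).card : ℝ) → (∀ e ∈ Bst Γ' X u v, e ∉ Γ'.edgeSet) →
      ∃ e ∈ Bst Γ' X u v, e ∈ G.edgeSet)
    (hM : m2 + Fintype.card V * 30 + (Fintype.card V + 1) ≤ M) (K : ℕ)
    (h3 : (univ.filter (fun v => (V0.filter (G.Adj v)).card < 30)).card * 30 ≤ K)
    (hV : 2 * k + 2 + V0.card + K ≤ Fintype.card V) :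
    ∃ Vs : Finset V, Vs.card ≤ V0.card + K ∧
    (∀ X, Vs ⊆ X → ∀ u ∈ X, ∀ v ∈ X, u ∉ Vs → v ∉ Vs → u ≠ v → HamP G X u v) ∧
    ∃ a b, a ∉ Vs ∧ b ∉ Vs ∧ G.Adj a b := by
  obtain ⟨Vs, Γ1, hV0, hVs, hΓ1, hΓ1c, hexp⟩ := local_exp (G := G) V0 _ s (fun v hv => mem_filter.2 ⟨mem_univ v, hv⟩) hdeg
    (fun v w hv hw hvw => ⟨hE2.adj hv hw hvw, by
      rw [disjoint_left]; intro z hz hz'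
      exact hE2.common hv hw hvw (mem_Nb.1 hz) (mem_Nb.1 hz')⟩)
    hE2.h2b h4
  obtain ⟨Γ2, hΓ2, hΓ2c, hqa, hqb⟩ := h5
  have hVs' : Vs.card ≤ V0.card + K := hVs.trans (Nat.add_le_add_left h3 _)
  obtain ⟨Γ, hΓ⟩ : ∃ Γ, Γ = Γ1 ⊔ Γ2 := ⟨_, rfl⟩
  have l1 : Γ1 ≤ Γ := hΓ ▸ le_sup_left
  have l2 : Γ2 ≤ Γ := hΓ ▸ le_sup_right
  refine ⟨Vs, hVs', assemble (Γ := Γ) hk (hΓ ▸ sup_le hΓ1 hΓ2) ⟨?_, ?_⟩ M ?_ h6 ?_⟩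
  · intro S hS
    by_cases hs : (S.card : ℝ) ≤ s
    · refine (hexp S hs).trans (card_le_card ?_)
      intro z hz
      rw [mem_filter] at hz ⊢
      obtain ⟨a, b, y, hy, hyz⟩ := hz
      exact ⟨a, b, y, hy, l1 hyz⟩
    · refine (hqa S (not_le.1 hs) hS).trans (card_le_card ?_)
      intro z hz
      rw [mem_filter] at hz ⊢
      obtain ⟨a, b, y, hy, hyz⟩ := hz
      exact ⟨hV0 a, b, y, hy, l2 hyz⟩
  · intro A B hAB hA hB
    obtain ⟨a, ha, b, hb, hab⟩ := hqb A B hAB hA hB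
    exact ⟨a, ha, b, hb, l2 hab⟩
  · rw [hΓ, SimpleGraph.edgeSet_sup]
    have := Set.ncard_union_le Γ1.edgeSet Γ2.edgeSet
    omega
  · have h1 : (univ \ Vs).card + Vs.card = Fintype.card V := by
      rw [card_sdiff_add_card_eq_card (subset_univ _), card_univ]
    have h2 : ((univ \ Vs).card : ℝ) + Vs.card = Fintype.card V := by exact_mod_cast h1
    have h3 : (Vs.card : ℝ) ≤ V0.card + K := by exact_mod_cast hVs'
    linarith

end Sparse

set_option linter.unusedSectionVars false
section ProbA
open scoped Classical
open Finset

variable {n : ℕ} {p : ℝ}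

lemma gnp_exists_le (h0 : 0 ≤ p) (h1 : p ≤ 1) {ι : Type*} (s : Finset ι) (P : ι → SimpleGraph (Fin n) → Prop)
    (c : ℝ) (hc : ∀ i ∈ s, gnpProb n p (P i) ≤ c) :
    gnpProb n p (fun G => ∃ i ∈ s, P i G) ≤ s.card * c := by
  refine (gnp_exists h0 h1 s P).trans ((sum_le_sum hc).trans ?_)
  rw [sum_const, nsmul_eq_mul]

lemma gnp_false (P : SimpleGraph (Fin n) → Prop) (h : ∀ G, ¬ P G) : gnpProb n p P = 0 := by
  rw [gnp_eq]; simp [h]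

lemma prT_sub (T : Finset (Fin n)) : prT T ⊆ prs n := by
  intro e he
  induction e with
  | h a b =>
  rw [mem_prT] at he
  simp [prs, he.2.2]

lemma prT_card {V : Type*} (T : Finset V) : (prT T).card = T.card.choose 2 := by
  unfold prT
  rw [← Sym2.card_image_offDiag]; congr

lemma base_le (t : ℝ) (ht0 : 0 ≤ t) (h0 : 0 ≤ p) (h1 : p ≤ 1) (m : ℕ) :
    (1 - p + t * p) ^ m ≤ Real.exp (-(1 - t) * p * m) := by
  have h2 : 1 - p + t * p ≤ Real.exp (-(1 - t) * p) := by
    have := Real.add_one_le_exp (-(1 - t) * p); linarith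
  have h3 : 0 ≤ 1 - p + t * p := by nlinarith
  calc (1 - p + t * p) ^ m ≤ Real.exp (-(1 - t) * p) ^ m := pow_le_pow_left₀ h3 h2 m
    _ = _ := by rw [← Real.exp_nat_mul]; congr 1; ring

lemma low_deg (h0 : 0 ≤ p) (h1 : p ≤ 1) (J T W : Finset (Fin n)) (A : Finset (Sym2 (Fin n))) (hJ : J ⊆ T)
    (hA : A ⊆ prT T) (hW : Disjoint W T) (d : ℕ) (x : ℝ) (hx : 1 ≤ x) (hxW : p * W.card ≤ x) :
    gnpProb n p (fun G => (∀ e ∈ A, e ∈ G.edgeSet) ∧ ∑ j ∈ J, (W.filter (fun b => G.Adj j b)).card ≤ d) ≤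
      p ^ A.card * x ^ d * Real.exp (J.card - p * J.card * W.card) := by
  have hJW : Disjoint J W := (hW.mono_right hJ).symm
  have hx0 : 0 < x := by linarith
  have hd : Disjoint A (bip J W) := by
    rw [disjoint_left]
    intro e he he'
    simp only [bip, mem_image, mem_product, Prod.exists] at he'
    obtain ⟨a, b, ⟨_, hb⟩, rfl⟩ := he'
    exact disjoint_left.1 hW hb (mem_prT.1 (hA he)).2.1
  have h2 := gnp_lower h0 h1 A (bip J W) (hA.trans (prT_sub T)) (bip_sub hJW) hd d (1/x) (by positivity)
    (by rw [div_le_one hx0]; exact hx)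
  have h3 := base_le (p := p) (1/x) (by positivity) h0 h1 (bip J W).card
  have h4 : gnpProb n p (fun G => (∀ e ∈ A, e ∈ G.edgeSet) ∧ ∑ j ∈ J, (W.filter (fun b => G.Adj j b)).card ≤ d) ≤
      gnpProb n p (fun G => (∀ e ∈ A, e ∈ G.edgeSet) ∧ ein (bip J W) G ≤ d) :=
    gnp_mono h0 h1 (fun G hG => ⟨hG.1, (ein_bip_le G).trans hG.2⟩)
  refine h4.trans ?_
  have h5 : Real.exp (-(1 - 1/x) * p * (bip J W).card) ≤ Real.exp (J.card - p * J.card * W.card) := by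
    rw [Real.exp_le_exp, card_bip hJW]
    push_cast
    have : 1 / x * p * (J.card * W.card) ≤ J.card := by
      have : 1 / x * p * ((J.card:ℝ) * W.card) = J.card * ((p * W.card) / x) := by ring
      rw [this]
      have h6 : (p * W.card) / x ≤ 1 := (div_le_one hx0).2 hxW
      nlinarith [(Nat.cast_nonneg J.card : (0:ℝ) ≤ J.card)]
    linarith
  have h6 := h2.trans (mul_le_mul_of_nonneg_left (h3.trans h5) (pow_nonneg h0 _))
  have h7 : (1/x)^d * x ^ d = 1 := by rw [← mul_pow]; simp [hx0.ne']
  have h8 := mul_le_mul_of_nonneg_left h6 (pow_nonneg hx0.le d)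
  calc _ = x ^ d * ((1/x) ^ d * gnpProb n p (fun G => (∀ e ∈ A, e ∈ G.edgeSet) ∧ ein (bip J W) G ≤ d)) := by
        rw [← mul_assoc, mul_comm (x^d), h7, one_mul]
    _ ≤ _ := h8
    _ = _ := by ring

/-- minimum degree -/
lemma ev1 (h0 : 0 ≤ p) (h1 : p ≤ 1) (x : ℝ) (hx : x = n * p) (hx1 : 1 ≤ x) :
    gnpProb n p (fun G => ¬ ∀ v, 2 ≤ (Nb G v).card) ≤ n * (x * Real.exp (2 - x)) := by
  have h2 : gnpProb n p (fun G => ¬ ∀ v, 2 ≤ (Nb G v).card) ≤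
      gnpProb n p (fun G => ∃ v ∈ (univ : Finset (Fin n)), (Nb G v).card ≤ 1) := by
    apply gnp_mono h0 h1
    intro G hG
    push Not at hG
    obtain ⟨v, hv⟩ := hG
    exact ⟨v, mem_univ v, by omega⟩
  refine h2.trans ((gnp_exists_le h0 h1 _ _ (x * Real.exp (2 - x)) ?_).trans (by simp))
  intro v _
  have hc : ((univ \ {v} : Finset (Fin n)).card : ℝ) = n - 1 := by
    have := card_sdiff_add_card_eq_card (subset_univ ({v} : Finset (Fin n)))
    simp only [card_singleton, card_univ, Fintype.card_fin] at this
    have : (((univ \ {v} : Finset (Fin n)).card + 1 : ℕ) : ℝ) = n := by exact_mod_cast this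
    push_cast at this; linarith
  have h3 := low_deg h0 h1 {v} {v} (univ \ {v}) ∅ Subset.rfl (empty_subset _) sdiff_disjoint 1 x hx1
    (by rw [hc]; nlinarith)
  refine le_trans (gnp_mono h0 h1 ?_) (h3.trans ?_)
  · intro G hG
    refine ⟨by simp, ?_⟩
    rw [sum_singleton]
    refine le_trans (card_le_card ?_) hG
    intro w hw
    rw [mem_filter] at hw
    exact mem_Nb.2 hw.2
  · rw [hc, card_empty, pow_zero, one_mul, pow_one, card_singleton]
    refine mul_le_mul_of_nonneg_left (Real.exp_le_exp.2 ?_) (by positivity)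
    push_cast
    nlinarith

/-- few vertices with small degree into V0 -/
lemma ev3 (h0 : 0 ≤ p) (h1 : p ≤ 1) (x : ℝ) (hx : x = n * p) (hx1 : 1 ≤ x) (ε : ℝ) (hε : 0 < ε)
    (V0 : Finset (Fin n)) (hV0 : ε * n / 4 ≤ V0.card) :
    gnpProb n p (fun G => ¬ (((univ.filter (fun v => (V0.filter (fun b => G.Adj v b)).card < 30)).card : ℝ) < ε * n / 120)) ≤
      120 / ε * (x ^ 30 * Real.exp (2 - ε / 4 * x)) := by
  have hn : (0:ℝ) < n := by
    rcases Nat.eq_zero_or_pos n with h | h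
    · subst h; simp at hx; linarith
    · exact_mod_cast h
  have h2 := gnp_markov h0 h1 (univ : Finset (Fin n)) (fun v G => (V0.filter (fun b => G.Adj v b)).card < 30) (ε * n / 120)
  have h3 : ∀ v ∈ (univ : Finset (Fin n)), gnpProb n p (fun G => (V0.filter (fun b => G.Adj v b)).card < 30) ≤
      x ^ 30 * Real.exp (2 - ε / 4 * x) := by
    intro v _
    have hc : ε * n / 4 - 1 ≤ ((V0 \ {v} : Finset (Fin n)).card : ℝ) := by
      have := le_card_sdiff ({v} : Finset (Fin n)) V0
      rw [card_singleton] at this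
      have h4 : V0.card ≤ (V0 \ {v}).card + 1 := by omega
      have : (V0.card : ℝ) ≤ (V0 \ {v}).card + 1 := by exact_mod_cast h4
      linarith
    have hc2 : ((V0 \ {v} : Finset (Fin n)).card : ℝ) ≤ n := by
      have := card_le_univ (V0 \ {v} : Finset (Fin n))
      rw [Fintype.card_fin] at this; exact_mod_cast this
    have h4 := low_deg h0 h1 {v} {v} (V0 \ {v}) ∅ Subset.rfl (empty_subset _) sdiff_disjoint 30 x hx1
      (by nlinarith)
    refine le_trans (gnp_mono h0 h1 ?_) (h4.trans ?_)
    · intro G hG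
      refine ⟨by simp, ?_⟩
      rw [sum_singleton]
      refine le_trans (card_le_card ?_) hG.le
      exact filter_subset_filter _ sdiff_subset
    · rw [card_empty, pow_zero, one_mul, card_singleton]
      refine mul_le_mul_of_nonneg_left (Real.exp_le_exp.2 ?_) (by positivity)
      push_cast
      nlinarith
  have h5 := h2.trans (sum_le_sum h3)
  rw [sum_const, nsmul_eq_mul, card_univ, Fintype.card_fin] at h5
  have h7 : (120 / (ε * n)) * (ε * n / 120) = 1 := by field_simp
  have h8 := mul_le_mul_of_nonneg_left h5 (by positivity : 0 ≤ 120 / (ε * n))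
  rw [← mul_assoc, h7, one_mul] at h8
  refine (gnp_mono h0 h1 ?_).trans (h8.trans (le_of_eq ?_))
  · intro G hG
    exact (not_lt.1 hG).trans (le_of_eq (by congr))
  · field_simp

end ProbA

set_option linter.unusedSectionVars false
section ProbB
open scoped Classical
open Finset

variable {n : ℕ} {p : ℝ}

lemma ev2_num (h0 : 0 ≤ p) (h1 : p ≤ 1) (x : ℝ) (hx : x = n * p) (hx1 : 1 ≤ x) (hnx : n * Real.exp (-x) ≤ 1)
    (τ j a : ℕ) (hτ : τ ≤ 5) (hj1 : 1 ≤ j) (hj2 : j ≤ 2) (hjτ : j ≤ τ) (ha : τ + 1 ≤ a + j) :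
    (n:ℝ) ^ τ * (p ^ a * x ^ 60 * Real.exp (j - p * j * (n - τ))) ≤ Real.exp 12 * (x ^ 65 * Real.exp (-x)) := by
  have hpa : p ^ a ≤ p ^ (τ + 1 - j) := pow_le_pow_of_le_one h0 h1 (by omega)
  have he : Real.exp (j - p * j * (n - τ)) ≤ Real.exp 12 * Real.exp (-(j * x)) := by
    rw [← Real.exp_add, Real.exp_le_exp]
    have h2 : (j:ℝ) ≤ 2 := by exact_mod_cast hj2
    have h3 : (τ:ℝ) ≤ 5 := by exact_mod_cast hτ
    have h4 : p * τ ≤ 5 := by nlinarith [(Nat.cast_nonneg τ : (0:ℝ) ≤ τ)]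
    have h5 : (j:ℝ) * (p * τ) ≤ 2 * 5 := mul_le_mul h2 h4 (by positivity) (by norm_num)
    rw [hx]
    nlinarith
  have hx0 : 0 ≤ x := by linarith
  have hn0 : (0:ℝ) ≤ n := Nat.cast_nonneg n
  have hmain : (n:ℝ) ^ τ * p ^ (τ + 1 - j) * Real.exp (-(j * x)) ≤ x ^ 5 * Real.exp (-x) := by
    obtain rfl | rfl : j = 1 ∨ j = 2 := by omega
    · rw [Nat.add_sub_cancel, ← mul_pow, ← hx]
      have : x ^ τ ≤ x ^ 5 := pow_le_pow_right₀ hx1 hτ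
      simp only [Nat.cast_one, one_mul]
      gcongr
    · obtain ⟨σ, rfl⟩ : ∃ σ, τ = σ + 1 := ⟨τ - 1, by omega⟩
      have e1 : σ + 1 + 1 - 2 = σ := by omega
      rw [e1, pow_succ]
      have e2 : Real.exp (-(((2:ℕ):ℝ) * x)) = Real.exp (-x) * Real.exp (-x) := by
        rw [← Real.exp_add]; congr 1; push_cast; ring
      rw [e2]
      have : x ^ σ ≤ x ^ 5 := pow_le_pow_right₀ hx1 (by omega)
      calc (n:ℝ) ^ σ * n * p ^ σ * (Real.exp (-x) * Real.exp (-x))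
          = x ^ σ * Real.exp (-x) * (n * Real.exp (-x)) := by rw [hx, mul_pow]; ring
        _ ≤ x ^ σ * Real.exp (-x) * 1 := by gcongr
        _ ≤ _ := by rw [mul_one]; gcongr
  calc (n:ℝ) ^ τ * (p ^ a * x ^ 60 * Real.exp (j - p * j * (n - τ)))
      ≤ (n:ℝ) ^ τ * (p ^ (τ + 1 - j) * x ^ 60 * (Real.exp 12 * Real.exp (-(j * x)))) := by gcongr
    _ = (x ^ 60 * Real.exp 12) * ((n:ℝ) ^ τ * p ^ (τ + 1 - j) * Real.exp (-(j * x))) := by ring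
    _ ≤ (x ^ 60 * Real.exp 12) * (x ^ 5 * Real.exp (-x)) := by gcongr
    _ = _ := by ring

lemma ev2 (h0 : 0 ≤ p) (h1 : p ≤ 1) (x : ℝ) (hx : x = n * p) (hx1 : 1 ≤ x) (hnx : n * Real.exp (-x) ≤ 1) :
    gnpProb n p (fun G => ¬ E2p G) ≤ 6 * (32 * (1024 * (Real.exp 12 * (x ^ 65 * Real.exp (-x))))) := by
  have hn : (0:ℝ) < n := by
    rcases Nat.eq_zero_or_pos n with h | h
    · subst h; simp at hx; linarith
    · exact_mod_cast h
  set R := Real.exp 12 * (x ^ 65 * Real.exp (-x)) with hR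
  have hR0 : 0 ≤ R := by positivity
  have hterm : ∀ (T J : Finset (Fin n)) (A : Finset (Sym2 (Fin n))), T.card ≤ 5 → J ⊆ T → A ⊆ prT T →
      gnpProb n p (fun G => (J.Nonempty ∧ J.card ≤ 2 ∧ T.card + 1 ≤ A.card + J.card) ∧
        (∀ e ∈ A, e ∈ G.edgeSet) ∧ ∀ j ∈ J, (Nb G j).card < 30) ≤ R / n ^ T.card := by
    intro T J A hT hJ hA
    by_cases hcond : J.Nonempty ∧ J.card ≤ 2 ∧ T.card + 1 ≤ A.card + J.card
    swap
    · rw [gnp_false _ (fun G hG => hcond hG.1)]; positivity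
    have hc : ((univ \ T : Finset (Fin n)).card : ℝ) = n - T.card := by
      have := card_sdiff_add_card_eq_card (subset_univ T)
      simp only [card_univ, Fintype.card_fin] at this
      have : (((univ \ T : Finset (Fin n)).card : ℝ) + T.card) = n := by exact_mod_cast this
      linarith
    have h3 := low_deg h0 h1 J T (univ \ T) A hJ hA sdiff_disjoint 60 x hx1
      (by rw [hc]; nlinarith [(Nat.cast_nonneg T.card : (0:ℝ) ≤ T.card)])
    rw [le_div_iff₀ (by positivity), mul_comm]
    refine le_trans ?_ (ev2_num h0 h1 x hx hx1 hnx T.card J.card A.card hT hcond.1.card_pos hcond.2.1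
      (card_le_card hJ) hcond.2.2)
    gcongr
    rw [← hc]
    refine le_trans (gnp_mono h0 h1 ?_) h3
    rintro G ⟨_, h4, h5⟩
    refine ⟨h4, ?_⟩
    calc ∑ j ∈ J, ((univ \ T).filter (fun b => G.Adj j b)).card ≤ ∑ j ∈ J, 30 := by
          apply sum_le_sum; intro j hj
          refine le_trans (card_le_card ?_) (h5 j hj).le
          intro w hw; rw [mem_filter] at hw; exact mem_Nb.2 hw.2
      _ = J.card * 30 := by rw [sum_const, smul_eq_mul]
      _ ≤ 60 := by have := hcond.2.1; omega
  have hsub : gnpProb n p (fun G => ¬ E2p G) ≤ gnpProb n p (fun G => ∃ τ ∈ range 6, ∃ T ∈ powersetCard τ (univ : Finset (Fin n)),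
      ∃ J ∈ T.powerset, ∃ A ∈ (prT T).powerset, (J.Nonempty ∧ J.card ≤ 2 ∧ T.card + 1 ≤ A.card + J.card) ∧
        (∀ e ∈ A, e ∈ G.edgeSet) ∧ ∀ j ∈ J, (Nb G j).card < 30) := by
    apply gnp_mono h0 h1
    intro G hG
    unfold E2p at hG
    push Not at hG
    obtain ⟨T, J, A, a1, a2, a3, a4, a5, a6, a7⟩ := hG
    exact ⟨T.card, by rw [mem_range]; omega, T, by simp [mem_powersetCard], J, mem_powerset.2 a2, A, mem_powerset.2 a5,
      ⟨a3, a4, a6⟩, a7⟩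
  refine hsub.trans ((gnp_exists_le h0 h1 _ _ (32 * (1024 * R)) ?_).trans (by simp))
  intro τ hτ
  rw [mem_range] at hτ
  refine (gnp_exists_le h0 h1 _ _ (32 * (1024 * (R / n ^ τ))) ?_).trans ?_
  · intro T hT
    rw [mem_powersetCard] at hT
    refine (gnp_exists_le h0 h1 _ _ (1024 * (R / n ^ τ)) ?_).trans ?_
    · intro J hJ
      refine (gnp_exists_le h0 h1 _ _ (R / n ^ τ) ?_).trans ?_
      · intro A hA
        rw [← hT.2]
        exact hterm T J A (by omega) (mem_powerset.1 hJ) (mem_powerset.1 hA)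
      · apply mul_le_mul_of_nonneg_right _ (by positivity)
        rw [card_powerset, prT_card, hT.2]
        have h7 : τ.choose 2 ≤ 10 := by interval_cases τ <;> decide
        have : 2 ^ τ.choose 2 ≤ 2 ^ 10 := Nat.pow_le_pow_right (by norm_num) h7
        exact_mod_cast this
    · apply mul_le_mul_of_nonneg_right _ (by positivity)
      rw [card_powerset, hT.2]
      have : 2 ^ τ ≤ 2 ^ 5 := Nat.pow_le_pow_right (by norm_num) (by omega)
      exact_mod_cast this
  · rw [card_powersetCard, card_univ, Fintype.card_fin]
    have h7 : ((n.choose τ : ℕ) : ℝ) ≤ (n:ℝ) ^ τ := by exact_mod_cast Nat.choose_le_pow n τ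
    calc ((n.choose τ : ℕ) : ℝ) * (32 * (1024 * (R / n ^ τ))) ≤ (n:ℝ) ^ τ * (32 * (1024 * (R / n ^ τ))) := by gcongr
      _ = _ := by field_simp

lemma ev4 (h0 : 0 ≤ p) (h1 : p ≤ 1) (x : ℝ) (hx : x = n * p) (hx1 : 250 ≤ x) :
    gnpProb n p (fun G => ¬ ∀ T : Finset (Fin n), T.Nonempty → (T.card : ℝ) ≤ 5 * (n / x ^ 2) →
      ((prT T).filter (· ∈ G.edgeSet)).card < 3 * T.card) ≤ 250 / x := by
  have hn : (0:ℝ) < n := by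
    rcases Nat.eq_zero_or_pos n with h | h
    · subst h; simp at hx; linarith
    · exact_mod_cast h
  have hx0 : 0 < x := by linarith
  have hp : 0 < p := by
    by_contra hh
    have : p = 0 := le_antisymm (not_lt.1 hh) h0
    subst this; simp at hx; linarith
  set r := 125 / x with hr
  have hr0 : 0 ≤ r := by positivity
  have hr1 : r ≤ 1/2 := by rw [hr, div_le_div_iff₀ hx0 (by norm_num)]; linarith
  have hterm : ∀ i ∈ range n, gnpProb n p (fun G => ∃ T ∈ powersetCard (i+1) (univ : Finset (Fin n)),
      (((i+1 : ℕ):ℝ) ≤ 5 * (n / x ^ 2) ∧ 3 * (i+1) ≤ ein (prT T) G)) ≤ r ^ (i+1) := by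
    intro i _
    generalize hτ : i + 1 = τ
    have hτ1 : 1 ≤ τ := by omega
    by_cases hc : (τ:ℝ) ≤ 5 * (n / x ^ 2)
    swap
    · rw [gnp_false]
      · positivity
      · rintro G ⟨T, _, h, _⟩; exact hc h
    have hτ0 : (0:ℝ) < τ := by exact_mod_cast hτ1
    have hcx : τ * x ^ 2 ≤ 5 * n := by
      rw [← mul_div_assoc, le_div_iff₀ (by positivity)] at hc; exact hc
    have hpτ : p * τ ≤ 1 := by
      have : p * τ * x ≤ 1 * x := by
        have h2 : p * (τ * x ^ 2) ≤ p * (5 * n) := mul_le_mul_of_nonneg_left hcx h0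
        have h3 : p * (5 * n) = 5 * x := by rw [hx]; ring
        have h4 : (p * τ * x) * x ≤ 5 * x := by nlinarith
        have h5 : p * τ * x ≤ 5 := le_of_mul_le_mul_right h4 hx0
        linarith
      exact le_of_mul_le_mul_right this hx0
    refine (gnp_exists_le h0 h1 _ _ ((p * τ) ^ (3 * τ) * Real.exp (τ / 2)) ?_).trans ?_
    · intro T hT
      rw [mem_powersetCard] at hT
      have h2 := gnp_upper h0 h1 (prT T) (prT_sub T) (3 * τ) (1 / (p * τ)) (by rw [le_div_iff₀ (by positivity)]; linarith)
      have h3 := base_le (p := p) (1/(p * τ)) (by positivity) h0 h1 (prT T).card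
      have h4 : Real.exp (-(1 - 1 / (p * τ)) * p * (prT T).card) ≤ Real.exp (τ / 2) := by
        rw [Real.exp_le_exp, prT_card, hT.2, Nat.cast_choose_two]
        have e : -(1 - 1 / (p * τ)) * p * ((τ:ℝ) * (τ - 1) / 2) = (1 - p * τ) * (τ - 1) / 2 := by
          field_simp; ring
        rw [e]
        have : (1:ℝ) ≤ τ := by exact_mod_cast hτ1
        have h5 : (1 - p * τ) * ((τ:ℝ) - 1) ≤ 1 * (τ - 1) := by
          apply mul_le_mul_of_nonneg_right _ (by linarith)
          have : 0 ≤ p * τ := by positivity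
          linarith
        linarith
      have h5 := h2.trans (h3.trans h4)
      have h6 : (p * τ) ^ (3 * τ) * (1 / (p * τ)) ^ (3 * τ) = 1 := by
        rw [← mul_pow, mul_one_div_cancel (by positivity), one_pow]
      have h7 := mul_le_mul_of_nonneg_left h5 (by positivity : 0 ≤ (p * τ) ^ (3 * τ))
      rw [← mul_assoc, h6, one_mul] at h7
      refine (gnp_mono h0 h1 ?_).trans h7
      rintro G ⟨_, hG⟩; exact hG
    · rw [card_powersetCard, card_univ, Fintype.card_fin]
      have h2 : ((n.choose τ : ℕ) : ℝ) ≤ (n:ℝ) ^ τ / (τ.factorial : ℝ) := Nat.choose_le_pow_div τ n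
      have h3 : (τ:ℝ) ^ τ / (τ.factorial : ℝ) ≤ Real.exp τ := Real.pow_div_factorial_le_exp _ hτ0.le τ
      have h4 : (n:ℝ) ^ τ / (τ.factorial : ℝ) = (n / τ) ^ τ * ((τ:ℝ) ^ τ / (τ.factorial : ℝ)) := by
        rw [div_pow]; field_simp
      have e1 : Real.exp (τ : ℝ) = Real.exp 1 ^ τ := by rw [← Real.exp_nat_mul, mul_one]
      have e2 : Real.exp ((τ : ℝ)/2) = Real.exp (1/2) ^ τ := by rw [← Real.exp_nat_mul]; congr 1; ring
      have h5 : ((n.choose τ : ℕ) : ℝ) ≤ (n / τ) ^ τ * Real.exp 1 ^ τ := by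
        rw [h4] at h2
        rw [← e1]
        exact h2.trans (mul_le_mul_of_nonneg_left h3 (by positivity))
      have hexp : Real.exp 1 * Real.exp (1/2) ≤ 5 := by
        have a1 : Real.exp 1 < 2.7182818286 := Real.exp_one_lt_d9
        have a2 : Real.exp (1/2) * Real.exp (1/2) = Real.exp 1 := by rw [← Real.exp_add]; norm_num
        have a3 : Real.exp (1/2) ≤ 1.65 := by
          by_contra hh; push Not at hh; nlinarith
        have a4 : 0 < Real.exp (1/2) := Real.exp_pos _
        nlinarith
      have hbase : (n / τ) * Real.exp 1 * (p * τ) ^ 3 * Real.exp (1/2) ≤ r := by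
        have h6 : (n / τ) * (p * τ) ^ 3 ≤ 25 / x := by
          have e : ((n:ℝ) / τ) * (p * τ) ^ 3 = n * p ^ 3 * τ ^ 2 := by field_simp
          rw [e, le_div_iff₀ hx0]
          have h7 : (τ * x ^ 2) ^ 2 ≤ (5 * n) ^ 2 := pow_le_pow_left₀ (by positivity) hcx 2
          have hn2 : (0:ℝ) < (n:ℝ) ^ 2 := by positivity
          have h8 : (n * p ^ 3 * τ ^ 2 * x) * (n:ℝ) ^ 2 = (τ * x ^ 2) ^ 2 := by rw [hx]; ring
          have h9 : (n * p ^ 3 * τ ^ 2 * x) * (n:ℝ) ^ 2 ≤ 25 * (n:ℝ) ^ 2 := by rw [h8]; linarith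
          exact le_of_mul_le_mul_right h9 hn2
        calc (n / τ) * Real.exp 1 * (p * τ) ^ 3 * Real.exp (1/2)
            = ((n / τ) * (p * τ) ^ 3) * (Real.exp 1 * Real.exp (1/2)) := by ring
          _ ≤ (25 / x) * 5 := by gcongr
          _ = r := by rw [hr]; ring
      calc ((n.choose τ : ℕ) : ℝ) * ((p * τ) ^ (3 * τ) * Real.exp (τ / 2))
          ≤ ((n / τ) ^ τ * Real.exp 1 ^ τ) * ((p * τ) ^ (3 * τ) * Real.exp (τ / 2)) := by gcongr
        _ = ((n / τ) * Real.exp 1 * (p * τ) ^ 3 * Real.exp (1/2)) ^ τ := by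
            rw [e2, pow_mul, mul_pow, mul_pow, mul_pow]; ring
        _ ≤ r ^ τ := pow_le_pow_left₀ (by positivity) hbase τ
  have hsub : gnpProb n p (fun G => ¬ ∀ T : Finset (Fin n), T.Nonempty → (T.card : ℝ) ≤ 5 * (n / x ^ 2) →
      ((prT T).filter (· ∈ G.edgeSet)).card < 3 * T.card) ≤
      gnpProb n p (fun G => ∃ i ∈ range n, ∃ T ∈ powersetCard (i+1) (univ : Finset (Fin n)),
      (((i+1 : ℕ):ℝ) ≤ 5 * (n / x ^ 2) ∧ 3 * (i+1) ≤ ein (prT T) G)) := by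
    apply gnp_mono h0 h1
    intro G hG
    push Not at hG
    obtain ⟨T, hT1, hT2, hT3⟩ := hG
    have a1 := hT1.card_pos
    have a2 : T.card ≤ n := by simpa using card_le_univ T
    have a3 : T.card - 1 + 1 = T.card := by omega
    refine ⟨T.card - 1, by rw [mem_range]; omega, T, by rw [a3]; simp [mem_powersetCard], by rw [a3]; exact hT2, ?_⟩
    rw [a3]; exact hT3
  refine hsub.trans ((gnp_exists h0 h1 _ _).trans ((sum_le_sum hterm).trans ?_))
  calc ∑ i ∈ range n, r ^ (i+1) ≤ ∑ i ∈ range n, r * (1/2) ^ i := by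
        apply sum_le_sum; intro i _
        rw [pow_succ, mul_comm]; gcongr
    _ = r * ∑ i ∈ range n, (1/2 : ℝ) ^ i := by rw [mul_sum]
    _ ≤ r * 2 := by gcongr; exact sum_geometric_two_le n
    _ = 250 / x := by rw [hr]; ring

end ProbB

set_option linter.unusedSectionVars false
section ProbC
open scoped Classical
open Finset

variable {n : ℕ} {p : ℝ}

lemma no_edges (h0 : 0 ≤ p) (h1 : p ≤ 1) (A B : Finset (Fin n)) (hAB : Disjoint A B) :
    gnpProb n p (fun G => ∀ a ∈ A, ∀ b ∈ B, ¬ G.Adj a b) ≤ Real.exp (-p * (A.card * B.card)) := by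
  have h2 := gnp_lower h0 h1 ∅ (bip A B) (empty_subset _) (bip_sub hAB) (disjoint_empty_left _) 0 0 le_rfl zero_le_one
  have h3 := base_le (p := p) 0 le_rfl h0 h1 (bip A B).card
  rw [pow_zero, one_mul, card_empty, pow_zero, one_mul] at h2
  refine (gnp_mono h0 h1 ?_).trans ((h2.trans h3).trans (le_of_eq ?_))
  · intro G hG
    refine ⟨by simp, (ein_bip_le G).trans ?_⟩
    rw [Nat.le_zero, sum_eq_zero_iff]
    intro a ha
    rw [card_eq_zero, filter_eq_empty_iff]
    intro b hb; exact hG a ha b hb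
  · rw [card_bip hAB]; push_cast; ring_nf

lemma sum_pow_card (b : ℝ) : ∑ A ∈ (univ : Finset (Fin n)).powerset, b ^ A.card = (1 + b) ^ n := by
  have := Finset.sum_pow_mul_eq_add_pow b 1 (univ : Finset (Fin n))
  simp only [one_pow, mul_one, card_univ, Fintype.card_fin] at this
  rw [this, add_comm]

lemma one_add_pow_le (b : ℝ) (hb : 0 ≤ b) : (1 + b) ^ n ≤ Real.exp (n * b) := by
  rw [Real.exp_nat_mul]
  exact pow_le_pow_left₀ (by positivity) (by have := Real.add_one_le_exp b; linarith) n

/-- expansion of medium sets -/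
lemma ev5a (h0 : 0 ≤ p) (h1 : p ≤ 1) (V0 : Finset (Fin n)) (s k c : ℝ) (hc0 : 0 ≤ c)
    (hc : c ≤ p * (V0.card - 3 * k)) :
    gnpProb n p (fun G => ¬ ∀ S : Finset (Fin n), s < S.card → (S.card : ℝ) ≤ k →
        2 * S.card ≤ (V0.filter (fun z => z ∉ S ∧ ∃ y ∈ S, G.Adj y z)).card) ≤
      Real.exp (2 * n * Real.exp (-(c/6)) - c * s / 3) := by
  have hterm : ∀ A T : Finset (Fin n), gnpProb n p (fun G => (s < A.card ∧ (A.card : ℝ) ≤ k ∧ T.card ≤ 2 * A.card) ∧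
      ∀ a ∈ A, ∀ b ∈ V0 \ (T ∪ A), ¬ G.Adj a b) ≤
      Real.exp (-(c/3)) ^ A.card * (Real.exp (-(c/6)) ^ T.card * Real.exp (-(c * s / 3))) := by
    intro A T
    by_cases hcond : s < A.card ∧ (A.card : ℝ) ≤ k ∧ T.card ≤ 2 * A.card
    swap
    · rw [gnp_false _ (fun G hG => hcond hG.1)]; positivity
    obtain ⟨g1, g2, g3⟩ := hcond
    have h2 := no_edges h0 h1 A (V0 \ (T ∪ A)) (by
      rw [disjoint_left]; intro a ha hb; rw [mem_sdiff] at hb; exact hb.2 (mem_union_right _ ha))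
    refine (gnp_mono h0 h1 (fun G hG => hG.2)).trans (h2.trans ?_)
    rw [← Real.exp_nat_mul, ← Real.exp_nat_mul, ← Real.exp_add, ← Real.exp_add, Real.exp_le_exp]
    have g4 : (V0.card : ℝ) - 3 * k ≤ (V0 \ (T ∪ A)).card := by
      have a1 := le_card_sdiff (T ∪ A) V0
      have a2 := card_union_le T A
      have a3 : V0.card ≤ (V0 \ (T ∪ A)).card + 3 * A.card := by omega
      have a4 : (V0.card : ℝ) ≤ (V0 \ (T ∪ A)).card + 3 * A.card := by exact_mod_cast a3
      linarith
    have g5 : c ≤ p * (V0 \ (T ∪ A)).card := hc.trans (mul_le_mul_of_nonneg_left g4 h0)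
    have g6 : c * A.card ≤ p * (A.card * (V0 \ (T ∪ A)).card) := by
      have := mul_le_mul_of_nonneg_right g5 (Nat.cast_nonneg A.card : (0:ℝ) ≤ A.card)
      nlinarith
    have g7 : (T.card : ℝ) * c ≤ 2 * A.card * c := by
      apply mul_le_mul_of_nonneg_right _ hc0; exact_mod_cast g3
    have g8 : c * s ≤ c * A.card := mul_le_mul_of_nonneg_left g1.le hc0
    nlinarith
  have hsub : gnpProb n p (fun G => ¬ ∀ S : Finset (Fin n), s < S.card → (S.card : ℝ) ≤ k →
        2 * S.card ≤ (V0.filter (fun z => z ∉ S ∧ ∃ y ∈ S, G.Adj y z)).card) ≤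
      gnpProb n p (fun G => ∃ A ∈ (univ : Finset (Fin n)).powerset, ∃ T ∈ (univ : Finset (Fin n)).powerset,
        (s < A.card ∧ (A.card : ℝ) ≤ k ∧ T.card ≤ 2 * A.card) ∧
      ∀ a ∈ A, ∀ b ∈ V0 \ (T ∪ A), ¬ G.Adj a b) := by
    apply gnp_mono h0 h1
    intro G hG
    push Not at hG
    obtain ⟨S, g1, g2, g3⟩ := hG
    refine ⟨S, by simp, V0.filter (fun z => z ∉ S ∧ ∃ y ∈ S, G.Adj y z), by simp, ⟨g1, g2, g3.le⟩, ?_⟩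
    intro a ha b hb hab
    rw [mem_sdiff, mem_union, mem_filter] at hb
    apply hb.2
    by_cases hbS : b ∈ S
    · exact Or.inr hbS
    · exact Or.inl ⟨hb.1, hbS, a, ha, hab⟩
  refine hsub.trans ((gnp_exists h0 h1 _ _).trans ((sum_le_sum (fun A _ =>
    (gnp_exists h0 h1 _ _).trans (sum_le_sum (fun T _ => hterm A T)))).trans ?_))
  have e : ∑ A ∈ (univ : Finset (Fin n)).powerset, ∑ T ∈ (univ : Finset (Fin n)).powerset,
      Real.exp (-(c/3)) ^ A.card * (Real.exp (-(c/6)) ^ T.card * Real.exp (-(c * s / 3))) =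
      (1 + Real.exp (-(c/3))) ^ n * ((1 + Real.exp (-(c/6))) ^ n * Real.exp (-(c * s / 3))) := by
    simp_rw [← mul_sum, ← sum_mul, sum_pow_card]
  rw [e]
  have h2 := one_add_pow_le (n := n) (Real.exp (-(c/3))) (Real.exp_pos _).le
  have h3 := one_add_pow_le (n := n) (Real.exp (-(c/6))) (Real.exp_pos _).le
  have h4 : Real.exp (-(c/3)) ≤ Real.exp (-(c/6)) := by rw [Real.exp_le_exp]; linarith
  calc _ ≤ Real.exp (n * Real.exp (-(c/3))) * (Real.exp (n * Real.exp (-(c/6))) * Real.exp (-(c * s / 3))) := by gcongr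
    _ ≤ _ := by
      rw [← Real.exp_add, ← Real.exp_add, Real.exp_le_exp]
      nlinarith [(Nat.cast_nonneg n : (0:ℝ) ≤ n)]

/-- joinedness of big sets -/
lemma ev5b (h0 : 0 ≤ p) (h1 : p ≤ 1) (k : ℝ) (hk : 0 ≤ k) :
    gnpProb n p (fun G => ¬ ∀ A B : Finset (Fin n), Disjoint A B → k < A.card → k < B.card →
      ∃ a ∈ A, ∃ b ∈ B, G.Adj a b) ≤ Real.exp (2 * n - p * k ^ 2) := by
  have hterm : ∀ A B : Finset (Fin n), gnpProb n p (fun G => (Disjoint A B ∧ k < A.card ∧ k < B.card) ∧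
      ∀ a ∈ A, ∀ b ∈ B, ¬ G.Adj a b) ≤ Real.exp (- (p * k ^ 2)) := by
    intro A B
    by_cases hcond : Disjoint A B ∧ k < A.card ∧ k < B.card
    swap
    · rw [gnp_false _ (fun G hG => hcond hG.1)]; positivity
    obtain ⟨g1, g2, g3⟩ := hcond
    refine (gnp_mono h0 h1 (fun G hG => hG.2)).trans ((no_edges h0 h1 A B g1).trans ?_)
    rw [Real.exp_le_exp]
    have : k * k ≤ A.card * B.card := mul_le_mul g2.le g3.le hk (by positivity)
    nlinarith
  refine (gnp_mono h0 h1 (Q := fun G => ∃ A ∈ (univ : Finset (Fin n)).powerset, ∃ B ∈ (univ : Finset (Fin n)).powerset,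
    (Disjoint A B ∧ k < A.card ∧ k < B.card) ∧ ∀ a ∈ A, ∀ b ∈ B, ¬ G.Adj a b) ?_).trans ?_
  · intro G hG
    push Not at hG
    obtain ⟨A, B, g1, g2, g3, g4⟩ := hG
    exact ⟨A, by simp, B, by simp, ⟨g1, g2, g3⟩, g4⟩
  refine (gnp_exists_le h0 h1 _ _ _ (fun A _ => gnp_exists_le h0 h1 _ _ _ (fun B _ => hterm A B))).trans ?_
  rw [card_powerset, card_univ, Fintype.card_fin]
  have h2 : ((2 ^ n : ℕ) : ℝ) ≤ Real.exp n := by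
    have := one_add_pow_le (n := n) 1 zero_le_one
    push_cast; norm_num at this; exact this
  calc _ ≤ Real.exp n * (Real.exp n * Real.exp (-(p * k ^ 2))) := by gcongr
    _ = _ := by rw [← Real.exp_add, ← Real.exp_add]; congr 1; ring

/-- few edges -/
lemma ev5c (h0 : 0 ≤ p) (h1 : p ≤ 1) (m : ℕ) (hm : 2 * (p * n ^ 2) ≤ m + 1) :
    gnpProb n p (fun G => ¬ G.edgeSet.ncard ≤ m) ≤ Real.exp (-(p * n ^ 2)) := by
  have h2 := gnp_upper h0 h1 (prs n) Subset.rfl (m + 1) (Real.exp 1) (by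
    have := Real.add_one_le_exp (1:ℝ); linarith)
  have h3 := base_le (p := p) (Real.exp 1) (Real.exp_pos _).le h0 h1 (prs n).card
  have h4 : Real.exp (-(1 - Real.exp 1) * p * (prs n).card) ≤ Real.exp (p * n ^ 2) := by
    rw [Real.exp_le_exp]
    have a1 : Real.exp 1 < 2.7182818286 := Real.exp_one_lt_d9
    have a2 := card_prs_le n
    have a3 : p * (prs n).card ≤ p * ((n:ℝ)^2 / 2) := mul_le_mul_of_nonneg_left a2 h0
    have a4 : 0 ≤ p * (prs n).card := by positivity
    nlinarith
  have h5 := h2.trans (h3.trans h4)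
  have h6 : Real.exp 1 ^ (m + 1) = Real.exp (m + 1) := by rw [← Real.exp_nat_mul]; push_cast; ring_nf
  rw [h6] at h5
  have h7 := mul_le_mul_of_nonneg_left h5 (Real.exp_pos (-((m:ℝ) + 1))).le
  rw [← mul_assoc, ← Real.exp_add, neg_add_cancel, Real.exp_zero, one_mul, ← Real.exp_add] at h7
  refine (gnp_mono h0 h1 ?_).trans (h7.trans ?_)
  · intro G hG
    have : ein (prs n) G = G.edgeSet.ncard := ncard_edge G
    rw [this]; omega
  · rw [Real.exp_le_exp]; linarith

lemma ev5 (h0 : 0 ≤ p) (h1 : p ≤ 1) (δ : ℝ) (hδ0 : 0 ≤ δ) (hδ1 : δ ≤ 1) (V0 : Finset (Fin n)) (s k c : ℝ) (hk : 0 ≤ k) (hc0 : 0 ≤ c)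
    (hc : c ≤ δ * p * (V0.card - 3 * k)) (m : ℕ) (hm : 2 * (δ * p * n ^ 2) ≤ m + 1) :
    gnpProb n p (fun G => ¬ ∃ Γ ≤ G, Γ.edgeSet.ncard ≤ m ∧
      (∀ S : Finset (Fin n), s < S.card → (S.card : ℝ) ≤ k →
        2 * S.card ≤ (V0.filter (fun z => z ∉ S ∧ ∃ y ∈ S, Γ.Adj y z)).card) ∧
      ∀ A B : Finset (Fin n), Disjoint A B → k < A.card → k < B.card → ∃ a ∈ A, ∃ b ∈ B, Γ.Adj a b) ≤
    Real.exp (-(δ * p * n ^ 2)) + (Real.exp (2 * n * Real.exp (-(c/6)) - c * s / 3) + Real.exp (2 * n - δ * p * k ^ 2)) := by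
  have hq0 : 0 ≤ δ * p := mul_nonneg hδ0 h0
  have hq : δ * p ≤ p := by nlinarith
  have hq1 : δ * p ≤ 1 := hq.trans h1
  set P : SimpleGraph (Fin n) → Prop := fun Γ => Γ.edgeSet.ncard ≤ m ∧
      (∀ S : Finset (Fin n), s < S.card → (S.card : ℝ) ≤ k →
        2 * S.card ≤ (V0.filter (fun z => z ∉ S ∧ ∃ y ∈ S, Γ.Adj y z)).card) ∧
      ∀ A B : Finset (Fin n), Disjoint A B → k < A.card → k < B.card → ∃ a ∈ A, ∃ b ∈ B, Γ.Adj a b with hP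
  have h2 := gnp_sub h0 h1 (δ * p) hq0 hq P
  have h3 := gnp_compl (p := p) (fun G : SimpleGraph (Fin n) => ∃ Γ ≤ G, P Γ)
  have h4 := gnp_compl (p := δ * p) P
  have h5 : gnpProb n (δ * p) (fun G => ¬ P G) ≤ Real.exp (-(δ * p * n ^ 2)) + (Real.exp (2 * n * Real.exp (-(c/6)) - c * s / 3) + Real.exp (2 * n - δ * p * k ^ 2)) := by
    refine le_trans ?_ (add_le_add (ev5c hq0 hq1 m hm) (add_le_add (ev5a hq0 hq1 V0 s k c hc0 hc) (ev5b hq0 hq1 k hk)))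
    refine le_trans ?_ (add_le_add_right (gnp_or hq0 hq1 _ _) _)
    refine le_trans ?_ (gnp_or hq0 hq1 _ _)
    apply gnp_mono hq0 hq1
    intro G hG
    simp only [hP] at hG
    by_contra hh
    simp only [not_or, not_not] at hh
    exact hG ⟨hh.1, hh.2.1, hh.2.2⟩
  linarith

/-- boosters exist -/
lemma ev6 (h0 : 0 ≤ p) (h1 : p ≤ 1) (M : ℕ) (k lam : ℝ) (hl : 0 ≤ lam) :
    gnpProb n p (fun G => ¬ ∀ (Γ : SimpleGraph (Fin n)) (X : Finset (Fin n)) (u v : Fin n), Γ ≤ G → Γ.edgeSet.ncard ≤ M →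
      k ^ 2 / 2 ≤ ((Bst Γ X u v).card : ℝ) → (∀ e ∈ Bst Γ X u v, e ∉ Γ.edgeSet) →
      ∃ e ∈ Bst Γ X u v, e ∈ G.edgeSet) ≤
    Real.exp (3 * n + lam * M + Real.exp (-lam) * p * n ^ 2 / 2 - p * k ^ 2 / 2) := by
  have hB : ∀ (Γ : SimpleGraph (Fin n)) (X : Finset (Fin n)) (u v : Fin n), Bst Γ X u v ⊆ prs n := by
    intro Γ X u v e he
    simp only [Bst, mem_image, mem_filter, mem_univ, true_and, Prod.exists] at he
    obtain ⟨y, z, h, rfl⟩ := he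
    simp [prs, isB_ne h]
  set K := Real.exp (lam * M - p * k ^ 2 / 2) with hK
  have hterm : ∀ (Γ : SimpleGraph (Fin n)) (X : Finset (Fin n)) (u v : Fin n),
      gnpProb n p (fun G => (Γ.edgeSet.ncard ≤ M ∧ k ^ 2 / 2 ≤ ((Bst Γ X u v).card : ℝ) ∧
        (∀ e ∈ Bst Γ X u v, e ∉ Γ.edgeSet)) ∧ Γ ≤ G ∧ ∀ e ∈ Bst Γ X u v, e ∉ G.edgeSet) ≤
      (p * Real.exp (-lam)) ^ Γ.edgeSet.ncard * K := by
    intro Γ X u v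
    by_cases hcond : Γ.edgeSet.ncard ≤ M ∧ k ^ 2 / 2 ≤ ((Bst Γ X u v).card : ℝ) ∧ (∀ e ∈ Bst Γ X u v, e ∉ Γ.edgeSet)
    swap
    · rw [gnp_false _ (fun G hG => hcond hG.1)]; positivity
    obtain ⟨g1, g2, g3⟩ := hcond
    have h2 := gnp_lower h0 h1 ((prs n).filter (fun e => e ∈ Γ.edgeSet)) (Bst Γ X u v) (filter_subset _ _) (hB Γ X u v)
      (by rw [disjoint_left]; intro e he he'; exact g3 e he' (mem_filter.1 he).2) 0 0 le_rfl zero_le_one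
    have h3 := base_le (p := p) 0 le_rfl h0 h1 (Bst Γ X u v).card
    rw [pow_zero, one_mul, ncard_edge] at h2
    refine (gnp_mono h0 h1 ?_).trans (h2.trans ?_)
    · rintro G ⟨_, hG1, hG2⟩
      refine ⟨?_, ?_⟩
      · intro e he
        exact SimpleGraph.edgeSet_mono hG1 (mem_filter.1 he).2
      · unfold ein
        rw [Nat.le_zero, card_eq_zero, filter_eq_empty_iff]
        intro e he; exact hG2 e he
    · rw [mul_pow, mul_assoc]
      apply mul_le_mul_of_nonneg_left _ (pow_nonneg h0 _)
      refine h3.trans ?_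
      rw [hK, ← Real.exp_nat_mul, ← Real.exp_add, Real.exp_le_exp]
      have g4 : lam * (Γ.edgeSet.ncard : ℝ) ≤ lam * M := mul_le_mul_of_nonneg_left (by exact_mod_cast g1) hl
      have g5 : p * (k ^ 2 / 2) ≤ p * (Bst Γ X u v).card := mul_le_mul_of_nonneg_left g2 h0
      linarith
  refine (gnp_mono h0 h1 (Q := fun G => ∃ Γ ∈ (univ : Finset (SimpleGraph (Fin n))), ∃ X ∈ (univ : Finset (Fin n)).powerset,
    ∃ u ∈ (univ : Finset (Fin n)), ∃ v ∈ (univ : Finset (Fin n)), (Γ.edgeSet.ncard ≤ M ∧ k ^ 2 / 2 ≤ ((Bst Γ X u v).card : ℝ) ∧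
        (∀ e ∈ Bst Γ X u v, e ∉ Γ.edgeSet)) ∧ Γ ≤ G ∧ ∀ e ∈ Bst Γ X u v, e ∉ G.edgeSet) ?_).trans ?_
  · intro G hG
    push Not at hG
    obtain ⟨Γ, X, u, v, g1, g2, g3, g4, g5⟩ := hG
    exact ⟨Γ, mem_univ _, X, by simp, u, mem_univ _, v, mem_univ _, ⟨g2, g3, g4⟩, g1, g5⟩
  have h2 : ((2 ^ n : ℕ) : ℝ) ≤ Real.exp n := by
    have := one_add_pow_le (n := n) 1 zero_le_one
    push_cast; norm_num at this; exact this
  have h3 : (n : ℝ) ≤ Real.exp n := by have := Real.add_one_le_exp (n:ℝ); linarith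
  refine (gnp_exists h0 h1 _ _).trans ((sum_le_sum (fun Γ _ => gnp_exists_le h0 h1 _ _ _ (fun X _ =>
    gnp_exists_le h0 h1 _ _ _ (fun u _ => gnp_exists_le h0 h1 _ _ _ (fun v _ => hterm Γ X u v))))).trans ?_)
  rw [card_powerset, card_univ, Fintype.card_fin, ← mul_sum, ← mul_sum, ← mul_sum, ← sum_mul, sum_pow_edges]
  have h4 : (p * Real.exp (-lam) + 1) ^ (prs n).card ≤ Real.exp (Real.exp (-lam) * p * n ^ 2 / 2) := by
    have a1 : p * Real.exp (-lam) + 1 ≤ Real.exp (p * Real.exp (-lam)) := Real.add_one_le_exp _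
    refine (pow_le_pow_left₀ (by positivity) a1 _).trans ?_
    rw [← Real.exp_nat_mul, Real.exp_le_exp]
    have a2 := mul_le_mul_of_nonneg_right (card_prs_le n) (by positivity : 0 ≤ p * Real.exp (-lam))
    linarith
  calc _ ≤ Real.exp n * (Real.exp n * (Real.exp n * (Real.exp (Real.exp (-lam) * p * n ^ 2 / 2) * K))) := by gcongr
    _ = _ := by
      rw [hK, ← Real.exp_add, ← Real.exp_add, ← Real.exp_add, ← Real.exp_add]; congr 1; ring

end ProbC

set_option linter.unusedSectionVars false
section Fin1
open scoped Classical
open Finset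

def HPr (n : ℕ) (ε : ℝ) (G : SimpleGraph (Fin n)) : Prop :=
  ∃ Vs : Finset (Fin n), (Vs.card : ℝ) ≤ ε * n ∧
    (∀ X, Vs ⊆ X → ∀ u ∈ X, ∀ v ∈ X, u ∉ Vs → v ∉ Vs → u ≠ v → HamP G X u v) ∧
    ∃ a b, a ∉ Vs ∧ b ∉ Vs ∧ G.Adj a b

lemma HPr.mono {n : ℕ} {ε : ℝ} {G H : SimpleGraph (Fin n)} (hle : H ≤ G) (h : HPr n ε H) : HPr n ε G := by
  obtain ⟨Vs, h1, h2, a, b, ha, hb, hab⟩ := h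
  exact ⟨Vs, h1, fun X hX u hu v hv hu' hv' huv => (h2 X hX u hu v hv hu' hv' huv).mono hle, a, b, ha, hb, hle hab⟩

noncomputable def errB (ε δ x n : ℝ) : ℝ :=
  n * (x * Real.exp (2 - x)) + (6 * (32 * (1024 * (Real.exp 12 * (x ^ 65 * Real.exp (-x))))) +
  (120 / ε * (x ^ 30 * Real.exp (2 - ε / 4 * x)) + (250 / x +
  ((Real.exp (-(δ * x * n)) + (Real.exp (2 * n * Real.exp (-(δ * ε * x / 8/6)) - (δ * ε * x / 8) * (n / x ^ 2) / 3)
    + Real.exp (2 * n - δ * x * n * (ε / 24) ^ 2))) +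
  Real.exp (3 * n - (ε / 24) ^ 2 * n * x / 8)))))

set_option maxHeartbeats 1000000 in
lemma fixed_n (n : ℕ) (p : ℝ) (h0 : 0 ≤ p) (h1 : p ≤ 1) (x : ℝ) (hx : x = n * p) (hx1 : 250 ≤ x)
    (hnx : n * Real.exp (-x) ≤ 1) (ε : ℝ) (hε : 0 < ε) (hε1 : ε ≤ 1 / 2) (δ lam : ℝ) (hδ0 : 0 < δ) (hδ1 : δ ≤ 1)
    (hl : 0 ≤ lam) (hle : Real.exp (-lam) ≤ (ε / 24) ^ 2 / 4) (hld : lam * (3 * δ) ≤ (ε / 24) ^ 2 / 4)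
    (hn1 : 24 ≤ ε * n) (hδx : 32 ≤ δ * x) :
    1 - errB ε δ x n ≤ gnpProb n p (HPr n ε) := by
  have hn : (1:ℝ) ≤ n := by nlinarith [(Nat.cast_nonneg n : (0:ℝ) ≤ n)]
  have hn0 : (0:ℝ) < n := by linarith
  have hpn : p * n ^ 2 = x * n := by rw [hx]; ring
  have hfl : ⌊ε * n / 2⌋₊ ≤ (univ : Finset (Fin n)).card := by
    rw [card_univ, Fintype.card_fin]
    apply Nat.floor_le_of_le
    nlinarith
  obtain ⟨V0, -, hV0⟩ := exists_subset_card_eq hfl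
  have hV0u : (V0.card : ℝ) ≤ ε * n / 2 := by rw [hV0]; exact Nat.floor_le (by positivity)
  have hV0l : ε * n / 4 ≤ V0.card := by
    rw [hV0]; have := Nat.lt_floor_add_one (ε * n / 2); linarith
  have hm0 : (0:ℝ) ≤ δ * x * n := by positivity
  set m := ⌊2 * (δ * x * n)⌋₊ with hmd
  set M := ⌊3 * (δ * x * n)⌋₊ with hMd
  have hm1 : (m : ℝ) ≤ 2 * (δ * x * n) := Nat.floor_le (by positivity)
  have hm2 := Nat.lt_floor_add_one (2 * (δ * x * n))
  have hM1 : (M : ℝ) ≤ 3 * (δ * x * n) := Nat.floor_le (by positivity)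
  have e1 := ev1 (n := n) h0 h1 x hx (by linarith)
  have e2 := ev2 (n := n) h0 h1 x hx (by linarith) hnx
  have e3 := ev3 (n := n) h0 h1 x hx (by linarith) ε hε V0 hV0l
  have e4 := ev4 (n := n) h0 h1 x hx hx1
  have e5 := ev5 (n := n) h0 h1 δ hδ0.le hδ1 V0 (n / x ^ 2) (ε / 24 * n) (δ * ε * x / 8) (by positivity) (by positivity)
    (by
      have : δ * ε * x / 8 = δ * p * (ε * n / 4 - 3 * (ε / 24 * n)) := by rw [hx]; ring
      rw [this]
      gcongr) m (by
      have : 2 * (δ * p * n ^ 2) = 2 * (δ * x * n) := by rw [hx]; ring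
      rw [this]; exact hm2.le)
  have e6 := ev6 (n := n) h0 h1 M (ε / 24 * n) lam hl
  have e5' : Real.exp (-(δ * p * n ^ 2)) + (Real.exp (2 * n * Real.exp (-(δ * ε * x / 8/6)) - (δ * ε * x / 8) * (n / x ^ 2) / 3)
    + Real.exp (2 * n - δ * p * (ε / 24 * n) ^ 2)) = (Real.exp (-(δ * x * n)) + (Real.exp (2 * n * Real.exp (-(δ * ε * x / 8/6)) - (δ * ε * x / 8) * (n / x ^ 2) / 3)
    + Real.exp (2 * n - δ * x * n * (ε / 24) ^ 2))) := by
    have b1 : δ * p * n ^ 2 = δ * x * n := by rw [hx]; ring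
    have b2 : δ * p * (ε / 24 * n) ^ 2 = δ * x * n * (ε / 24) ^ 2 := by rw [hx]; ring
    rw [b1, b2]
  have e6' : Real.exp (3 * n + lam * M + Real.exp (-lam) * p * n ^ 2 / 2 - p * (ε / 24 * n) ^ 2 / 2) ≤
      Real.exp (3 * n - (ε / 24) ^ 2 * n * x / 8) := by
    apply Real.exp_le_exp.2
    have a1 : lam * M ≤ (ε / 24) ^ 2 / 4 * (x * n) := by
      calc lam * M ≤ lam * (3 * (δ * x * n)) := by gcongr
        _ = lam * (3 * δ) * (x * n) := by ring
        _ ≤ _ := by gcongr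
    have a2 : Real.exp (-lam) * p * n ^ 2 / 2 ≤ (ε / 24) ^ 2 / 4 * (x * n) / 2 := by
      rw [mul_assoc (Real.exp _), hpn]; gcongr
    have a3 : p * (ε / 24 * n) ^ 2 / 2 = (ε / 24) ^ 2 * (x * n) / 2 := by rw [hx]; ring
    rw [a3]; nlinarith
  have hc := gnp_compl (n := n) (p := p) (HPr n ε)
  have hkey : gnpProb n p (fun G => ¬ HPr n ε G) ≤ errB ε δ x n := by
    unfold errB
    rw [← e5']
    refine le_trans (gnp_mono h0 h1 ?_) ((gnp_or h0 h1 _ _).trans (add_le_add e1 ((gnp_or h0 h1 _ _).trans (add_le_add e2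
      ((gnp_or h0 h1 _ _).trans (add_le_add e3 ((gnp_or h0 h1 _ _).trans (add_le_add e4
      ((gnp_or h0 h1 _ _).trans (add_le_add e5 (e6.trans e6'))))))))))) 
    intro G hG
    by_contra hcon
    simp only [not_or, not_not] at hcon
    obtain ⟨c1, c2, c3, c4, c5, c6⟩ := hcon
    apply hG
    have hKf : ((⌊ε * n / 4⌋₊ : ℕ) : ℝ) ≤ ε * n / 4 := Nat.floor_le (by positivity)
    obtain ⟨Vs, hVs, r⟩ := determin (G := G) V0 (n / x ^ 2) (ε / 24 * n) m M (by linarith) c1 c2 c4 (by convert c5) (by convert c6) (by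
        rw [Fintype.card_fin, hMd]
        apply Nat.le_floor
        push_cast
        nlinarith) ⌊ε * n / 4⌋₊ (by
        apply Nat.le_floor
        push_cast
        linarith) (by
        rw [Fintype.card_fin]
        nlinarith)
    refine ⟨Vs, ?_, r⟩
    have : (Vs.card : ℝ) ≤ V0.card + (⌊ε * n / 4⌋₊ : ℕ) := by exact_mod_cast hVs
    linarith
  linarith

lemma from_HPr {n : ℕ} (hn : 3 ≤ n) {ε : ℝ} {G : SimpleGraph (Fin n)} (h : HPr n ε G) :
    ∃ Vstar : Finset (Fin n), (Vstar.card : ℝ) ≤ ε * n ∧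
          ∀ (u v : Fin n) (P : G.Walk u v), P.IsPath →
            (∀ x ∈ P.support, x ∉ Vstar) →
            (P.support.length : ℝ) ≤ 2 * n / 3 →
            ∃ (x : Fin n) (C : G.Walk x x), @SimpleGraph.Walk.IsHamiltonianCycle _ (instDecidableEqFin n) _ _ C ∧
              ∀ e ∈ P.edges, e ∈ C.edges := by
  obtain ⟨Vs, h1, h2, h3⟩ := h
  refine ⟨Vs, h1, fun u v P hP hs _ => ?_⟩
  obtain ⟨x, C, hC, h⟩ := walk_part (by simpa using hn) h2 h3 u v P hP hs
  refine ⟨x, C, ?_, h⟩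
  convert hC

end Fin1

section Fin2
open Filter Topology

lemma err_tend (ε δ : ℝ) (hε : 0 < ε) (hδ : 0 < δ) (x : ℕ → ℝ) (hx : Tendsto x atTop atTop)
    (hx2 : ∀ᶠ n : ℕ in atTop, x n ≤ 2 * Real.log n)
    (hw : Tendsto (fun n : ℕ => x n - Real.log n - Real.log (Real.log n)) atTop atTop) :
    Tendsto (fun n : ℕ => errB ε δ (x n) n) atTop (𝓝 0) := by
  have hN : Tendsto (fun n : ℕ => (n : ℝ)) atTop atTop := tendsto_natCast_atTop_atTop
  have hL : Tendsto (fun n : ℕ => Real.log n) atTop atTop := Real.tendsto_log_atTop.comp hN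
  have hexpN : Tendsto (fun n : ℕ => Real.exp (-(n:ℝ))) atTop (𝓝 0) := Real.tendsto_exp_neg_atTop_nhds_zero.comp hN
  have t1 : Tendsto (fun n : ℕ => n * (x n * Real.exp (2 - x n))) atTop (𝓝 0) := by
    have : Tendsto (fun n : ℕ => 2 * Real.exp 2 * Real.exp (-(x n - Real.log n - Real.log (Real.log n)))) atTop (𝓝 0) := by
      simpa using (Real.tendsto_exp_neg_atTop_nhds_zero.comp hw).const_mul (2 * Real.exp 2)
    refine squeeze_zero' ?_ ?_ this
    · filter_upwards [hx.eventually_ge_atTop 0] with n h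
      positivity
    · filter_upwards [hx2, hN.eventually_gt_atTop 0, hL.eventually_gt_atTop 0] with n h1 h2 h3
      have : -(x n - Real.log n - Real.log (Real.log n)) = -x n + Real.log n + Real.log (Real.log n) := by ring
      rw [this, Real.exp_add, Real.exp_add, Real.exp_log h2, Real.exp_log h3, sub_eq_add_neg, Real.exp_add]
      have h4 : (0:ℝ) ≤ n * (Real.exp 2 * Real.exp (-x n)) := by positivity
      nlinarith
  have t2 : Tendsto (fun n : ℕ => 6 * (32 * (1024 * (Real.exp 12 * ((x n) ^ 65 * Real.exp (-x n)))))) atTop (𝓝 0) := by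
    simpa using (((((Real.tendsto_pow_mul_exp_neg_atTop_nhds_zero 65).comp hx).const_mul (Real.exp 12)).const_mul
      1024).const_mul 32).const_mul 6
  have t3 : Tendsto (fun n : ℕ => 120 / ε * ((x n) ^ 30 * Real.exp (2 - ε / 4 * x n))) atTop (𝓝 0) := by
    have h := ((Real.tendsto_pow_mul_exp_neg_atTop_nhds_zero 30).comp
      (hx.const_mul_atTop (show 0 < ε / 4 by positivity))).const_mul (120 / ε * (Real.exp 2 / (ε / 4) ^ 30))
    rw [mul_zero] at h
    refine h.congr (fun n => ?_)
    simp only [Function.comp, sub_eq_add_neg, Real.exp_add, mul_pow]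
    field_simp
  have t4 : Tendsto (fun n : ℕ => 250 / x n) atTop (𝓝 0) := hx.const_div_atTop 250
  have t5 : Tendsto (fun n : ℕ => Real.exp (-(δ * x n * n))) atTop (𝓝 0) := by
    refine squeeze_zero' (Eventually.of_forall fun n => (Real.exp_pos _).le) ?_ hexpN
    filter_upwards [(hx.const_mul_atTop hδ).eventually_ge_atTop 1] with n h
    apply Real.exp_le_exp.2
    have : (0:ℝ) ≤ n := Nat.cast_nonneg n
    nlinarith
  have hnx : Tendsto (fun n : ℕ => (n:ℝ) / x n) atTop atTop := by
    have h1 : Tendsto (fun y : ℝ => y / Real.log y) atTop atTop := by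
      have h := (Real.tendsto_pow_log_div_mul_add_atTop 1 0 1 one_ne_zero)
      simp only [pow_one, one_mul, add_zero] at h
      have h2 : Tendsto (fun y : ℝ => Real.log y / y) atTop (𝓝[>] 0) := by
        rw [tendsto_nhdsWithin_iff]
        refine ⟨h, ?_⟩
        filter_upwards [eventually_gt_atTop 1] with y hy
        exact div_pos (Real.log_pos hy) (by linarith)
      refine h2.inv_tendsto_nhdsGT_zero.congr (fun y => ?_)
      simp
    have h2 := (h1.comp hN).const_mul_atTop (show (0:ℝ) < 1 / 2 by norm_num)
    refine tendsto_atTop_mono' _ ?_ h2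
    filter_upwards [hx2, hx.eventually_gt_atTop 0] with n h3 h4
    have : (0:ℝ) < Real.log n := by linarith
    simp only [Function.comp]
    calc 1 / 2 * ((n:ℝ) / Real.log n) = n / (2 * Real.log n) := by field_simp
      _ ≤ n / x n := by gcongr
  have t6 : Tendsto (fun n : ℕ => Real.exp (2 * n * Real.exp (-(δ * ε * x n / 8/6)) - (δ * ε * x n / 8) * (n / (x n) ^ 2) / 3)) atTop (𝓝 0) := by
    have h := Real.tendsto_exp_neg_atTop_nhds_zero.comp (hnx.const_mul_atTop (show 0 < δ * ε / 48 by positivity))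
    refine squeeze_zero' (Eventually.of_forall fun n => (Real.exp_pos _).le) ?_ h
    have h5 : Tendsto (fun n : ℕ => x n * Real.exp (-(δ * ε * x n / 8 / 6))) atTop (𝓝 0) := by
      have h := ((Real.tendsto_pow_mul_exp_neg_atTop_nhds_zero 1).comp
        (hx.const_mul_atTop (show 0 < δ * ε / 48 by positivity))).const_mul (1 / (δ * ε / 48))
      rw [mul_zero] at h
      refine h.congr (fun n => ?_)
      have : δ * ε * x n / 8 / 6 = δ * ε / 48 * x n := by ring
      simp only [Function.comp, pow_one, this]
      field_simp
    filter_upwards [h5.eventually_le_const (show 0 < δ * ε / 96 by positivity), hx.eventually_gt_atTop 0] with n h6 h7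
    apply Real.exp_le_exp.2
    have e1 : 2 * n * Real.exp (-(δ * ε * x n / 8/6)) = 2 * (n / x n) * (x n * Real.exp (-(δ * ε * x n / 8 / 6))) := by
      field_simp
    have e2 : (δ * ε * x n / 8) * (n / (x n) ^ 2) / 3 = δ * ε / 24 * (n / x n) := by
      field_simp; ring
    rw [e1, e2]
    have : (0:ℝ) ≤ n / x n := by positivity
    nlinarith
  have t7 : Tendsto (fun n : ℕ => Real.exp (2 * n - δ * x n * n * (ε / 24) ^ 2)) atTop (𝓝 0) := by
    refine squeeze_zero' (Eventually.of_forall fun n => (Real.exp_pos _).le) ?_ hexpN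
    filter_upwards [(hx.const_mul_atTop (show 0 < δ * (ε / 24) ^ 2 by positivity)).eventually_ge_atTop 3] with n h
    apply Real.exp_le_exp.2
    have : (0:ℝ) ≤ n := Nat.cast_nonneg n
    nlinarith
  have t8 : Tendsto (fun n : ℕ => Real.exp (3 * n - (ε / 24) ^ 2 * n * x n / 8)) atTop (𝓝 0) := by
    refine squeeze_zero' (Eventually.of_forall fun n => (Real.exp_pos _).le) ?_ hexpN
    filter_upwards [(hx.const_mul_atTop (show 0 < (ε / 24) ^ 2 by positivity)).eventually_ge_atTop 32] with n h
    apply Real.exp_le_exp.2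
    have : (0:ℝ) ≤ n := Nat.cast_nonneg n
    nlinarith
  have := t1.add (t2.add (t3.add (t4.add ((t5.add (t6.add t7)).add t8))))
  simpa [errB] using this

end Fin2

/-- **Lemma (extending paths to Hamilton cycles).**
Let `ε > 0` and `p(n) = (log n + log log n + ω(1))/n`. Then whp `G ~ G(n, p(n))`
admits a partition `V(G) = V* ∪ V'` with `|V*| ≤ εn` such that every path `P` all
of whose vertices lie in `V'` and which has at most `2n/3` vertices can be extended
to a Hamilton cycle of `G`. -/
theorem paths_extend_to_hamilton_cycles
    (ε : ℝ) (hε : 0 < ε)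
    (p : ℕ → ℝ) (hp01 : ∀ n, 0 ≤ p n ∧ p n ≤ 1)
    (hp : Filter.Tendsto
      (fun n : ℕ => n * p n - Real.log n - Real.log (Real.log n))
      Filter.atTop Filter.atTop) :
    Filter.Tendsto
      (fun n : ℕ => gnpProb n (p n) (fun G =>
        ∃ Vstar : Finset (Fin n), (Vstar.card : ℝ) ≤ ε * n ∧
          ∀ (u v : Fin n) (P : G.Walk u v), P.IsPath →
            (∀ x ∈ P.support, x ∉ Vstar) →
            (P.support.length : ℝ) ≤ 2 * n / 3 →
            ∃ (x : Fin n) (C : G.Walk x x), C.IsHamiltonianCycle ∧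
              ∀ e ∈ P.edges, e ∈ C.edges))
      Filter.atTop (nhds 1) := by
  have hN : Filter.Tendsto (fun n : ℕ => (n : ℝ)) Filter.atTop Filter.atTop := tendsto_natCast_atTop_atTop
  have hL : Filter.Tendsto (fun n : ℕ => Real.log n) Filter.atTop Filter.atTop := Real.tendsto_log_atTop.comp hN
  have hLL : Filter.Tendsto (fun n : ℕ => Real.log (Real.log n)) Filter.atTop Filter.atTop :=
    Real.tendsto_log_atTop.comp hL
  -- truncated probability
  obtain ⟨q, hq⟩ : ∃ q : ℕ → ℝ, ∀ n, q n = min (p n) (2 * Real.log n / n) := ⟨_, fun _ => rfl⟩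
  obtain ⟨x, hx⟩ : ∃ x : ℕ → ℝ, ∀ n, x n = n * q n := ⟨_, fun _ => rfl⟩
  have hxe : ∀ᶠ n : ℕ in Filter.atTop, x n = min (n * p n) (2 * Real.log n) := by
    filter_upwards [hN.eventually_gt_atTop 0] with n hn
    rw [hx, hq, mul_min_of_nonneg _ _ hn.le]
    congr 1
    field_simp
  have hx2 : ∀ᶠ n : ℕ in Filter.atTop, x n ≤ 2 * Real.log n := by
    filter_upwards [hxe] with n h
    rw [h]; exact min_le_right _ _
  have h2 : Filter.Tendsto (fun n : ℕ => 2 * Real.log n - Real.log n - Real.log (Real.log n)) Filter.atTop Filter.atTop := by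
    have h3 : Filter.Tendsto (fun y : ℝ => Real.log y) Filter.atTop Filter.atTop := Real.tendsto_log_atTop
    have h4 : ∀ᶠ n : ℕ in Filter.atTop, Real.log (Real.log n) ≤ 1 / 2 * Real.log n := by
      have h := (Real.isLittleO_log_id_atTop.bound (show (0:ℝ) < 1 / 2 by norm_num))
      filter_upwards [hL.eventually h, hL.eventually_gt_atTop 0] with n h5 h6
      simp only [id, Real.norm_eq_abs] at h5
      rw [abs_of_pos h6] at h5
      exact (le_abs_self _).trans h5
    refine Filter.tendsto_atTop_mono' _ ?_ (hL.const_mul_atTop (show (0:ℝ) < 1 / 2 by norm_num))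
    filter_upwards [h4] with n h5
    linarith
  have hw : Filter.Tendsto (fun n : ℕ => x n - Real.log n - Real.log (Real.log n)) Filter.atTop Filter.atTop := by
    rw [Filter.tendsto_atTop]
    intro b
    filter_upwards [hp.eventually_ge_atTop b, h2.eventually_ge_atTop b, hxe] with n h3 h4 h5
    rw [h5]
    rcases min_choice ((n:ℝ) * p n) (2 * Real.log n) with h | h <;> rw [h] <;> assumption
  have hxt : Filter.Tendsto x Filter.atTop Filter.atTop := by
    refine Filter.tendsto_atTop_mono' _ ?_ hw
    filter_upwards [hL.eventually_ge_atTop 0, hLL.eventually_ge_atTop 0] with n h3 h4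
    linarith
  -- constants
  obtain ⟨η, hη0, hη1, hηε⟩ : ∃ η : ℝ, 0 < η ∧ η ≤ 1 / 2 ∧ η ≤ ε :=
    ⟨min ε (1 / 2), by positivity, min_le_right _ _, min_le_left _ _⟩
  obtain ⟨lam, hl0, hle⟩ : ∃ lam : ℝ, 0 < lam ∧ Real.exp (-lam) ≤ (η / 24) ^ 2 / 4 := by
    have h3 : 0 < (η / 24) ^ 2 / 4 := by positivity
    obtain ⟨l, h4, h5⟩ := ((Real.tendsto_exp_neg_atTop_nhds_zero.eventually_le_const h3).and
      (Filter.eventually_gt_atTop 0)).exists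
    exact ⟨l, h5, h4⟩
  obtain ⟨δ, hδ0, hδ1, hld⟩ : ∃ δ : ℝ, 0 < δ ∧ δ ≤ 1 ∧ lam * (3 * δ) ≤ (η / 24) ^ 2 / 4 := by
    refine ⟨min 1 ((η / 24) ^ 2 / (12 * lam)), by positivity, min_le_left _ _, ?_⟩
    calc lam * (3 * min 1 ((η / 24) ^ 2 / (12 * lam))) ≤ lam * (3 * ((η / 24) ^ 2 / (12 * lam))) := by
          gcongr; exact min_le_right _ _
      _ = (η / 24) ^ 2 / 4 := by field_simp; norm_num
  have herr := err_tend η δ hη0 hδ0 x hxt hx2 hw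
  have hlow : Filter.Tendsto (fun n : ℕ => 1 - errB η δ (x n) n) Filter.atTop (nhds 1) := by
    simpa using herr.const_sub 1
  refine tendsto_of_tendsto_of_tendsto_of_le_of_le' hlow tendsto_const_nhds ?_
    (Filter.Eventually.of_forall fun n => gnp_le_one (hp01 n).1 (hp01 n).2 _)
  filter_upwards [hxt.eventually_ge_atTop 250, (hxt.const_mul_atTop hδ0).eventually_ge_atTop 32,
    (hN.const_mul_atTop hη0).eventually_ge_atTop 24, hw.eventually_ge_atTop 0, hL.eventually_ge_atTop 1,
    hN.eventually_ge_atTop 3] with n g1 g2 g3 g4 g5 g6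
  have hq0 : 0 ≤ q n := by
    rw [hq]; exact le_min (hp01 n).1 (by positivity)
  have hqp : q n ≤ p n := by rw [hq]; exact min_le_left _ _
  have hn3 : 3 ≤ n := by exact_mod_cast g6
  have hne : (n:ℝ) * Real.exp (-x n) ≤ 1 := by
    have h3 : (0:ℝ) < n := by linarith
    have h4 : 0 ≤ Real.log (Real.log n) := Real.log_nonneg g5
    calc (n:ℝ) * Real.exp (-x n) = Real.exp (Real.log n + -x n) := by rw [Real.exp_add, Real.exp_log h3]
      _ ≤ 1 := by rw [Real.exp_le_one_iff]; linarith
  have h3 := fixed_n n (q n) hq0 (hqp.trans (hp01 n).2) (x n) (hx n) g1 hne η hη0 hη1 δ lam hδ0 hδ1 hl0.le hle hld g3 g2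
  refine h3.trans ((gnp_sub (hp01 n).1 (hp01 n).2 (q n) hq0 hqp _).trans (gnp_mono (hp01 n).1 (hp01 n).2 ?_))
  rintro G ⟨H, hHG, hH⟩
  apply from_HPr hn3
  obtain ⟨Vs, k1, k2⟩ := hH.mono hHG
  exact ⟨Vs, k1.trans (by gcongr), k2⟩
end

section
/- Let G be a graph, let P = v_0, v_1, …, v_t be a longest path in G (i.e. no path of G has more edges), and let R be the set of all vertices v ∈ V(P) such that there exists a path P' in G with V(P') = V(P) whose endpoints are v_0 and v. Then |N_G(R)| ≤ 2|R| − 1, where N_G(R) = {u ∈ V(G) \ R : u has a neighbour in R}. -/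
/-- The external neighbourhood of a vertex set `R`: vertices outside `R` having a
neighbour in `R`. -/
def extNbhd {V : Type*} (G : SimpleGraph V) (R : Set V) : Set V :=
  {u | u ∉ R ∧ ∃ v ∈ R, G.Adj u v}

section
variable {V : Type*}

def PosaNx : List V → V → V → Prop
  | [], _, _ => False
  | a :: l, u, x => (a = u ∧ l.head? = some x) ∨ PosaNx l u x

lemma PosaNx_append (a : List V) (y : V) (b : List V) (u x : V) :
    PosaNx (a ++ y :: b) u x ↔ PosaNx (a ++ [y]) u x ∨ PosaNx (y :: b) u x := by
  induction a with
  | nil => simp [PosaNx]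
  | cons c a ih =>
    have : (a ++ y :: b).head? = (a ++ [y]).head? := by cases a <;> simp
    simp only [List.cons_append, PosaNx] at ih ⊢
    rw [this, ih]; tauto

lemma PosaNx_concat (a : List V) (y u x : V) :
    PosaNx (a ++ [y]) u x ↔ PosaNx a u x ∨ (a.getLast? = some u ∧ y = x) := by
  induction a with
  | nil => simp [PosaNx]
  | cons c a ih =>
    simp only [List.cons_append, PosaNx, ih]
    cases a <;> simp [PosaNx]; tauto

lemma PosaNx_reverse (b : List V) (u x : V) : PosaNx b.reverse u x ↔ PosaNx b x u := by
  induction b with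
  | nil => simp [PosaNx]
  | cons c a ih =>
    simp only [List.reverse_cons, PosaNx_concat, PosaNx, ih]
    simp; tauto

lemma PosaNx_mem {l : List V} {u x : V} (h : PosaNx l u x) : u ∈ l ∧ x ∈ l.tail := by
  induction l with
  | nil => simp [PosaNx] at h
  | cons c a ih =>
    rcases h with ⟨rfl, h⟩ | h
    · simp; exact List.mem_of_mem_head? h
    · have := ih h
      simp [this.1, List.mem_of_mem_tail this.2]

lemma PosaNx_left {l : List V} (hl : l.Nodup) {u u' x : V} (h : PosaNx l u x)
    (h' : PosaNx l u' x) : u = u' := by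
  induction l with
  | nil => simp [PosaNx] at h
  | cons c a ih =>
    have hn := hl.of_cons
    have key : ∀ v, a.head? = some x → PosaNx a v x → False := by
      intro v h1 h2
      have := (PosaNx_mem h2).2
      cases a with
      | nil => simp at h1
      | cons d a => simp at h1 this; subst h1; exact (List.nodup_cons.1 hn).1 this
    rcases h with ⟨rfl, h⟩ | h <;> rcases h' with ⟨rfl, h'⟩ | h'
    · rfl
    · exact (key _ h h').elim
    · exact (key _ h' h).elim
    · exact ih hn h h'

lemma PosaNx_right {l : List V} (hl : l.Nodup) {u x x' : V} (h : PosaNx l u x)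
    (h' : PosaNx l u x') : x = x' :=
  PosaNx_left (l := l.reverse) (List.nodup_reverse.2 hl) ((PosaNx_reverse _ _ _).2 h)
    ((PosaNx_reverse _ _ _).2 h')

lemma PosaNx_last {l : List V} (hl : l.Nodup) {w x : V} (hw : l.getLast? = some w) :
    ¬ PosaNx l w x := by
  intro h
  have := (PosaNx_mem ((PosaNx_reverse _ _ _).2 h)).2
  obtain ⟨a, rfl⟩ : ∃ a, l = a ++ [w] := by
    simpa using List.getLast?_eq_some_iff.1 hw
  simp at this
  simp [List.nodup_append] at hl
  exact hl.2 w this rfl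

def PosaRot (G : SimpleGraph V) (l l' : List V) : Prop :=
  ∃ a y c w, l = a ++ y :: c ∧ c.getLast? = some w ∧ G.Adj y w ∧ l' = a ++ y :: c.reverse

def PosaSp (G : SimpleGraph V) (v₀ : V) (S : Set V) (l : List V) : Prop :=
  l.head? = some v₀ ∧ l.Nodup ∧ l.IsChain G.Adj ∧ ∀ x, x ∈ l ↔ x ∈ S

def PosaE (l : List V) (u x : V) : Prop := PosaNx l u x ∨ PosaNx l x u

def PosaCl (G : SimpleGraph V) (l : List V) : Set V :=
  {w | ∃ l', Relation.ReflTransGen (PosaRot G) l l' ∧ l'.getLast? = some w}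

lemma PosaRot_sp {G : SimpleGraph V} {v₀ : V} {S : Set V} {l l' : List V}
    (h : PosaSp G v₀ S l) (hr : PosaRot G l l') : PosaSp G v₀ S l' := by
  obtain ⟨a, y, c, w, rfl, hw, hyw, rfl⟩ := hr
  obtain ⟨h1, h2, h3, h4⟩ := h
  refine ⟨?_, ?_, ?_, ?_⟩
  · cases a <;> simpa using h1
  · refine (List.Perm.nodup_iff ?_).1 h2
    exact List.Perm.append_left _ (List.Perm.cons _ (List.reverse_perm c).symm)
  · rw [List.isChain_append, List.isChain_cons] at h3 ⊢
    refine ⟨h3.1, ⟨?_, ?_⟩, by simpa using h3.2.2⟩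
    · simp [hw, hyw]
    · rw [List.isChain_reverse]
      exact h3.2.1.2.imp fun _ _ h => h.symm
  · simpa using h4

lemma PosaReach_sp {G : SimpleGraph V} {v₀ : V} {S : Set V} {l l' : List V}
    (h : PosaSp G v₀ S l) (hr : Relation.ReflTransGen (PosaRot G) l l') : PosaSp G v₀ S l' := by
  induction hr with
  | refl => exact h
  | tail _ h' ih => exact PosaRot_sp ih h'

lemma PosaInv {G : SimpleGraph V} {l : List V}
    {u : V} (hu : u ∉ PosaCl G l) (hn : ∀ x, PosaE l u x → x ∉ PosaCl G l)
    {l' : List V} (hr : Relation.ReflTransGen (PosaRot G) l l') :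
    ∀ x, PosaE l' u x ↔ PosaE l u x := by
  induction hr with
  | refl => simp
  | @tail m m' hm hr' ih =>
    intro x
    rw [← ih]
    have hm' := hm.tail hr'
    obtain ⟨a, y, c, w, rfl, hw, hyw, rfl⟩ := hr'
    have hwA : w ∈ PosaCl G l := ⟨_, hm, by simp [List.getLast?_cons, hw]⟩
    have huw : u ≠ w := fun h => hu (h ▸ hwA)
    cases c with
    | nil => simp at hw
    | cons z c =>
    have hzA : z ∈ PosaCl G l := ⟨_, hm', by simp [List.getLast?_cons]⟩
    have huz : u ≠ z := fun h => hu (h ▸ hzA)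
    have huy : u ≠ y := by
      rintro rfl
      refine hn z ((ih z).1 (Or.inl ?_)) hzA
      rw [PosaNx_append]; simp [PosaNx]
    have e : ∀ b p q, PosaNx (y :: b) p q ↔ (y = p ∧ b.head? = some q) ∨ PosaNx b p q :=
      fun _ _ _ => Iff.rfl
    have hh : (z :: c).reverse.head? = some w := by rw [List.head?_reverse, hw]
    simp only [PosaE, PosaNx_append _ _ (z :: c), PosaNx_append _ _ (z :: c).reverse, e _, hh,
      PosaNx_reverse]
    simp [huw.symm, huz.symm, huy.symm]
    tauto

lemma PosaKey {G : SimpleGraph V} {v₀ : V} {S : Set V} {l : List V}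
    (h : PosaSp G v₀ S l) {u w : V} (hu : u ∉ PosaCl G l) (huS : u ∈ S)
    (hw : w ∈ PosaCl G l) (ha : G.Adj u w) : ∃ x ∈ PosaCl G l, PosaE l u x := by
  by_contra! hc
  obtain ⟨m, hm, hmw⟩ := hw
  have hmS := PosaReach_sp h hm
  have hum : u ∈ m := (hmS.2.2.2 u).2 huS
  have inv := PosaInv hu (fun x hx hA => hc x hA hx) hm
  obtain ⟨a, c, rfl⟩ := List.append_of_mem hum
  cases c with
  | nil => simp at hmw; exact ha.ne hmw
  | cons z c =>
    refine hc z ⟨_, hm.tail ⟨a, u, z :: c, w, rfl, by simpa using hmw, ha, rfl⟩, by simp [List.getLast?_cons]⟩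
      ((inv z).1 (Or.inl ?_))
    rw [PosaNx_append]; simp [PosaNx]

lemma Posa_count [Finite V] (r : V → V → Prop) (hr : ∀ u u' x, r u x → r u' x → u = u')
    (T : Set V) : {u | ∃ x ∈ T, r u x}.ncard ≤ T.ncard := by
  choose! f hf hf' using fun (u : V) (h : ∃ x ∈ T, r u x) => h
  refine Set.ncard_le_ncard_of_injOn f (fun u hu => hf u hu) ?_ (Set.toFinite _)
  intro u hu v hv huv
  exact hr _ _ _ (hf' u hu) (huv ▸ hf' v hv)

lemma Posa_count2 [Finite V] {l : List V} (hl : l.Nodup) (T : Set V) :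
    {u | ∃ x ∈ T, PosaE l u x}.ncard ≤ 2 * T.ncard := by
  have h1 := Posa_count (fun u x => PosaNx l u x) (fun _ _ _ => PosaNx_left hl) T
  have h2 := Posa_count (fun u x => PosaNx l x u) (fun _ _ _ => PosaNx_right hl) T
  have h3 : {u | ∃ x ∈ T, PosaE l u x} = {u | ∃ x ∈ T, PosaNx l u x} ∪
      {u | ∃ x ∈ T, PosaNx l x u} := by
    ext u; simp only [PosaE, Set.mem_union, Set.mem_ofPred_eq]; grind
  rw [h3]
  have := Set.ncard_union_le {u | ∃ x ∈ T, PosaNx l u x} {u | ∃ x ∈ T, PosaNx l x u}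
  omega

lemma Posa_count3 [Finite V] {l : List V} (hl : l.Nodup) (T : Set V) {w : V}
    (hw : l.getLast? = some w) (hwT : w ∈ T) :
    {u | ∃ x ∈ T, PosaE l u x}.ncard + 1 ≤ 2 * T.ncard := by
  have h1 := Posa_count (fun u x => PosaNx l u x) (fun _ _ _ => PosaNx_left hl) T
  have h2 := Posa_count (fun u x => PosaNx l x u) (fun _ _ _ => PosaNx_right hl) (T \ {w})
  have h3 : {u | ∃ x ∈ T, PosaE l u x} = {u | ∃ x ∈ T, PosaNx l u x} ∪
      {u | ∃ x ∈ T \ {w}, PosaNx l x u} := by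
    ext u; simp only [PosaE, Set.mem_union, Set.mem_ofPred_eq]
    have := PosaNx_last hl hw (x := u)
    simp only [Set.mem_sdiff, Set.mem_singleton_iff]
    grind
  rw [h3]
  have := Set.ncard_union_le {u | ∃ x ∈ T, PosaNx l u x} {u | ∃ x ∈ T \ {w}, PosaNx l x u}
  have := Set.ncard_sdiff_singleton_add_one hwT (Set.toFinite T)
  omega

lemma PosaE_adj {G : SimpleGraph V} {l : List V} (hl : l.IsChain G.Adj) {u x : V}
    (h : PosaE l u x) : G.Adj u x := by
  have key : ∀ u x, PosaNx l u x → G.Adj u x := by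
    clear h
    induction l with
    | nil => simp [PosaNx]
    | cons c a ih =>
      rw [List.isChain_cons] at hl
      rintro u x (⟨rfl, h⟩ | h)
      · exact hl.1 _ h
      · exact ih hl.2 _ _ h
  rcases h with h | h
  · exact key _ _ h
  · exact (key _ _ h).symm

lemma Posa_main [Finite V] (G : SimpleGraph V) (v₀ : V) (S : Set V) (R : Set V)
    (hR : ∀ w, w ∈ R ↔ ∃ l, PosaSp G v₀ S l ∧ l.getLast? = some w)
    (hne : R.Nonempty) (hS : ∀ u, ∀ w ∈ R, G.Adj u w → u ∈ S) :
    {u | u ∉ R ∧ ∃ v ∈ R, G.Adj u v}.ncard + 1 ≤ 2 * R.ncard := by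
  have hClR : ∀ l, PosaSp G v₀ S l → PosaCl G l ⊆ R := by
    rintro l hl w ⟨l', hr, hw⟩
    exact (hR w).2 ⟨l', PosaReach_sp hl hr, hw⟩
  have self : ∀ l w, l.getLast? = some w → w ∈ PosaCl G l := fun l w h => ⟨l, .refl, h⟩
  let N : Set V → Set V := fun U => {u | u ∉ R ∧ ∃ v ∈ U, G.Adj u v}
  have keyl : ∀ l, PosaSp G v₀ S l → ∀ u ∈ N (PosaCl G l), ∃ x ∈ PosaCl G l, PosaE l u x := by
    rintro l hl u ⟨hu, w, hw, ha⟩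
    exact PosaKey hl (fun h => hu (hClR l hl h)) (hS u w (hClR l hl hw) ha) hw ha
  let F : Set (Set V) := {U | U ⊆ R ∧ (N U).ncard + 1 ≤ 2 * U.ncard}
  have hF : F.Nonempty := by
    obtain ⟨w, hw⟩ := hne
    obtain ⟨l, hl, hlw⟩ := (hR w).1 hw
    refine ⟨PosaCl G l, hClR l hl, ?_⟩
    have h1 := Posa_count3 hl.2.1 (PosaCl G l) hlw (self _ _ hlw)
    have h0 : N (PosaCl G l) ⊆ {u | ∃ x ∈ PosaCl G l, PosaE l u x} := keyl l hl
    have h2 := Set.ncard_le_ncard h0 (Set.toFinite _)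
    exact le_trans (Nat.succ_le_succ h2) h1
  obtain ⟨U, hU⟩ := (Set.toFinite F).exists_maximal hF
  obtain ⟨hUR, hUN⟩ := hU.prop
  by_cases hRU : R ⊆ U
  · have : U = R := hUR.antisymm hRU
    subst this
    exact hUN
  exfalso
  obtain ⟨w, hw, hwU⟩ := Set.not_subset.1 hRU
  obtain ⟨l, hl, hlw⟩ := (hR w).1 hw
  refine hwU (hU.le_of_ge (y := U ∪ PosaCl G l) ?_ Set.subset_union_left (Or.inr (self _ _ hlw)))
  refine ⟨Set.union_subset hUR (hClR l hl), ?_⟩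
  have h1 : N (U ∪ PosaCl G l) ⊆ N U ∪ {u | ∃ x ∈ PosaCl G l \ U, PosaE l u x} := by
    rintro u ⟨hu, v, hv, ha⟩
    rcases hv with hv | hv
    · exact Or.inl ⟨hu, v, hv, ha⟩
    · obtain ⟨x, hx, hE⟩ := keyl l hl u ⟨hu, v, hv, ha⟩
      by_cases hxU : x ∈ U
      · exact Or.inl ⟨hu, x, hxU, PosaE_adj hl.2.2.1 hE⟩
      · exact Or.inr ⟨x, ⟨hx, hxU⟩, hE⟩
  have h2 := Set.ncard_le_ncard h1 (Set.toFinite _)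
  have h3 := Set.ncard_union_le (N U) {u | ∃ x ∈ PosaCl G l \ U, PosaE l u x}
  have h4 := Posa_count2 hl.2.1 (PosaCl G l \ U)
  have h5 : (U ∪ PosaCl G l).ncard = U.ncard + (PosaCl G l \ U).ncard := by
    rw [← Set.union_sdiff_self, Set.ncard_union_eq Set.disjoint_sdiff_right (Set.toFinite _)
      (Set.toFinite _)]
  omega

lemma Posa_walk {G : SimpleGraph V} : ∀ (l : List V) (a b : V), l.head? = some a →
    l.getLast? = some b → l.IsChain G.Adj → ∃ p : G.Walk a b, p.support = l
  | [], _, _, h, _, _ => by simp at h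
  | [c], a, b, h, h', _ => by
    simp at h h'; subst h; subst h'
    exact ⟨.nil, rfl⟩
  | c :: d :: l, a, b, h, h', hc => by
    simp at h; subst h
    rw [List.isChain_cons_cons] at hc
    obtain ⟨p, hp⟩ := Posa_walk (d :: l) d b rfl (by simpa using h') hc.2
    exact ⟨.cons hc.1 p, by simp [hp]⟩

end

/-- **Pósa's lemma.** Let `P` be a longest path in `G`, with endpoints `v₀` and
`v_t`, and let `R` be the set of vertices `v ∈ V(P)` for which there is a path `P'`
with `V(P') = V(P)` and endpoints `v₀` and `v`. Then `|N_G(R)| ≤ 2|R| − 1`. -/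
theorem posa_lemma
    {V : Type*} [Fintype V] (G : SimpleGraph V)
    (v₀ vt : V) (P : G.Walk v₀ vt) (hP : P.IsPath)
    (hmax : ∀ (a b : V) (Q : G.Walk a b), Q.IsPath → Q.length ≤ P.length) :
    ((extNbhd G {v | ∃ P' : G.Walk v₀ v, P'.IsPath ∧
        {x | x ∈ P'.support} = {x | x ∈ P.support}}).ncard : ℤ)
      ≤ 2 * ({v | ∃ P' : G.Walk v₀ v, P'.IsPath ∧
        {x | x ∈ P'.support} = {x | x ∈ P.support}}.ncard : ℤ) - 1 := by
  have key := Posa_main G v₀ {x | x ∈ P.support} {v | ∃ P' : G.Walk v₀ v, P'.IsPath ∧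
        {x | x ∈ P'.support} = {x | x ∈ P.support}} ?_ ⟨vt, P, hP, rfl⟩ ?_
  · unfold extNbhd
    omega
  · intro w
    constructor
    · rintro ⟨Q, hQ, hs⟩
      refine ⟨Q.support, ⟨?_, hQ.support_nodup, Q.isChain_adj_support, fun x => ?_⟩, ?_⟩
      · rw [List.head?_eq_some_head Q.support_ne_nil, Q.head_support]
      · exact Set.ext_iff.1 hs x
      · rw [List.getLast?_eq_some_getLast Q.support_ne_nil, Q.getLast_support]
    · rintro ⟨l, ⟨h1, h2, h3, h4⟩, h5⟩
      obtain ⟨p, rfl⟩ := Posa_walk l _ _ h1 h5 h3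
      exact ⟨p, p.isPath_def.2 h2, Set.ext h4⟩
  · rintro u w ⟨Q, hQ, hs⟩ ha
    by_contra hu
    have huQ : u ∉ Q.support := fun h => hu (hs ▸ h)
    have hp : (Q.concat ha.symm).IsPath := hQ.concat huQ ha.symm
    have h1 := hmax _ _ _ hp
    have h2 : Q.support.Perm P.support :=
      (List.perm_ext_iff_of_nodup hQ.support_nodup hP.support_nodup).2 (Set.ext_iff.1 hs)
    have h3 := h2.length_eq
    simp at h1 h3
    omega
end

section
/- Let ε > 0 and let p : ℕ → [0,1] be a function satisfying n·p(n) − log n − log log n → ∞ and n·p(n) − log n − log log n = o(log log n) as n → ∞. Then with high probability the random graph G ~ G(n, p(n)) is such that every vertex set U ⊆ V(G) with |U| ≤ εn/100 spans at most ε|U|·(log n)/10 edges of G. -/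
open Finset in
open scoped Classical in
lemma aux_mgf (n : ℕ) (p l : ℝ) (U : Finset (Fin n)) :
    ∑ G : SimpleGraph (Fin n), (p ^ G.edgeSet.ncard * (1 - p) ^ (n.choose 2 - G.edgeSet.ncard)) *
      l ^ ({e ∈ G.edgeSet | ∀ v ∈ e, v ∈ U}).ncard = (1 + p * (l - 1)) ^ (#U).choose 2 := by
  set S : Finset (Sym2 (Fin n)) := (⊤ : SimpleGraph (Fin n)).edgeFinset with hS
  have hScard : #S = n.choose 2 := by
    rw [hS, SimpleGraph.card_edgeFinset_top_eq_card_choose_two, Fintype.card_fin]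
  have h1 : ∏ e ∈ S, (p * (if ∀ v ∈ e, v ∈ U then l else 1) + (1 - p))
      = (1 + p * (l - 1)) ^ (#U).choose 2 := by
    have : ∀ e ∈ S, (p * (if ∀ v ∈ e, v ∈ U then l else 1) + (1 - p))
        = if ∀ v ∈ e, v ∈ U then (1 + p * (l - 1)) else 1 := by
      intro e _
      split_ifs <;> ring
    rw [prod_congr rfl this, ← prod_filter, prod_const]
    congr 1
    rw [← Sym2.card_image_offDiag]
    congr 1
    ext e
    induction e using Sym2.ind with
    | _ x y =>
      simp [hS]
      constructor
      · rintro ⟨h, hx, hy⟩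
        exact ⟨x, y, ⟨hx, hy, h⟩, Or.inl ⟨rfl, rfl⟩⟩
      · rintro ⟨a, b, ⟨ha, hb, hab⟩, (⟨rfl, rfl⟩ | ⟨rfl, rfl⟩)⟩
        · exact ⟨hab, ha, hb⟩
        · exact ⟨Ne.symm hab, hb, ha⟩
  rw [← h1, prod_add]
  refine sum_bij' (fun G _ => G.edgeFinset) (fun t _ => SimpleGraph.fromEdgeSet (t : Set (Sym2 (Fin n))))
    ?_ ?_ ?_ ?_ ?_
  · intro G _
    rw [mem_powerset, hS]
    exact SimpleGraph.edgeFinset_subset_edgeFinset.2 le_top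
  · intros; simp
  · intro G _
    simp
  · intro t ht
    ext e
    have := mem_powerset.1 ht
    simp only [SimpleGraph.mem_edgeFinset, SimpleGraph.edgeSet_fromEdgeSet]
    constructor
    · intro h; exact h.1
    · intro h
      refine ⟨h, ?_⟩
      have h2 := this h
      rw [hS, SimpleGraph.mem_edgeFinset] at h2
      exact SimpleGraph.not_isDiag_of_mem_edgeSet _ h2
  · intro G _
    have hsub : G.edgeFinset ⊆ S := SimpleGraph.edgeFinset_subset_edgeFinset.2 le_top
    have hc : G.edgeSet.ncard = #G.edgeFinset := by
      rw [← SimpleGraph.coe_edgeFinset, Set.ncard_coe_finset]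
    have hc2 : ({e ∈ G.edgeSet | ∀ v ∈ e, v ∈ U}).ncard
        = #(G.edgeFinset.filter (fun e => ∀ v ∈ e, v ∈ U)) := by
      rw [← Set.ncard_coe_finset]
      congr 1
      ext e
      simp
    rw [hc, hc2, prod_const, card_sdiff_of_subset hsub, hScard, prod_mul_distrib, prod_const,
      ← prod_filter, prod_const]
    ring

open Finset in
open scoped Classical in
lemma aux_union (n : ℕ) (p : ℝ) (hp0 : 0 ≤ p) (hp1 : p ≤ 1) (t l : Finset (Fin n) → ℝ)
    (A : Finset (Finset (Fin n))) (hl : ∀ U ∈ A, 1 ≤ l U)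
    (P : SimpleGraph (Fin n) → Prop)
    (hP : ∀ G, ¬ P G → ∃ U ∈ A, t U ≤ (({e ∈ G.edgeSet | ∀ v ∈ e, v ∈ U}).ncard : ℝ)) :
    gnpProb n p P ≤ 1 ∧
    1 - ∑ U ∈ A, Real.exp (p * l U * (#U : ℝ) ^ 2) * (l U) ^ (- t U) ≤ gnpProb n p P := by
  have hw : ∀ G : SimpleGraph (Fin n),
      0 ≤ p ^ G.edgeSet.ncard * (1 - p) ^ (n.choose 2 - G.edgeSet.ncard) := fun G =>
    mul_nonneg (pow_nonneg hp0 _) (pow_nonneg (by linarith) _)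
  have h1 : ∑ G : SimpleGraph (Fin n),
      (p ^ G.edgeSet.ncard * (1 - p) ^ (n.choose 2 - G.edgeSet.ncard)) = 1 := by
    have := aux_mgf n p 1 ∅
    simpa using this
  have key : 1 - gnpProb n p P = ∑ G : SimpleGraph (Fin n),
      if P G then 0 else (p ^ G.edgeSet.ncard * (1 - p) ^ (n.choose 2 - G.edgeSet.ncard)) := by
    refine (congrArg (fun x => x - gnpProb n p P) h1.symm).trans ?_
    simp only [gnpProb]
    rw [← sum_sub_distrib]
    refine sum_congr rfl fun G _ => ?_
    split_ifs <;> ring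
  constructor
  · have : 0 ≤ 1 - gnpProb n p P := by
      rw [key]
      refine sum_nonneg fun G _ => ?_
      split_ifs
      · exact le_rfl
      · exact hw G
    linarith
  · suffices h : 1 - gnpProb n p P ≤
        ∑ U ∈ A, Real.exp (p * l U * (#U : ℝ) ^ 2) * (l U) ^ (- t U) by linarith
    rw [key]
    calc _ ≤ ∑ G : SimpleGraph (Fin n), ∑ U ∈ A,
          (p ^ G.edgeSet.ncard * (1 - p) ^ (n.choose 2 - G.edgeSet.ncard)) *
          l U ^ ({e ∈ G.edgeSet | ∀ v ∈ e, v ∈ U}).ncard * (l U) ^ (- t U) := by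
          refine sum_le_sum fun G _ => ?_
          have hnn : ∀ U ∈ A, 0 ≤ (p ^ G.edgeSet.ncard * (1 - p) ^ (n.choose 2 - G.edgeSet.ncard)) *
            l U ^ ({e ∈ G.edgeSet | ∀ v ∈ e, v ∈ U}).ncard * (l U) ^ (- t U) := fun U hU => by
              have := hl U hU
              have := hw G
              positivity
          split_ifs with hG
          · exact sum_nonneg hnn
          · obtain ⟨U, hU, ht⟩ := hP G hG
            refine le_trans ?_ (single_le_sum hnn hU)
            rw [mul_assoc]
            refine le_mul_of_one_le_right (hw G) ?_
            have hlU := hl U hU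
            rw [← Real.rpow_natCast, ← Real.rpow_add (by linarith)]
            exact Real.one_le_rpow hlU (by linarith)
      _ = ∑ U ∈ A, (1 + p * (l U - 1)) ^ (#U).choose 2 * (l U) ^ (- t U) := by
          rw [sum_comm]
          refine sum_congr rfl fun U _ => ?_
          rw [← sum_mul, aux_mgf]
      _ ≤ _ := by
          refine sum_le_sum fun U hU => ?_
          have hlU := hl U hU
          have hpos : 0 ≤ p * (l U - 1) := mul_nonneg hp0 (by linarith)
          refine mul_le_mul_of_nonneg_right ?_ (Real.rpow_nonneg (by linarith) _)
          calc (1 + p * (l U - 1)) ^ (#U).choose 2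
              ≤ (Real.exp (p * l U)) ^ (#U).choose 2 := by
                refine pow_le_pow_left₀ (by linarith) ?_ _
                have := Real.add_one_le_exp (p * l U)
                nlinarith
            _ ≤ (Real.exp (p * l U)) ^ ((#U) ^ 2) := by
                refine pow_le_pow_right₀ ?_ (Nat.choose_le_pow _ _)
                exact Real.one_le_exp (by nlinarith)
            _ = _ := by
                rw [← Real.exp_nat_mul]
                push_cast
                ring_nf

lemma aux_choose (n u : ℕ) (hu : 1 ≤ u) :
    (n.choose u : ℝ) ≤ (Real.exp 1 * n / u) ^ u := by
  have hu0 : (0 : ℝ) < u := by exact_mod_cast hu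
  have h1 : (n.choose u : ℝ) ≤ (n : ℝ) ^ u / (u.factorial : ℝ) := Nat.choose_le_pow_div u n
  have h2 : (u : ℝ) ^ u / (u.factorial : ℝ) ≤ Real.exp u := Real.pow_div_factorial_le_exp _ hu0.le u
  have h3 : Real.exp u = Real.exp 1 ^ u := by rw [← Real.exp_nat_mul, mul_one]
  refine h1.trans ?_
  rw [div_pow, mul_pow, ← h3, le_div_iff₀ (by positivity)]
  calc (n : ℝ) ^ u / (u.factorial : ℝ) * (u : ℝ) ^ u
      = (u : ℝ) ^ u / (u.factorial : ℝ) * (n : ℝ) ^ u := by ring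
    _ ≤ _ := by gcongr

/-- the per-size bound -/
lemma aux_term (ε : ℝ) (hε : 0 < ε) (n u : ℕ) (p : ℝ) (hu : 1 ≤ u)
    (hun : (u : ℝ) ≤ ε * n / 100) (hp : n * p ≤ 2 * Real.log n)
    (hL : 1 ≤ ε * Real.log n / 10) :
    (n.choose u : ℝ) * (Real.exp (p * (ε * n / (20 * u)) * (u : ℝ) ^ 2) *
      (ε * n / (20 * u)) ^ (-(ε * u * Real.log n / 10)))
    ≤ (20 * Real.exp 1 ^ 2 / ε * (Real.exp 1 / 5) ^ (ε * Real.log n / 10 - 1)) ^ u := by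
  have hu0 : (0 : ℝ) < u := by exact_mod_cast hu
  have hn0 : (0 : ℝ) < n := by
    by_contra h
    have : (n : ℝ) ≤ 0 := not_lt.1 h
    nlinarith
  set L := ε * Real.log n / 10 with hLdef
  set l := ε * n / (20 * u) with hl
  have hlpos : 0 < l := by positivity
  have he : 0 < Real.exp 1 := Real.exp_pos 1
  have hl5 : 5 ≤ l := by
    rw [hl, le_div_iff₀ (by positivity)]
    linarith
  have h1 : Real.exp (p * l * (u : ℝ) ^ 2) * l ^ (-(ε * u * Real.log n / 10))
      ≤ ((Real.exp 1 / l) ^ L) ^ u := by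
    have e1 : p * l * (u : ℝ) ^ 2 ≤ L * u := by
      have : p * l * (u : ℝ) ^ 2 = (n * p) * (ε * u / 20) := by
        rw [hl]; field_simp
      rw [this, hLdef]
      have := mul_le_mul_of_nonneg_right hp (show 0 ≤ ε * u / 20 by positivity)
      linarith
    have e2 : ((Real.exp 1 / l) ^ L) ^ u = Real.exp (L * u) * l ^ (-(ε * u * Real.log n / 10)) := by
      rw [← Real.rpow_natCast, ← Real.rpow_mul (by positivity), Real.div_rpow he.le hlpos.le,
        Real.rpow_neg hlpos.le, Real.exp_one_rpow, div_eq_mul_inv]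
      congr 3
      rw [hLdef]; ring
    rw [e2]
    gcongr
  have h2 : Real.exp 1 * n / u * (Real.exp 1 / l) ^ L
      ≤ 20 * Real.exp 1 ^ 2 / ε * (Real.exp 1 / 5) ^ (L - 1) := by
    have e3 : (Real.exp 1 / l) ^ L = (Real.exp 1 / l) ^ (L - 1) * (Real.exp 1 / l) := by
      rw [← Real.rpow_add_one (by positivity)]; ring_nf
    have e4 : Real.exp 1 * n / u * (Real.exp 1 / l) = 20 * Real.exp 1 ^ 2 / ε := by
      rw [hl]; field_simp
    rw [e3, mul_comm ((Real.exp 1 / l) ^ (L - 1)), ← mul_assoc, e4]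
    refine mul_le_mul_of_nonneg_left ?_ (by positivity)
    refine Real.rpow_le_rpow (by positivity) ?_ (by linarith)
    gcongr
  calc _ ≤ (Real.exp 1 * n / u) ^ u * ((Real.exp 1 / l) ^ L) ^ u :=
        mul_le_mul (aux_choose n u hu) h1 (by positivity) (by positivity)
    _ = (Real.exp 1 * n / u * (Real.exp 1 / l) ^ L) ^ u := by rw [mul_pow]
    _ ≤ _ := pow_le_pow_left₀ (by positivity) h2 u

open Finset in
open scoped Classical in
lemma aux_main (ε : ℝ) (hε : 0 < ε) (n : ℕ) (p : ℝ) (hp0 : 0 ≤ p) (hp1 : p ≤ 1)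
    (hp : n * p ≤ 2 * Real.log n) (hL : 1 ≤ ε * Real.log n / 10) (q : ℝ)
    (hq : q = 20 * Real.exp 1 ^ 2 / ε * (Real.exp 1 / 5) ^ (ε * Real.log n / 10 - 1))
    (hq2 : q ≤ 1 / 2) (P : SimpleGraph (Fin n) → Prop)
    (hP : ∀ G, P G ↔ ∀ U : Finset (Fin n), (U.card : ℝ) ≤ ε * n / 100 →
          (({e ∈ G.edgeSet | ∀ v ∈ e, v ∈ U}).ncard : ℝ)
            ≤ ε * U.card * Real.log n / 10) :
    gnpProb n p P ≤ 1 ∧ 1 - 2 * q ≤ gnpProb n p P := by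
  have hq0 : 0 ≤ q := by rw [hq]; positivity
  set A : Finset (Finset (Fin n)) :=
    (univ : Finset (Fin n)).powerset.filter (fun U => 1 ≤ #U ∧ (#U : ℝ) ≤ ε * n / 100) with hA
  have := aux_union n p hp0 hp1 (fun U => ε * #U * Real.log n / 10)
    (fun U => ε * n / (20 * #U)) A ?_ P ?_
  · refine ⟨this.1, le_trans ?_ this.2⟩
    suffices h : ∑ U ∈ A, Real.exp (p * (ε * n / (20 * #U)) * (#U : ℝ) ^ 2) *
        (ε * n / (20 * #U)) ^ (-(ε * #U * Real.log n / 10)) ≤ 2 * q by linarith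
    rw [hA, sum_filter]
    rw [sum_powerset_apply_card (fun u : ℕ => if 1 ≤ u ∧ (u : ℝ) ≤ ε * n / 100 then
      Real.exp (p * (ε * n / (20 * u)) * (u : ℝ) ^ 2) *
        (ε * n / (20 * u)) ^ (-(ε * u * Real.log n / 10)) else 0)]
    rw [card_univ, Fintype.card_fin]
    calc _ ≤ ∑ u ∈ range (n + 1), if 1 ≤ u then q ^ u else 0 := by
          refine sum_le_sum fun u _ => ?_
          rw [nsmul_eq_mul]
          by_cases h1 : 1 ≤ u
          · by_cases h2 : (u : ℝ) ≤ ε * n / 100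
            · rw [if_pos ⟨h1, h2⟩, if_pos h1, hq]
              exact aux_term ε hε n u p h1 h2 hp hL
            · rw [if_neg (fun h => h2 h.2), if_pos h1, mul_zero]
              positivity
          · rw [if_neg (fun h => h1 h.1), if_neg h1, mul_zero]
      _ = ∑ u ∈ Ico 1 (n + 1), q ^ u := by
          rw [← sum_filter]
          congr 1
          ext u
          simp
          omega
      _ ≤ q ^ 1 / (1 - q) := geom_sum_Ico_le_of_lt_one hq0 (by linarith)
      _ ≤ 2 * q := by
          rw [div_le_iff₀ (by linarith)]
          nlinarith
  · intro U hU
    have h := (mem_filter.1 hU).2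
    have hu0 : (0 : ℝ) < #U := by exact_mod_cast h.1
    have := h.2
    rw [le_div_iff₀ (by positivity)]
    linarith
  · intro G hG
    rw [hP] at hG
    push Not at hG
    obtain ⟨U, h1, h2⟩ := hG
    refine ⟨U, ?_, h2.le⟩
    rw [hA, mem_filter]
    refine ⟨by simp, ?_, h1⟩
    by_contra h0
    have : U = ∅ := by rw [← card_eq_zero]; omega
    subst this
    have hz : {e ∈ G.edgeSet | ∀ v ∈ e, v ∈ (∅ : Finset (Fin n))} = ∅ := by
      ext e
      induction e using Sym2.ind with
      | _ x y =>
        refine iff_of_false (fun h => ?_) (by simp)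
        have := h.2 x (by simp)
        simp at this
    rw [hz] at h2
    simp at h2

/-- **Lemma (small sets span few edges).**
Let `ε > 0` and let `p(n)` satisfy `n·p(n) − log n − log log n → ∞` and
`n·p(n) − log n − log log n = o(log log n)`. Then whp `G ~ G(n, p(n))` is such that
every vertex set `U` with `|U| ≤ εn/100` spans at most `ε|U|·(log n)/10` edges. -/
theorem small_sets_sparse
    (ε : ℝ) (hε : 0 < ε)
    (p : ℕ → ℝ) (hp01 : ∀ n, 0 ≤ p n ∧ p n ≤ 1)
    (hp : Filter.Tendsto
      (fun n : ℕ => n * p n - Real.log n - Real.log (Real.log n))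
      Filter.atTop Filter.atTop)
    (hp' : (fun n : ℕ => n * p n - Real.log n - Real.log (Real.log n))
      =o[Filter.atTop] (fun n : ℕ => Real.log (Real.log n))) :
    Filter.Tendsto
      (fun n : ℕ => gnpProb n (p n) (fun G =>
        ∀ U : Finset (Fin n), (U.card : ℝ) ≤ ε * n / 100 →
          (({e ∈ G.edgeSet | ∀ v ∈ e, v ∈ U}).ncard : ℝ)
            ≤ ε * U.card * Real.log n / 10))
      Filter.atTop (nhds 1) := by
  have hlog : Filter.Tendsto (fun n : ℕ => Real.log n) Filter.atTop Filter.atTop :=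
    Real.tendsto_log_atTop.comp tendsto_natCast_atTop_atTop
  have hL : Filter.Tendsto (fun n : ℕ => ε * Real.log n / 10) Filter.atTop Filter.atTop :=
    (hlog.const_mul_atTop hε).atTop_div_const (by norm_num)
  have hq : Filter.Tendsto (fun n : ℕ => 20 * Real.exp 1 ^ 2 / ε *
      (Real.exp 1 / 5) ^ (ε * Real.log n / 10 - 1)) Filter.atTop (nhds 0) := by
    have he := Real.exp_one_lt_d9
    have he0 := Real.exp_pos 1
    have h := (tendsto_rpow_atTop_of_base_lt_one (Real.exp 1 / 5) (by linarith) (by linarith)).comp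
      (Filter.tendsto_atTop_add_const_right _ (-1) hL)
    have h' := h.const_mul (20 * Real.exp 1 ^ 2 / ε)
    rw [mul_zero] at h'
    exact h'
  have hll : ∀ᶠ n : ℕ in Filter.atTop, ‖Real.log (Real.log n)‖ ≤ 1 / 2 * ‖Real.log n‖ :=
    (Real.isLittleO_log_id_atTop.comp_tendsto hlog).def (by norm_num)
  have hnp : ∀ᶠ n : ℕ in Filter.atTop, n * p n ≤ 2 * Real.log n := by
    filter_upwards [hll, hp'.def (c := 1) (by norm_num), hlog.eventually_ge_atTop 1]
      with n h1 h2 h3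
    rw [Real.norm_eq_abs, Real.norm_eq_abs] at h1 h2
    rw [abs_of_nonneg (by linarith : 0 ≤ Real.log n)] at h1
    have a1 := le_abs_self (n * p n - Real.log n - Real.log (Real.log n))
    have a2 := le_abs_self (Real.log (Real.log n))
    linarith
  have hall : ∀ᶠ n : ℕ in Filter.atTop, gnpProb n (p n) (fun G =>
        ∀ U : Finset (Fin n), (U.card : ℝ) ≤ ε * n / 100 →
          (({e ∈ G.edgeSet | ∀ v ∈ e, v ∈ U}).ncard : ℝ)
            ≤ ε * U.card * Real.log n / 10) ≤ 1 ∧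
      1 - 2 * (20 * Real.exp 1 ^ 2 / ε * (Real.exp 1 / 5) ^ (ε * Real.log n / 10 - 1)) ≤
        gnpProb n (p n) (fun G =>
        ∀ U : Finset (Fin n), (U.card : ℝ) ≤ ε * n / 100 →
          (({e ∈ G.edgeSet | ∀ v ∈ e, v ∈ U}).ncard : ℝ)
            ≤ ε * U.card * Real.log n / 10) := by
    filter_upwards [hnp, hL.eventually_ge_atTop 1,
      hq.eventually (ge_mem_nhds (show (0 : ℝ) < 1 / 2 by norm_num))] with n h1 h2 h3
    exact aux_main ε hε n (p n) (hp01 n).1 (hp01 n).2 h1 h2 _ rfl h3 _ (fun G => Iff.rfl)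
  refine tendsto_of_tendsto_of_tendsto_of_le_of_le' ?_ tendsto_const_nhds
    (hall.mono fun n h => h.2) (hall.mono fun n h => h.1)
  have h' := (hq.const_mul 2).const_sub 1
  rw [mul_zero, sub_zero] at h'
  exact h'
end
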